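/- Assume condition (D1) (A is increasing on [0,1]) and let F₀ and G₀ be cumulative distribution functions of probability measures on ℝ with finite first moments. Let F and G be the unique weak solutions in 𝓕 of the Cauchy problem with respective initial conditions F₀ and G₀. Let p ≥ 1. If W_p(F₀,G₀) < +∞, then the map t ↦ W_p(F_t,G_t) is nonincreasing on [0,∞). -/

import Mathlib

open MeasureTheory Set Filter Topology Function
open scoped ENNReal

noncomputable section

/-- `primitive f u = ∫₀^u f(v) dv`. -/
def primitive (f : ℝ → ℝ) : ℝ → ℝ := fun u => ∫ v in (0:ℝ)..u, f v

/-- The cumulative distribution function `H * μ` of a measure `μ` on `ℝ`. -/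
def cdfOf (μ : MeasureTheory.Measure ℝ) : ℝ → ℝ := fun x => (μ (Set.Iic x)).toReal

/-- Pseudo-inverse of a cdf: `F⁻¹(u) = inf {x | F x > u}`. -/
def pinv (F : ℝ → ℝ) (u : ℝ) : ℝ := sInf {x : ℝ | u < F x}

/-- Wasserstein distance of order `p` between two cdfs, as an element of `[0,∞]`:
`W_p(F,G) = (∫₀¹ |F⁻¹(u) - G⁻¹(u)|^p du)^(1/p)`. -/
def Wdist (p : ℝ) (F G : ℝ → ℝ) : ℝ≥0∞ :=
  (∫⁻ u in Set.Ioo (0:ℝ) 1, ENNReal.ofReal (|pinv F u - pinv G u| ^ p)) ^ (1/p)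

/-- `F` is a weak solution of `∂ₜ F = (1/2) ∂ₓₓ (A (F)) - ∂ₓ (B (F))` with
initial condition `F₀`. -/
def IsWeakSolution (A B : ℝ → ℝ) (F₀ : ℝ → ℝ) (F : ℝ → ℝ → ℝ) : Prop :=
  ∀ g : ℝ → ℝ → ℝ, ContDiff ℝ (⊤ : ℕ∞) (Function.uncurry g) →
    HasCompactSupport (Function.uncurry g) →
    ∀ t : ℝ, 0 ≤ t →
      ((∫ x : ℝ, g t x * F t x) - ∫ x : ℝ, g 0 x * F₀ x) =
        ∫ x : ℝ, ∫ s in (0:ℝ)..t,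
          ((1/2) * A (F s x) * deriv (deriv (fun y => g s y)) x
            + B (F s x) * deriv (fun y => g s y) x
            + F s x * deriv (fun r => g r x) s)

/-- Membership in the class `𝓕`. -/
def MemF (F : ℝ → ℝ → ℝ) : Prop :=
  ∃ P : ℝ → ProbabilityMeasure ℝ,
    ContinuousOn P (Set.Ici 0) ∧
    (∀ t : ℝ, 0 ≤ t → Integrable (fun x => |x|) (P t : Measure ℝ)) ∧
    (∀ T : ℝ, 0 < T → IntegrableOn (fun t => ∫ x, |x| ∂(P t : Measure ℝ)) (Set.Icc 0 T)) ∧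
    (∀ t : ℝ, 0 ≤ t → ∀ x : ℝ, F t x = ((P t : Measure ℝ) (Set.Iic x)).toReal)

/-! Mollify two solutions `F` and `G` in space and follow `∫ θ(F - G(· + r)) dx` for a smooth convex
`θ` close to the positive part. Its dissipation involves products `θ'' ∂ₓF ∂ₓG(· + r)`, which
telescope in `r`, so averaging over the shift `r` bounds them uniformly in the mollification scale.
With `θ(u) = u²` and `G = F` this is an energy estimate: as `A` is strictly increasing, it forbids
jumps of `F_s` for almost every `s`. By continuity of `F_s` and `G_s` the coefficients then almost
commute with the mollification, and the averaged dissipation vanishes in the limit. Monotonicity in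
`r` removes the average, so `∫ (F_t - G_t(· + r))₊ dx` is nonincreasing in `t` for each `r`.

By Tonelli this integral is `∫₀¹ (G_t⁻¹ - F_t⁻¹ - r)₊ du`, and `|z| ^ p` is a mixture over `r ≥ 0`
of `(z - r)₊` and `(-z - r)₊`, so `W_p(F_t, G_t)` is nonincreasing as well. -/

/-! ### Mollification -/

section Mollify

/-- The mollification `κ ∗ h` of `h` by the kernel `κ`, on the real line. -/
def mollify (κ h : ℝ → ℝ) : ℝ → ℝ :=
  convolution κ h (ContinuousLinearMap.mul ℝ ℝ) volume

variable {κ g h : ℝ → ℝ}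

theorem mollify_apply (κ h : ℝ → ℝ) (x : ℝ) : mollify κ h x = ∫ y, κ y * h (x - y) := rfl

theorem mollify_eq_integral_comp_sub (κ h : ℝ → ℝ) (x : ℝ) :
    mollify κ h x = ∫ z, κ (x - z) * h z := by
  rw [mollify_apply, ← integral_sub_left_eq_self (fun y => κ y * h (x - y)) volume x]
  simp only [sub_sub_cancel]

theorem locallyIntegrable_of_abs_le (hm : Measurable h) {C : ℝ} (hC : ∀ x, |h x| ≤ C) :
    LocallyIntegrable h :=
  (locallyIntegrable_const C).mono hm.aestronglyMeasurable <| Eventually.of_forall fun x => by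
    simpa only [Real.norm_eq_abs] using (hC x).trans (le_abs_self C)

theorem integrable_mul_comp_sub (hκ : Continuous κ) (hc : HasCompactSupport κ)
    (hh : LocallyIntegrable h) (x : ℝ) : Integrable fun y => κ y * h (x - y) :=
  hc.convolutionExists_left (ContinuousLinearMap.mul ℝ ℝ) hκ hh x

theorem hasDerivAt_mollify (hκ : ContDiff ℝ 1 κ) (hc : HasCompactSupport κ)
    (hh : LocallyIntegrable h) (x : ℝ) :
    HasDerivAt (mollify κ h) (mollify (deriv κ) h x) x :=
  hc.hasDerivAt_convolution_left (ContinuousLinearMap.mul ℝ ℝ) hκ hh x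

theorem abs_mollify_le (hκ : Integrable κ) {C : ℝ} (hC : ∀ x, |h x| ≤ C) (x : ℝ) :
    |mollify κ h x| ≤ C * ∫ y, |κ y| := by
  rw [mollify_apply, ← Real.norm_eq_abs, ← integral_const_mul]
  refine norm_integral_le_of_norm_le (hκ.abs.const_mul C) (Eventually.of_forall fun y => ?_)
  rw [norm_mul, Real.norm_eq_abs, Real.norm_eq_abs, mul_comm]
  exact mul_le_mul_of_nonneg_right (hC _) (abs_nonneg _)

theorem mollify_sub (hκ : Continuous κ) (hc : HasCompactSupport κ)
    (hg : LocallyIntegrable g) (hh : LocallyIntegrable h) (x : ℝ) :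
    mollify κ (fun z => g z - h z) x = mollify κ g x - mollify κ h x := by
  simp only [mollify_apply, mul_sub]
  exact integral_sub (integrable_mul_comp_sub hκ hc hg x) (integrable_mul_comp_sub hκ hc hh x)

theorem mollify_const_mul (c x : ℝ) : mollify κ (fun z => c * h z) x = c * mollify κ h x := by
  simp only [mollify_apply, mul_left_comm _ c, integral_const_mul]

theorem mollify_comp_add_right (r x : ℝ) :
    mollify κ (fun z => h (z + r)) x = mollify κ h (x + r) := by
  simp only [mollify_apply, add_sub_right_comm]

end Mollify

/-- A smooth probability density supported in `[-δ, δ]`. -/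
structure IsMollifier (η : ℝ → ℝ) (δ : ℝ) : Prop where
  pos : 0 < δ
  contDiff : ContDiff ℝ (⊤ : ℕ∞) η
  nonneg : ∀ y, 0 ≤ η y
  eq_zero_of_lt_abs : ∀ y, δ < |y| → η y = 0
  integral_eq_one : ∫ y, η y = 1

theorem exists_isMollifier {δ : ℝ} (hδ : 0 < δ) : ∃ η, IsMollifier η δ := by
  let f : ContDiffBump (0 : ℝ) := ⟨δ / 2, δ, half_pos hδ, half_lt_self hδ⟩
  refine ⟨f.normed volume, hδ, f.contDiff_normed, f.nonneg_normed, fun y hy => ?_,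
    f.integral_normed⟩
  rw [← notMem_support, f.support_normed_eq, Metric.mem_ball, dist_zero_right, Real.norm_eq_abs]
  exact hy.le.not_gt

theorem sub_mem_Icc_of_abs_le {x y δ : ℝ} (hy : |y| ≤ δ) : x - y ∈ Icc (x - δ) (x + δ) :=
  ⟨by linarith [(abs_le.1 hy).2], by linarith [(abs_le.1 hy).1]⟩

namespace IsMollifier

variable {η h : ℝ → ℝ} {δ : ℝ}

theorem hasCompactSupport (hη : IsMollifier η δ) : HasCompactSupport η :=
  HasCompactSupport.intro (isCompact_Icc (a := -δ) (b := δ)) fun x hx =>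
    hη.eq_zero_of_lt_abs x (not_le.1 fun hle => hx (abs_le.1 hle))

theorem deriv_eq_zero_of_lt_abs (hη : IsMollifier η δ) {y : ℝ} (hy : δ < |y|) :
    deriv η y = 0 := by
  have hzero : η =ᶠ[𝓝 y] fun _ => 0 := by
    filter_upwards [(isOpen_lt continuous_const continuous_abs).mem_nhds hy] with z hz
    exact hη.eq_zero_of_lt_abs z hz
  rw [hzero.deriv_eq, deriv_const]

theorem contDiff_one (hη : IsMollifier η δ) : ContDiff ℝ 1 η :=
  hη.contDiff.of_le (by exact_mod_cast le_top)

theorem contDiff_deriv (hη : IsMollifier η δ) : ContDiff ℝ (⊤ : ℕ∞) (deriv η) :=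
  (contDiff_infty_iff_deriv.1 hη.contDiff).2

theorem contDiff_one_deriv (hη : IsMollifier η δ) : ContDiff ℝ 1 (deriv η) :=
  hη.contDiff_deriv.of_le (by exact_mod_cast le_top)

theorem continuous (hη : IsMollifier η δ) : Continuous η := hη.contDiff.continuous

theorem continuous_deriv (hη : IsMollifier η δ) : Continuous (deriv η) :=
  hη.contDiff_deriv.continuous

theorem continuous_deriv_deriv (hη : IsMollifier η δ) : Continuous (deriv (deriv η)) :=
  (contDiff_infty_iff_deriv.1 hη.contDiff_deriv).2.continuous

theorem hasCompactSupport_deriv (hη : IsMollifier η δ) : HasCompactSupport (deriv η) :=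
  hη.hasCompactSupport.deriv

theorem hasCompactSupport_deriv_deriv (hη : IsMollifier η δ) :
    HasCompactSupport (deriv (deriv η)) :=
  hη.hasCompactSupport_deriv.deriv

theorem integrable (hη : IsMollifier η δ) : Integrable η :=
  hη.continuous.integrable_of_hasCompactSupport hη.hasCompactSupport

theorem integrable_deriv (hη : IsMollifier η δ) : Integrable (deriv η) :=
  hη.continuous_deriv.integrable_of_hasCompactSupport hη.hasCompactSupport_deriv

theorem integrable_deriv_deriv (hη : IsMollifier η δ) : Integrable (deriv (deriv η)) :=
  hη.continuous_deriv_deriv.integrable_of_hasCompactSupport hη.hasCompactSupport_deriv_deriv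

theorem mollify_le (hη : IsMollifier η δ) (hh : LocallyIntegrable h) {x c : ℝ}
    (hle : ∀ z ∈ Icc (x - δ) (x + δ), h z ≤ c) : mollify η h x ≤ c := by
  have hc : c = ∫ y, η y * c := by rw [integral_mul_const, hη.integral_eq_one, one_mul]
  rw [hc]
  refine integral_mono (integrable_mul_comp_sub hη.continuous hη.hasCompactSupport hh x)
    (hη.integrable.mul_const c) fun y => ?_
  by_cases hy : δ < |y|
  · simp only [hη.eq_zero_of_lt_abs y hy, zero_mul, ContinuousLinearMap.mul_apply', le_refl]
  · exact mul_le_mul_of_nonneg_left (hle _ (sub_mem_Icc_of_abs_le (not_lt.1 hy))) (hη.nonneg y)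

theorem le_mollify (hη : IsMollifier η δ) (hh : LocallyIntegrable h) {x c : ℝ}
    (hle : ∀ z ∈ Icc (x - δ) (x + δ), c ≤ h z) : c ≤ mollify η h x := by
  have hneg := hη.mollify_le (h := fun z => -1 * h z) (hh.smul (-1 : ℝ)) (x := x) (c := -c)
    fun z hz => by linarith [hle z hz]
  rw [mollify_const_mul] at hneg
  linarith

theorem monotone_mollify (hη : IsMollifier η δ) (hh : Monotone h) : Monotone (mollify η h) :=
  fun x x' hx => integral_mono
    (integrable_mul_comp_sub hη.continuous hη.hasCompactSupport hh.locallyIntegrable x)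
    (integrable_mul_comp_sub hη.continuous hη.hasCompactSupport hh.locallyIntegrable x')
    fun y => mul_le_mul_of_nonneg_left (hh (by linarith)) (hη.nonneg y)

theorem mollify_deriv_nonneg (hη : IsMollifier η δ) {x : ℝ}
    (hh : MonotoneOn h (Icc (x - δ) (x + δ))) : 0 ≤ mollify (deriv η) h x := by
  have hδ : x - δ ≤ x + δ := by linarith [hη.pos]
  obtain ⟨g, hg, heq⟩ := hh.exists_monotone_extension
    ⟨h (x - δ), forall_mem_image.2 fun _ hz => hh (left_mem_Icc.2 hδ) hz hz.1⟩
    ⟨h (x + δ), forall_mem_image.2 fun _ hz => hh hz (right_mem_Icc.2 hδ) hz.2⟩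
  have hmol : mollify (deriv η) h x = mollify (deriv η) g x := by
    refine integral_congr_ae (Eventually.of_forall fun y => ?_)
    by_cases hy : δ < |y|
    · simp only [hη.deriv_eq_zero_of_lt_abs hy, ContinuousLinearMap.mul_apply', zero_mul]
    · simp only [heq (sub_mem_Icc_of_abs_le (not_lt.1 hy))]
  rw [hmol,
    ← (hasDerivAt_mollify hη.contDiff_one hη.hasCompactSupport hg.locallyIntegrable x).deriv]
  exact (hη.monotone_mollify hg).deriv_nonneg

theorem mollify_deriv_indicator_Ici (hη : IsMollifier η δ) (x₀ x : ℝ) :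
    mollify (deriv η) ((Ici x₀).indicator fun _ => 1) x = η (x - x₀) := by
  have hind : ∀ y, deriv η y * (Ici x₀).indicator (fun _ => (1 : ℝ)) (x - y)
      = (Iic (x - x₀)).indicator (deriv η) y := fun y => by
    simp only [indicator, mem_Ici, mem_Iic, le_sub_comm, mul_ite, mul_one, mul_zero]
  simp only [mollify_apply, hind]
  rw [integral_indicator measurableSet_Iic, integral_Iic_of_hasDerivAt_of_tendsto'
    (fun y _ => (hη.contDiff_one.differentiable one_ne_zero y).hasDerivAt)
    hη.integrable_deriv.integrableOn (m := 0), sub_zero]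
  refine tendsto_const_nhds.congr' ?_
  filter_upwards [eventually_lt_atBot (-δ)] with y hy
  exact (hη.eq_zero_of_lt_abs y (lt_abs.2 (Or.inr (by linarith)))).symm

theorem mul_le_mollify_deriv_of_jump (hη : IsMollifier η δ) (hh : Monotone h) {x₀ j : ℝ}
    (hj : 0 ≤ j) (hjump : ∀ z < x₀, h z + j ≤ h x₀) (x : ℝ) :
    j * η (x - x₀) ≤ mollify (deriv η) h x := by
  let step : ℝ → ℝ := (Ici x₀).indicator fun _ => 1
  have hstep : Monotone step := fun z z' hz => by
    simp only [step, indicator, mem_Ici]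
    split_ifs <;> linarith
  have hmono : Monotone fun z => h z - j * step z := fun z z' hz => by
    simp only [step, indicator, mem_Ici]
    split_ifs with hx hx' hx'
    · linarith [hh hz]
    · exact absurd (hx.trans hz) hx'
    · linarith [hjump z (not_le.1 hx), hh hx']
    · linarith [hh hz]
  have hnonneg := hη.mollify_deriv_nonneg (hmono.monotoneOn (Icc (x - δ) (x + δ)))
  rw [mollify_sub hη.continuous_deriv hη.hasCompactSupport_deriv hh.locallyIntegrable
    (hstep.const_mul hj).locallyIntegrable, mollify_const_mul,
    hη.mollify_deriv_indicator_Ici] at hnonneg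
  linarith

theorem integrable_sq (hη : IsMollifier η δ) : Integrable fun y => η y ^ 2 := by
  simp only [pow_two]
  exact (hη.continuous.mul hη.continuous).integrable_of_hasCompactSupport
    hη.hasCompactSupport.mul_right

theorem inv_two_mul_le_integral_sq (hη : IsMollifier η δ) : (2 * δ)⁻¹ ≤ ∫ y, η y ^ 2 := by
  have hδ := hη.pos
  set c := (2 * δ)⁻¹ with hc
  have hc1 : 2 * δ * c = 1 := mul_inv_cancel₀ (by positivity)
  have hind : Integrable ((Icc (-δ) δ).indicator fun _ : ℝ => c ^ 2) :=
    (integrable_indicator_iff measurableSet_Icc).2 (integrable_const _)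
  have hpointwise : ∀ y, 2 * c * η y - (Icc (-δ) δ).indicator (fun _ => c ^ 2) y ≤ η y ^ 2 := by
    intro y
    by_cases hy : y ∈ Icc (-δ) δ
    · rw [indicator_of_mem hy]
      nlinarith [sq_nonneg (η y - c)]
    · rw [indicator_of_notMem hy, hη.eq_zero_of_lt_abs y (not_le.1 fun h => hy (abs_le.1 h))]
      norm_num
  have hle := integral_mono ((hη.integrable.const_mul (2 * c)).sub hind) hη.integrable_sq hpointwise
  calc c = 2 * c - 2 * δ * c ^ 2 := by linear_combination c * hc1
    _ = ∫ y, (2 * c * η y - (Icc (-δ) δ).indicator (fun _ => c ^ 2) y) := by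
      rw [integral_sub (hη.integrable.const_mul (2 * c)) hind, integral_const_mul,
        hη.integral_eq_one, integral_indicator measurableSet_Icc, setIntegral_const,
        Real.volume_real_Icc_of_le (by linarith), smul_eq_mul]
      ring
    _ ≤ ∫ y, η y ^ 2 := hle

end IsMollifier

theorem continuous_slice {X Y Z : Type*} [TopologicalSpace X] [TopologicalSpace Y]
    [TopologicalSpace Z] {f : X → Y → Z} (hf : Continuous (uncurry f)) (x : X) :
    Continuous (f x) :=
  hf.comp (continuous_const.prodMk continuous_id)

theorem continuous_uncurry_mollify {κ : ℝ → ℝ} {Φ : ℝ → ℝ → ℝ} (hκ : Continuous κ)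
    (hc : HasCompactSupport κ) (hm : ∀ t, Measurable (Φ t)) {C : ℝ} (hC : ∀ t z, |Φ t z| ≤ C)
    (hcont : ∀ t₀, ∀ᵐ z, ContinuousAt (fun t => Φ t z) t₀) :
    Continuous (uncurry fun t x => mollify κ (Φ t) x) := by
  refine continuous_iff_continuousAt.2 fun ⟨t₀, x₀⟩ => ?_
  simp only [uncurry_def, mollify_eq_integral_comp_sub]
  obtain ⟨M, hM⟩ : ∃ M, ∀ x, ‖κ x‖ ≤ M := hκ.bounded_above_of_compact_support hc
  obtain ⟨R, hR⟩ := hc.isCompact.isBounded.subset_closedBall 0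
  have hM0 : 0 ≤ M := (norm_nonneg _).trans (hM 0)
  refine continuousAt_of_dominated
    (bound := (Icc (x₀ - 1 - R) (x₀ + 1 + R)).indicator fun _ => M * C)
    (Eventually.of_forall fun q => ?_) ?_
    ((integrable_indicator_iff measurableSet_Icc).2 (integrable_const _)) ?_
  · exact (hκ.measurable.comp (measurable_const.sub measurable_id)).aestronglyMeasurable.mul
      (hm q.1).aestronglyMeasurable
  · have hnear : ∀ᶠ q : ℝ × ℝ in 𝓝 (t₀, x₀), q.2 ∈ Ioo (x₀ - 1) (x₀ + 1) :=
      continuousAt_snd.eventually_mem (Ioo_mem_nhds (by linarith) (by linarith))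
    filter_upwards [hnear] with q hq
    refine Eventually.of_forall fun z => ?_
    by_cases hz : z ∈ Icc (x₀ - 1 - R) (x₀ + 1 + R)
    · rw [indicator_of_mem hz, norm_mul]
      exact mul_le_mul (hM _) (hC _ _) (norm_nonneg _) hM0
    · have hκz : κ (q.2 - z) = 0 := by
        by_contra hne
        have hmem := hR (subset_tsupport _ (mem_support.2 hne))
        rw [mem_closedBall_zero_iff, Real.norm_eq_abs, abs_le] at hmem
        exact hz ⟨by linarith [hq.1], by linarith [hq.2]⟩
      rw [indicator_of_notMem hz, hκz, zero_mul, norm_zero]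
  · filter_upwards [hcont t₀] with z hz
    exact (hκ.comp (continuous_snd.sub continuous_const)).continuousAt.mul
      (ContinuousAt.comp (f := Prod.fst) (g := fun t => Φ t z) (x := (t₀, x₀)) hz continuousAt_fst)

/-- The Heaviside function `1_{[0,∞)}`, the cumulative distribution function of the Dirac mass
at `0`. -/
def heaviside : ℝ → ℝ := (Ici 0).indicator fun _ => 1

theorem heaviside_apply (x : ℝ) : heaviside x = if 0 ≤ x then 1 else 0 := rfl

theorem monotone_heaviside : Monotone heaviside := fun x y hxy => by
  simp only [heaviside_apply]
  split_ifs <;> linarith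

theorem measurable_heaviside : Measurable heaviside := monotone_heaviside.measurable

theorem heaviside_add_sub_of_nonneg {r : ℝ} (hr : 0 ≤ r) :
    (fun x => heaviside (x + r) - heaviside x) = (Ico (-r) 0).indicator fun _ => 1 := by
  ext x
  simp only [heaviside_apply, indicator, mem_Ico, neg_le_iff_add_nonneg]
  split_ifs <;> grind

theorem heaviside_add_sub_of_nonpos {r : ℝ} (hr : r ≤ 0) :
    (fun x => heaviside (x + r) - heaviside x) = (Ico 0 (-r)).indicator fun _ => -1 := by
  ext x
  simp only [heaviside_apply, indicator, mem_Ico, lt_neg_iff_add_neg]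
  split_ifs <;> grind

theorem integrable_heaviside_add_sub (r : ℝ) :
    Integrable fun x => heaviside (x + r) - heaviside x := by
  rcases le_total 0 r with hr | hr
  · rw [heaviside_add_sub_of_nonneg hr]
    exact (integrable_indicator_iff measurableSet_Ico).2 (integrable_const _)
  · rw [heaviside_add_sub_of_nonpos hr]
    exact (integrable_indicator_iff measurableSet_Ico).2 (integrable_const _)

theorem integral_heaviside_add_sub (r : ℝ) : ∫ x, (heaviside (x + r) - heaviside x) = r := by
  rcases le_total 0 r with hr | hr
  · rw [heaviside_add_sub_of_nonneg hr, integral_indicator measurableSet_Ico, setIntegral_const,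
      Real.volume_real_Ico_of_le (by linarith), smul_eq_mul, mul_one, zero_sub, neg_neg]
  · rw [heaviside_add_sub_of_nonpos hr, integral_indicator measurableSet_Ico, setIntegral_const,
      Real.volume_real_Ico_of_le (by linarith), smul_eq_mul, mul_neg_one, sub_zero, neg_neg]

theorem add_sub_eq_add_heaviside (f : ℝ → ℝ) (r : ℝ) : (fun x => f (x + r) - f x) = fun x =>
    (f (x + r) - heaviside (x + r)) - (f x - heaviside x) + (heaviside (x + r) - heaviside x) := by
  ext x
  ring

theorem integrable_add_sub {f : ℝ → ℝ} (hf : Integrable fun x => f x - heaviside x) (r : ℝ) :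
    Integrable fun x => f (x + r) - f x := by
  rw [add_sub_eq_add_heaviside]
  exact ((hf.comp_add_right r).sub hf).add (integrable_heaviside_add_sub r)

theorem integral_add_sub {f : ℝ → ℝ} (hf : Integrable fun x => f x - heaviside x) (r : ℝ) :
    ∫ x, (f (x + r) - f x) = r := by
  have hdiff := (hf.comp_add_right r).sub hf
  simp only [Pi.sub_def] at hdiff
  rw [add_sub_eq_add_heaviside, integral_add hdiff (integrable_heaviside_add_sub r),
    integral_sub (hf.comp_add_right r) hf,
    integral_add_right_eq_self (fun x => f x - heaviside x) r, sub_self, zero_add,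
    integral_heaviside_add_sub]

/-- Cumulative distribution functions of probability measures on `ℝ`, characterised by
monotonicity, right continuity and the limits at `±∞`. -/
structure IsCdf (F : ℝ → ℝ) : Prop where
  mono : Monotone F
  rightCont : ∀ x, ContinuousWithinAt F (Ici x) x
  tendsto_atBot : Tendsto F atBot (𝓝 0)
  tendsto_atTop : Tendsto F atTop (𝓝 1)

namespace IsCdf

variable {F : ℝ → ℝ}

theorem nonneg (hF : IsCdf F) (x : ℝ) : 0 ≤ F x := hF.mono.le_of_tendsto hF.tendsto_atBot x

theorem le_one (hF : IsCdf F) (x : ℝ) : F x ≤ 1 := hF.mono.ge_of_tendsto hF.tendsto_atTop x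

theorem mem_Icc (hF : IsCdf F) (x : ℝ) : F x ∈ Icc (0 : ℝ) 1 := ⟨hF.nonneg x, hF.le_one x⟩

theorem abs_le_one (hF : IsCdf F) (x : ℝ) : |F x| ≤ 1 := by
  rw [abs_of_nonneg (hF.nonneg x)]
  exact hF.le_one x

theorem comp_add_right (hF : IsCdf F) (r : ℝ) : IsCdf fun x => F (x + r) where
  mono x y hxy := hF.mono (by linarith)
  rightCont x := (hF.rightCont (x + r)).comp (f := fun y => y + r) (by fun_prop)
    fun _ hy => add_le_add_left (mem_Ici.1 hy) r
  tendsto_atBot := hF.tendsto_atBot.comp (tendsto_atBot_add_const_right _ r tendsto_id)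
  tendsto_atTop := hF.tendsto_atTop.comp (tendsto_atTop_add_const_right _ r tendsto_id)

end IsCdf

/-- The data of the equation `∂ₜF = ½ ∂ₓₓ A(F) - ∂ₓ B(F)`, extended from `[0,1]` to `ℝ`: `a = A'` is
nonnegative, bounded by `Ca` and uniformly continuous, `B` is `Cb`-Lipschitz, and `A` is strictly
increasing on `[0,1]`. -/
structure RegularCoefficients (a A B : ℝ → ℝ) (Ca Cb : ℝ) : Prop where
  hasDerivAt : ∀ u, HasDerivAt A (a u) u
  nonneg : ∀ u, 0 ≤ a u
  le : ∀ u, a u ≤ Ca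
  uniformContinuous : UniformContinuous a
  strictMonoOn : StrictMonoOn A (Icc 0 1)
  diffusion_zero : A 0 = 0
  drift_zero : B 0 = 0
  abs_drift_sub_le : ∀ u v, |B u - B v| ≤ Cb * |u - v|

namespace RegularCoefficients

variable {a A B : ℝ → ℝ} {Ca Cb : ℝ}

theorem Ca_nonneg (hc : RegularCoefficients a A B Ca Cb) : 0 ≤ Ca := (hc.nonneg 0).trans (hc.le 0)

theorem Cb_nonneg (hc : RegularCoefficients a A B Ca Cb) : 0 ≤ Cb := by
  simpa only [sub_zero, abs_one, mul_one] using (abs_nonneg _).trans (hc.abs_drift_sub_le 1 0)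

theorem monotone (hc : RegularCoefficients a A B Ca Cb) : Monotone A :=
  monotone_of_hasDerivAt_nonneg hc.hasDerivAt hc.nonneg

theorem monotone_mul_sub (hc : RegularCoefficients a A B Ca Cb) :
    Monotone fun u => Ca * u - A u :=
  monotone_of_hasDerivAt_nonneg
    (fun u => ((hasDerivAt_id u).const_mul Ca).sub (hc.hasDerivAt u)) fun u => by
      simpa only [mul_one, Pi.zero_apply, sub_nonneg] using hc.le u

theorem continuous (hc : RegularCoefficients a A B Ca Cb) : Continuous A :=
  continuous_iff_continuousAt.2 fun u => (hc.hasDerivAt u).continuousAt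

theorem continuous_drift (hc : RegularCoefficients a A B Ca Cb) : Continuous B :=
  (LipschitzWith.of_dist_le_mul (K := ⟨Cb, hc.Cb_nonneg⟩) hc.abs_drift_sub_le).continuous

theorem abs_le (hc : RegularCoefficients a A B Ca Cb) {u : ℝ} (hu : u ∈ Icc (0 : ℝ) 1) :
    |A u| ≤ Ca := by
  have hA : A 0 ≤ A u := hc.monotone hu.1
  have hCaA : Ca * 0 - A 0 ≤ Ca * u - A u := hc.monotone_mul_sub hu.1
  rw [hc.diffusion_zero] at hA hCaA
  rw [abs_of_nonneg hA]
  nlinarith [hc.Ca_nonneg, hu.2]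

theorem abs_drift_le (hc : RegularCoefficients a A B Ca Cb) {u : ℝ} (hu : u ∈ Icc (0 : ℝ) 1) :
    |B u| ≤ Cb := by
  have hB := hc.abs_drift_sub_le u 0
  rw [hc.drift_zero, sub_zero, sub_zero, abs_of_nonneg hu.1] at hB
  nlinarith [hc.Cb_nonneg, hu.2]

end RegularCoefficients

/-! ### Mollified solutions -/

/-- A distributional solution `(t, x) ↦ F t x` of `∂ₜF = ½ ∂ₓₓ A(F) - ∂ₓ B(F)` whose time slices are
cumulative distribution functions with finite first moment, the latter being encoded as the
integrability of `F t - heaviside`. The weak formulation only involves test functions of `x`. -/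
structure IsCdfSolution (A B : ℝ → ℝ) (F : ℝ → ℝ → ℝ) : Prop where
  isCdf : ∀ t, IsCdf (F t)
  measurable : Measurable (uncurry F)
  ae_continuousAt : ∀ t₀, ∀ᵐ x, ContinuousAt (fun t => F t x) t₀
  integrable_sub_heaviside : ∀ t, Integrable fun x => F t x - heaviside x
  integrable_prod_sub_heaviside : ∀ t₁ t₂, 0 ≤ t₁ →
    Integrable (fun q : ℝ × ℝ => F q.1 q.2 - heaviside q.2)
      ((volume.restrict (Ioc t₁ t₂)).prod volume)
  weak : ∀ ψ : ℝ → ℝ, ContDiff ℝ (⊤ : ℕ∞) ψ → HasCompactSupport ψ →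
    ∀ t₁ t₂, 0 ≤ t₁ → t₁ ≤ t₂ →
      (∫ x, ψ x * F t₂ x) - (∫ x, ψ x * F t₁ x) = ∫ s in t₁..t₂, ∫ x,
        ((1 / 2) * A (F s x) * deriv (deriv ψ) x + B (F s x) * deriv ψ x)

/-- The space translation `(t, x) ↦ F t (x + r)`. -/
def spaceTranslate (F : ℝ → ℝ → ℝ) (r : ℝ) : ℝ → ℝ → ℝ := fun t x => F t (x + r)

theorem integral_comp_sub_left_slot (f : ℝ → ℝ → ℝ) (r : ℝ) :
    ∫ x, f (x - r) x = ∫ x, f x (x + r) := by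
  rw [← integral_add_right_eq_self (fun x => f (x - r) x) r]
  simp only [add_sub_cancel_right]

theorem deriv_comp_sub_const_fun (f : ℝ → ℝ) (r : ℝ) :
    deriv (fun x => f (x - r)) = fun x => deriv f (x - r) :=
  funext fun x => deriv_comp_sub_const f r x

theorem deriv_comp_const_sub_fun (f : ℝ → ℝ) (x : ℝ) :
    deriv (fun z => f (x - z)) = fun z => -deriv f (x - z) :=
  funext fun z => deriv_comp_const_sub f x z

namespace IsCdfSolution

variable {A B : ℝ → ℝ} {F : ℝ → ℝ → ℝ}

theorem measurable_slice (hF : IsCdfSolution A B F) (t : ℝ) : Measurable (F t) :=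
  (hF.isCdf t).mono.measurable

theorem locallyIntegrable (hF : IsCdfSolution A B F) (t : ℝ) : LocallyIntegrable (F t) :=
  (hF.isCdf t).mono.locallyIntegrable

theorem weak_add_right (hF : IsCdfSolution A B F) (r : ℝ) {ψ : ℝ → ℝ}
    (hψ : ContDiff ℝ (⊤ : ℕ∞) ψ) (hψc : HasCompactSupport ψ) {t₁ t₂ : ℝ} (h₁ : 0 ≤ t₁)
    (h₂ : t₁ ≤ t₂) :
    (∫ x, ψ x * F t₂ (x + r)) - (∫ x, ψ x * F t₁ (x + r)) = ∫ s in t₁..t₂, ∫ x,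
      ((1 / 2) * A (F s (x + r)) * deriv (deriv ψ) x + B (F s (x + r)) * deriv ψ x) := by
  have hweak := hF.weak (fun x => ψ (x - r)) (hψ.comp (contDiff_id.sub contDiff_const))
    (hψc.comp_homeomorph (Homeomorph.subRight r)) t₁ t₂ h₁ h₂
  rw [deriv_comp_sub_const_fun, deriv_comp_sub_const_fun,
    integral_comp_sub_left_slot (fun x y => ψ x * F t₂ y),
    integral_comp_sub_left_slot (fun x y => ψ x * F t₁ y)] at hweak
  rw [hweak]
  exact intervalIntegral.integral_congr fun s _ => integral_comp_sub_left_slot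
    (fun x y => (1 / 2) * A (F s y) * deriv (deriv ψ) x + B (F s y) * deriv ψ x) r

protected theorem spaceTranslate (hF : IsCdfSolution A B F) (r : ℝ) :
    IsCdfSolution A B (spaceTranslate F r) where
  isCdf t := (hF.isCdf t).comp_add_right r
  measurable := hF.measurable.comp (measurable_fst.prodMk (measurable_snd.add_const r))
  ae_continuousAt t₀ :=
    (measurePreserving_add_right volume r).quasiMeasurePreserving.ae (hF.ae_continuousAt t₀)
  integrable_sub_heaviside t := by
    refine (((hF.integrable_sub_heaviside t).comp_add_right r).add
      (integrable_heaviside_add_sub r)).congr (Eventually.of_forall fun x => ?_)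
    simp only [Pi.add_apply, spaceTranslate, sub_add_sub_cancel]
  integrable_prod_sub_heaviside t₁ t₂ ht := by
    have hpres : MeasurePreserving (fun q : ℝ × ℝ => (q.1, q.2 + r))
        ((volume.restrict (Ioc t₁ t₂)).prod volume) ((volume.restrict (Ioc t₁ t₂)).prod volume) :=
      (MeasurePreserving.id _).prod (measurePreserving_add_right volume r)
    refine ((hpres.integrable_comp_of_integrable (hF.integrable_prod_sub_heaviside t₁ t₂ ht)).add
      ((integrable_heaviside_add_sub r).comp_snd _)).congr (Eventually.of_forall fun x => ?_)
    simp only [Pi.add_apply, comp_apply, spaceTranslate, sub_add_sub_cancel]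
  weak _ hψ hψc _ _ h₁ h₂ := hF.weak_add_right r hψ hψc h₁ h₂

end IsCdfSolution

section Smoothing

variable (η A B : ℝ → ℝ) (F : ℝ → ℝ → ℝ) (t x : ℝ)

/-- The spatial mollification `η ∗ F`. -/
def smoothCdf : ℝ := mollify η (F t) x

/-- The space derivative of `η ∗ F`, a smooth probability density. -/
def smoothDensity : ℝ := mollify (deriv η) (F t) x

/-- The space derivative of `η ∗ A(F)`. -/
def smoothDiffusion : ℝ := mollify (deriv η) (fun z => A (F t z)) x

/-- The mollified drift `η ∗ B(F)`. -/
def smoothDrift : ℝ := mollify η (fun z => B (F t z)) x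

/-- The flux `½ ∂ₓ(η ∗ A(F)) - η ∗ B(F)` of the mollified equation. -/
def smoothFlux : ℝ := (1 / 2) * smoothDiffusion η A F t x - smoothDrift η B F t x

/-- The space derivative of the flux, equal to the time derivative of `η ∗ F`. -/
def smoothFluxDeriv : ℝ :=
  (1 / 2) * mollify (deriv (deriv η)) (fun z => A (F t z)) x
    - mollify (deriv η) (fun z => B (F t z)) x

variable {η A B F t x} (r : ℝ)

theorem smoothCdf_spaceTranslate : smoothCdf η (spaceTranslate F r) t x = smoothCdf η F t (x + r) :=
  mollify_comp_add_right r x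

theorem smoothDensity_spaceTranslate :
    smoothDensity η (spaceTranslate F r) t x = smoothDensity η F t (x + r) :=
  mollify_comp_add_right r x

theorem smoothDiffusion_spaceTranslate :
    smoothDiffusion η A (spaceTranslate F r) t x = smoothDiffusion η A F t (x + r) :=
  mollify_comp_add_right (h := fun z => A (F t z)) r x

theorem smoothDrift_spaceTranslate :
    smoothDrift η B (spaceTranslate F r) t x = smoothDrift η B F t (x + r) :=
  mollify_comp_add_right (h := fun z => B (F t z)) r x

theorem smoothFlux_spaceTranslate :
    smoothFlux η A B (spaceTranslate F r) t x = smoothFlux η A B F t (x + r) := by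
  simp only [smoothFlux, smoothDiffusion_spaceTranslate, smoothDrift_spaceTranslate]

end Smoothing

namespace IsCdfSolution

variable {a A B η : ℝ → ℝ} {Ca Cb δ : ℝ} {F : ℝ → ℝ → ℝ}

section Composition

variable {κ Φ : ℝ → ℝ} {C : ℝ}

theorem continuous_mollify_comp (hF : IsCdfSolution A B F) (hκ : Continuous κ)
    (hκc : HasCompactSupport κ) (hΦ : Continuous Φ) (hC : ∀ u ∈ Icc (0 : ℝ) 1, |Φ u| ≤ C) :
    Continuous (uncurry fun t x => mollify κ (fun z => Φ (F t z)) x) :=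
  continuous_uncurry_mollify hκ hκc (fun t => hΦ.measurable.comp (hF.measurable_slice t))
    (fun t z => hC _ ((hF.isCdf t).mem_Icc z)) fun t₀ =>
      (hF.ae_continuousAt t₀).mono fun _ hz => hΦ.continuousAt.comp hz

theorem locallyIntegrable_comp (hF : IsCdfSolution A B F) (hΦ : Continuous Φ)
    (hC : ∀ u ∈ Icc (0 : ℝ) 1, |Φ u| ≤ C) (t : ℝ) : LocallyIntegrable fun z => Φ (F t z) :=
  locallyIntegrable_of_abs_le (hΦ.measurable.comp (hF.measurable_slice t))
    fun z => hC _ ((hF.isCdf t).mem_Icc z)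

end Composition

theorem locallyIntegrable_diffusion (hF : IsCdfSolution A B F)
    (hc : RegularCoefficients a A B Ca Cb) (t : ℝ) : LocallyIntegrable fun z => A (F t z) :=
  hF.locallyIntegrable_comp hc.continuous (fun _ => hc.abs_le) t

theorem locallyIntegrable_drift (hF : IsCdfSolution A B F)
    (hc : RegularCoefficients a A B Ca Cb) (t : ℝ) : LocallyIntegrable fun z => B (F t z) :=
  hF.locallyIntegrable_comp hc.continuous_drift (fun _ => hc.abs_drift_le) t

theorem continuous_smoothCdf (hF : IsCdfSolution A B F) (hη : IsMollifier η δ) :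
    Continuous (uncurry (smoothCdf η F)) :=
  hF.continuous_mollify_comp hη.continuous hη.hasCompactSupport continuous_id
    fun _ hu => (abs_of_nonneg hu.1).trans_le hu.2

theorem continuous_smoothDensity (hF : IsCdfSolution A B F) (hη : IsMollifier η δ) :
    Continuous (uncurry (smoothDensity η F)) :=
  hF.continuous_mollify_comp hη.continuous_deriv hη.hasCompactSupport_deriv continuous_id
    fun _ hu => (abs_of_nonneg hu.1).trans_le hu.2

theorem continuous_smoothDiffusion (hF : IsCdfSolution A B F)
    (hc : RegularCoefficients a A B Ca Cb) (hη : IsMollifier η δ) :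
    Continuous (uncurry (smoothDiffusion η A F)) :=
  hF.continuous_mollify_comp hη.continuous_deriv hη.hasCompactSupport_deriv hc.continuous
    fun _ => hc.abs_le

theorem continuous_smoothFlux (hF : IsCdfSolution A B F)
    (hc : RegularCoefficients a A B Ca Cb) (hη : IsMollifier η δ) :
    Continuous (uncurry (smoothFlux η A B F)) :=
  (continuous_const.mul (hF.continuous_smoothDiffusion hc hη)).sub
    (hF.continuous_mollify_comp hη.continuous hη.hasCompactSupport hc.continuous_drift
      fun _ => hc.abs_drift_le)

theorem continuous_smoothFluxDeriv (hF : IsCdfSolution A B F)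
    (hc : RegularCoefficients a A B Ca Cb) (hη : IsMollifier η δ) :
    Continuous (uncurry (smoothFluxDeriv η A B F)) :=
  (continuous_const.mul (hF.continuous_mollify_comp hη.continuous_deriv_deriv
    hη.hasCompactSupport_deriv_deriv hc.continuous fun _ => hc.abs_le)).sub
  (hF.continuous_mollify_comp hη.continuous_deriv hη.hasCompactSupport_deriv hc.continuous_drift
    fun _ => hc.abs_drift_le)

theorem hasDerivAt_smoothCdf (hF : IsCdfSolution A B F) (hη : IsMollifier η δ) (t x : ℝ) :
    HasDerivAt (smoothCdf η F t) (smoothDensity η F t x) x :=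
  hasDerivAt_mollify hη.contDiff_one hη.hasCompactSupport (hF.locallyIntegrable t) x

theorem hasDerivAt_smoothFlux (hF : IsCdfSolution A B F) (hc : RegularCoefficients a A B Ca Cb)
    (hη : IsMollifier η δ) (t x : ℝ) :
    HasDerivAt (smoothFlux η A B F t) (smoothFluxDeriv η A B F t x) x :=
  ((hasDerivAt_mollify hη.contDiff_one_deriv hη.hasCompactSupport_deriv
    (hF.locallyIntegrable_diffusion hc t) x).const_mul (1 / 2)).sub
  (hasDerivAt_mollify hη.contDiff_one hη.hasCompactSupport (hF.locallyIntegrable_drift hc t) x)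

theorem smoothCdf_nonneg (hF : IsCdfSolution A B F) (hη : IsMollifier η δ) (t x : ℝ) :
    0 ≤ smoothCdf η F t x :=
  hη.le_mollify (hF.locallyIntegrable t) fun _ _ => (hF.isCdf t).nonneg _

theorem smoothCdf_le_one (hF : IsCdfSolution A B F) (hη : IsMollifier η δ) (t x : ℝ) :
    smoothCdf η F t x ≤ 1 :=
  hη.mollify_le (hF.locallyIntegrable t) fun _ _ => (hF.isCdf t).le_one _

theorem smoothCdf_le (hF : IsCdfSolution A B F) (hη : IsMollifier η δ) (t x : ℝ) :
    smoothCdf η F t x ≤ F t (x + δ) :=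
  hη.mollify_le (hF.locallyIntegrable t) fun _ hz => (hF.isCdf t).mono hz.2

theorem le_smoothCdf (hF : IsCdfSolution A B F) (hη : IsMollifier η δ) (t x : ℝ) :
    F t (x - δ) ≤ smoothCdf η F t x :=
  hη.le_mollify (hF.locallyIntegrable t) fun _ hz => (hF.isCdf t).mono hz.1

theorem smoothDensity_nonneg (hF : IsCdfSolution A B F) (hη : IsMollifier η δ) (t x : ℝ) :
    0 ≤ smoothDensity η F t x :=
  hη.mollify_deriv_nonneg ((hF.isCdf t).mono.monotoneOn _)

theorem smoothDensity_le (hF : IsCdfSolution A B F) (hη : IsMollifier η δ) (t x : ℝ) :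
    smoothDensity η F t x ≤ ∫ y, |deriv η y| := by
  have habs := abs_mollify_le hη.integrable_deriv (hF.isCdf t).abs_le_one x
  rw [one_mul] at habs
  exact (le_abs_self _).trans habs

theorem smoothDiffusion_nonneg (hF : IsCdfSolution A B F) (hc : RegularCoefficients a A B Ca Cb)
    (hη : IsMollifier η δ) (t x : ℝ) : 0 ≤ smoothDiffusion η A F t x :=
  hη.mollify_deriv_nonneg ((hc.monotone.comp (hF.isCdf t).mono).monotoneOn _)

theorem mollify_deriv_mul_sub (hF : IsCdfSolution A B F) (hc : RegularCoefficients a A B Ca Cb)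
    (hη : IsMollifier η δ) (c t x : ℝ) :
    mollify (deriv η) (fun z => c * F t z - A (F t z)) x
      = c * smoothDensity η F t x - smoothDiffusion η A F t x := by
  rw [mollify_sub (g := fun z => c * F t z) hη.continuous_deriv hη.hasCompactSupport_deriv
    ((hF.locallyIntegrable t).smul c) (hF.locallyIntegrable_diffusion hc t), mollify_const_mul]
  rfl

theorem smoothDiffusion_le (hF : IsCdfSolution A B F) (hc : RegularCoefficients a A B Ca Cb)
    (hη : IsMollifier η δ) (t x : ℝ) :
    smoothDiffusion η A F t x ≤ Ca * smoothDensity η F t x := by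
  rw [← sub_nonneg, ← hF.mollify_deriv_mul_sub hc hη]
  exact hη.mollify_deriv_nonneg ((hc.monotone_mul_sub.comp (hF.isCdf t).mono).monotoneOn _)

theorem abs_smoothDrift_le (hF : IsCdfSolution A B F) (hc : RegularCoefficients a A B Ca Cb)
    (hη : IsMollifier η δ) (t x : ℝ) : |smoothDrift η B F t x| ≤ Cb := by
  have hB : ∀ z, |B (F t z)| ≤ Cb := fun z => hc.abs_drift_le ((hF.isCdf t).mem_Icc z)
  exact abs_le.2
    ⟨hη.le_mollify (hF.locallyIntegrable_drift hc t) fun z _ => (abs_le.1 (hB z)).1,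
      hη.mollify_le (hF.locallyIntegrable_drift hc t) fun z _ => (abs_le.1 (hB z)).2⟩

theorem abs_smoothFlux_le (hF : IsCdfSolution A B F) (hc : RegularCoefficients a A B Ca Cb)
    (hη : IsMollifier η δ) (t x : ℝ) :
    |smoothFlux η A B F t x| ≤ (1 / 2) * (Ca * ∫ y, |deriv η y|) + Cb := by
  have hw := hF.smoothDiffusion_nonneg hc hη t x
  have hw' := (hF.smoothDiffusion_le hc hη t x).trans
    (mul_le_mul_of_nonneg_left (hF.smoothDensity_le hη t x) hc.Ca_nonneg)
  have hb := abs_le.1 (hF.abs_smoothDrift_le hc hη t x)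
  rw [smoothFlux, abs_le]
  constructor <;> linarith

theorem abs_smoothFluxDeriv_le (hF : IsCdfSolution A B F) (hc : RegularCoefficients a A B Ca Cb)
    (hη : IsMollifier η δ) (t x : ℝ) : |smoothFluxDeriv η A B F t x| ≤
      (1 / 2) * (Ca * ∫ y, |deriv (deriv η) y|) + Cb * ∫ y, |deriv η y| := by
  have hA := abs_mollify_le hη.integrable_deriv_deriv
    (fun z => hc.abs_le ((hF.isCdf t).mem_Icc z)) x
  have hB := abs_mollify_le hη.integrable_deriv
    (fun z => hc.abs_drift_le ((hF.isCdf t).mem_Icc z)) x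
  rw [abs_le] at hA hB
  rw [smoothFluxDeriv, abs_le]
  constructor <;> linarith [hA.1, hA.2, hB.1, hB.2]

theorem smoothDensity_eq_convolution_add (hF : IsCdfSolution A B F) (hη : IsMollifier η δ)
    (t : ℝ) : smoothDensity η F t = fun x =>
      mollify (deriv η) (fun z => F t z - heaviside z) x + η x := by
  ext x
  rw [mollify_sub hη.continuous_deriv hη.hasCompactSupport_deriv (hF.locallyIntegrable t)
    monotone_heaviside.locallyIntegrable, heaviside, hη.mollify_deriv_indicator_Ici, sub_zero,
    sub_add_cancel]
  rfl

theorem integrable_smoothDensity (hF : IsCdfSolution A B F) (hη : IsMollifier η δ) (t : ℝ) :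
    Integrable (smoothDensity η F t) := by
  rw [hF.smoothDensity_eq_convolution_add hη]
  exact (hη.integrable_deriv.integrable_convolution (ContinuousLinearMap.mul ℝ ℝ)
    (hF.integrable_sub_heaviside t)).add hη.integrable

theorem integral_smoothDensity (hF : IsCdfSolution A B F) (hη : IsMollifier η δ) (t : ℝ) :
    ∫ x, smoothDensity η F t x = 1 := by
  have hderiv : ∫ y, deriv η y = 0 := integral_eq_zero_of_hasDerivAt_of_integrable
    (fun y => (hη.contDiff_one.differentiable one_ne_zero y).hasDerivAt) hη.integrable_deriv
    hη.integrable
  have hconv : ∫ x, mollify (deriv η) (fun z => F t z - heaviside z) x = 0 := by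
    refine (integral_convolution (ContinuousLinearMap.mul ℝ ℝ) hη.integrable_deriv
      (hF.integrable_sub_heaviside t)).trans ?_
    rw [hderiv, ContinuousLinearMap.mul_apply', zero_mul]
  have hint : Integrable (mollify (deriv η) fun z => F t z - heaviside z) :=
    hη.integrable_deriv.integrable_convolution _ (hF.integrable_sub_heaviside t)
  simp only [hF.smoothDensity_eq_convolution_add hη]
  rw [integral_add hint hη.integrable, hconv, hη.integral_eq_one, zero_add]

theorem smoothCdf_sub_smoothCdf (hF : IsCdfSolution A B F) (hc : RegularCoefficients a A B Ca Cb)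
    (hη : IsMollifier η δ) {t₁ t₂ : ℝ} (h₁ : 0 ≤ t₁) (h₂ : t₁ ≤ t₂) (x : ℝ) :
    smoothCdf η F t₂ x - smoothCdf η F t₁ x = ∫ s in t₁..t₂, smoothFluxDeriv η A B F s x := by
  have hweak := hF.weak (fun z => η (x - z)) (hη.contDiff.comp (contDiff_const.sub contDiff_id))
    (hη.hasCompactSupport.comp_homeomorph (Homeomorph.subLeft x)) t₁ t₂ h₁ h₂
  have hderiv2 : deriv (fun z => -deriv η (x - z)) = fun z => deriv (deriv η) (x - z) := by
    ext z
    rw [deriv.fun_neg, deriv_comp_const_sub, neg_neg]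
  rw [deriv_comp_const_sub_fun, hderiv2, ← mollify_eq_integral_comp_sub,
    ← mollify_eq_integral_comp_sub] at hweak
  rw [smoothCdf, smoothCdf, hweak]
  refine intervalIntegral.integral_congr fun s _ => ?_
  have hA := (integrable_mul_comp_sub hη.continuous_deriv_deriv hη.hasCompactSupport_deriv_deriv
    (hF.locallyIntegrable_diffusion hc s) x).comp_sub_left x
  have hB := (integrable_mul_comp_sub hη.continuous_deriv hη.hasCompactSupport_deriv
    (hF.locallyIntegrable_drift hc s) x).comp_sub_left x
  simp only [sub_sub_cancel] at hA hB
  simp only [smoothFluxDeriv, mollify_eq_integral_comp_sub]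
  rw [← integral_const_mul, ← integral_sub (hA.const_mul _) hB]
  exact integral_congr_ae (Eventually.of_forall fun z => by ring)

theorem hasDerivAt_smoothCdf_time (hF : IsCdfSolution A B F)
    (hc : RegularCoefficients a A B Ca Cb) (hη : IsMollifier η δ) {t : ℝ} (ht : 0 < t) (x : ℝ) :
    HasDerivAt (fun s => smoothCdf η F s x) (smoothFluxDeriv η A B F t x) t := by
  have hcont : Continuous fun s => smoothFluxDeriv η A B F s x :=
    (hF.continuous_smoothFluxDeriv hc hη).comp (continuous_id.prodMk continuous_const)
  refine ((hcont.integral_hasStrictDerivAt 0 t).hasDerivAt.const_add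
    (smoothCdf η F 0 x)).congr_of_eventuallyEq ?_
  filter_upwards [lt_mem_nhds ht] with u hu
  rw [← hF.smoothCdf_sub_smoothCdf hc hη le_rfl hu.le, add_sub_cancel]

end IsCdfSolution

/-! ### Entropy dissipation -/

/-- An entropy `θ` of class `C²`, vanishing to second order at `0`, with `0 ≤ θ'' ≤ L`. -/
structure IsSmoothEntropy (θ : ℝ → ℝ) (L : ℝ) : Prop where
  contDiff : ContDiff ℝ 2 θ
  zero : θ 0 = 0
  deriv_zero : deriv θ 0 = 0
  deriv_deriv_nonneg : ∀ u, 0 ≤ deriv (deriv θ) u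
  deriv_deriv_le : ∀ u, deriv (deriv θ) u ≤ L

namespace IsSmoothEntropy

variable {θ : ℝ → ℝ} {L : ℝ}

theorem hasDerivAt (hθ : IsSmoothEntropy θ L) (u : ℝ) : HasDerivAt θ (deriv θ u) u :=
  (hθ.contDiff.differentiable two_ne_zero u).hasDerivAt

theorem contDiff_deriv (hθ : IsSmoothEntropy θ L) : ContDiff ℝ 1 (deriv θ) :=
  (contDiff_succ_iff_deriv.1 (one_add_one_eq_two (R := WithTop ℕ∞) ▸ hθ.contDiff)).2.2

theorem hasDerivAt_deriv (hθ : IsSmoothEntropy θ L) (u : ℝ) :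
    HasDerivAt (deriv θ) (deriv (deriv θ) u) u :=
  (hθ.contDiff_deriv.differentiable one_ne_zero u).hasDerivAt

theorem continuous (hθ : IsSmoothEntropy θ L) : Continuous θ := hθ.contDiff.continuous

theorem continuous_deriv (hθ : IsSmoothEntropy θ L) : Continuous (deriv θ) :=
  hθ.contDiff_deriv.continuous

theorem continuous_deriv_deriv (hθ : IsSmoothEntropy θ L) : Continuous (deriv (deriv θ)) :=
  hθ.contDiff_deriv.continuous_deriv le_rfl

theorem bound_nonneg (hθ : IsSmoothEntropy θ L) : 0 ≤ L :=
  (hθ.deriv_deriv_nonneg 0).trans (hθ.deriv_deriv_le 0)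

theorem abs_deriv_le (hθ : IsSmoothEntropy θ L) (u : ℝ) : |deriv θ u| ≤ L * |u| := by
  have hlip := convex_univ.norm_image_sub_le_of_norm_hasDerivWithin_le (C := L)
    (fun v _ => (hθ.hasDerivAt_deriv v).hasDerivWithinAt)
    (fun v _ => (Real.norm_of_nonneg (hθ.deriv_deriv_nonneg v)).trans_le (hθ.deriv_deriv_le v))
    (mem_univ 0) (mem_univ u)
  simpa only [hθ.deriv_zero, sub_zero, Real.norm_eq_abs] using hlip

theorem abs_le (hθ : IsSmoothEntropy θ L) {u : ℝ} (hu : |u| ≤ 1) : |θ u| ≤ L * |u| := by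
  have hlip := (convex_Icc (-1 : ℝ) 1).norm_image_sub_le_of_norm_hasDerivWithin_le (C := L)
    (fun v _ => (hθ.hasDerivAt v).hasDerivWithinAt)
    (fun v hv => (hθ.abs_deriv_le v).trans
      (mul_le_of_le_one_right hθ.bound_nonneg (_root_.abs_le.2 hv)))
    ⟨neg_one_lt_zero.le, zero_le_one⟩ (_root_.abs_le.1 hu)
  simpa only [hθ.zero, sub_zero, Real.norm_eq_abs] using hlip

end IsSmoothEntropy

namespace IsCdfSolution

variable {A B η : ℝ → ℝ} {δ : ℝ} {F : ℝ → ℝ → ℝ}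

theorem abs_smoothCdf_sub_heaviside_le (hF : IsCdfSolution A B F) (hη : IsMollifier η δ)
    (t x : ℝ) : |smoothCdf η F t x - heaviside x| ≤
      |spaceTranslate F δ t x - heaviside x| + |spaceTranslate F (-δ) t x - heaviside x| := by
  have hle := hF.smoothCdf_le hη t x
  have hge := hF.le_smoothCdf hη t x
  rw [spaceTranslate, spaceTranslate, ← sub_eq_add_neg]
  grind

theorem integrable_smoothCdf_sub_heaviside (hF : IsCdfSolution A B F) (hη : IsMollifier η δ)
    (t : ℝ) : Integrable fun x => smoothCdf η F t x - heaviside x :=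
  (((hF.spaceTranslate δ).integrable_sub_heaviside t).abs.add
    ((hF.spaceTranslate (-δ)).integrable_sub_heaviside t).abs).mono'
    ((continuous_slice (hF.continuous_smoothCdf hη) t).measurable.sub
      measurable_heaviside).aestronglyMeasurable
    (Eventually.of_forall fun x => hF.abs_smoothCdf_sub_heaviside_le hη t x)

theorem integrable_prod_smoothCdf_sub_heaviside (hF : IsCdfSolution A B F)
    (hη : IsMollifier η δ) {t₁ t₂ : ℝ} (h₁ : 0 ≤ t₁) :
    Integrable (fun q : ℝ × ℝ => smoothCdf η F q.1 q.2 - heaviside q.2)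
      ((volume.restrict (Ioc t₁ t₂)).prod volume) :=
  (((hF.spaceTranslate δ).integrable_prod_sub_heaviside t₁ t₂ h₁).abs.add
    ((hF.spaceTranslate (-δ)).integrable_prod_sub_heaviside t₁ t₂ h₁).abs).mono'
    ((hF.continuous_smoothCdf hη).measurable.sub
      (measurable_heaviside.comp measurable_snd)).aestronglyMeasurable
    (Eventually.of_forall fun q => hF.abs_smoothCdf_sub_heaviside_le hη q.1 q.2)

end IsCdfSolution

/-- The difference of the mollifications of two solutions. -/
def smoothGap (η : ℝ → ℝ) (F G : ℝ → ℝ → ℝ) (t x : ℝ) : ℝ := smoothCdf η F t x - smoothCdf η G t x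

/-- The integrand of the dissipation of the entropy `∫ θ(η ∗ F - η ∗ G) dx`. -/
def dissipation (θ η A B : ℝ → ℝ) (F G : ℝ → ℝ → ℝ) (t x : ℝ) : ℝ :=
  -(deriv (deriv θ) (smoothGap η F G t x) * (smoothDensity η F t x - smoothDensity η G t x) *
    (smoothFlux η A B F t x - smoothFlux η A B G t x))

namespace IsCdfSolution

variable {a A B η θ : ℝ → ℝ} {Ca Cb δ L : ℝ} {F G : ℝ → ℝ → ℝ}

theorem continuous_smoothGap (hF : IsCdfSolution A B F) (hG : IsCdfSolution A B G)
    (hη : IsMollifier η δ) : Continuous (uncurry (smoothGap η F G)) :=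
  (hF.continuous_smoothCdf hη).sub (hG.continuous_smoothCdf hη)

theorem integrable_smoothGap (hF : IsCdfSolution A B F) (hG : IsCdfSolution A B G)
    (hη : IsMollifier η δ) (t : ℝ) : Integrable (smoothGap η F G t) := by
  refine ((hF.integrable_smoothCdf_sub_heaviside hη t).sub
    (hG.integrable_smoothCdf_sub_heaviside hη t)).congr (Eventually.of_forall fun x => ?_)
  simp only [Pi.sub_apply, smoothGap, sub_sub_sub_cancel_right]

theorem integrable_prod_smoothGap (hF : IsCdfSolution A B F) (hG : IsCdfSolution A B G)
    (hη : IsMollifier η δ) {t₁ t₂ : ℝ} (h₁ : 0 ≤ t₁) :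
    Integrable (uncurry (smoothGap η F G)) ((volume.restrict (Ioc t₁ t₂)).prod volume) := by
  refine ((hF.integrable_prod_smoothCdf_sub_heaviside hη h₁).sub
    (hG.integrable_prod_smoothCdf_sub_heaviside hη h₁)).congr (Eventually.of_forall fun q => ?_)
  simp only [Pi.sub_apply, uncurry_def, smoothGap, sub_sub_sub_cancel_right]

theorem abs_smoothGap_le_one (hF : IsCdfSolution A B F) (hG : IsCdfSolution A B G)
    (hη : IsMollifier η δ) (t x : ℝ) : |smoothGap η F G t x| ≤ 1 := by
  rw [smoothGap, abs_le]
  constructor <;> linarith [hF.smoothCdf_nonneg hη t x, hG.smoothCdf_nonneg hη t x,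
    hF.smoothCdf_le_one hη t x, hG.smoothCdf_le_one hη t x]

theorem hasDerivAt_smoothGap (hF : IsCdfSolution A B F) (hG : IsCdfSolution A B G)
    (hη : IsMollifier η δ) (t x : ℝ) : HasDerivAt (smoothGap η F G t)
      (smoothDensity η F t x - smoothDensity η G t x) x :=
  (hF.hasDerivAt_smoothCdf hη t x).sub (hG.hasDerivAt_smoothCdf hη t x)

theorem hasDerivAt_smoothGap_time (hF : IsCdfSolution A B F) (hG : IsCdfSolution A B G)
    (hc : RegularCoefficients a A B Ca Cb) (hη : IsMollifier η δ) {t : ℝ} (ht : 0 < t) (x : ℝ) :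
    HasDerivAt (fun s => smoothGap η F G s x)
      (smoothFluxDeriv η A B F t x - smoothFluxDeriv η A B G t x) t :=
  (hF.hasDerivAt_smoothCdf_time hc hη ht x).sub (hG.hasDerivAt_smoothCdf_time hc hη ht x)

theorem integrable_comp_smoothGap (hF : IsCdfSolution A B F) (hG : IsCdfSolution A B G)
    (hη : IsMollifier η δ) (hθ : IsSmoothEntropy θ L) (t : ℝ) :
    Integrable fun x => θ (smoothGap η F G t x) :=
  ((hF.integrable_smoothGap hG hη t).abs.const_mul L).mono'
    (hθ.continuous.comp (continuous_slice (hF.continuous_smoothGap hG hη) t)).aestronglyMeasurable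
    (Eventually.of_forall fun x => hθ.abs_le (hF.abs_smoothGap_le_one hG hη t x))

theorem continuous_dissipation (hF : IsCdfSolution A B F) (hG : IsCdfSolution A B G)
    (hc : RegularCoefficients a A B Ca Cb) (hη : IsMollifier η δ) (hθ : IsSmoothEntropy θ L) :
    Continuous (uncurry (dissipation θ η A B F G)) :=
  (((hθ.continuous_deriv_deriv.comp (hF.continuous_smoothGap hG hη)).mul
    ((hF.continuous_smoothDensity hη).sub (hG.continuous_smoothDensity hη))).mul
      ((hF.continuous_smoothFlux hc hη).sub (hG.continuous_smoothFlux hc hη))).neg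

theorem abs_smoothFlux_sub_le (hF : IsCdfSolution A B F) (hG : IsCdfSolution A B G)
    (hc : RegularCoefficients a A B Ca Cb) (hη : IsMollifier η δ) (t x : ℝ) :
    |smoothFlux η A B F t x - smoothFlux η A B G t x| ≤ Ca * (∫ y, |deriv η y|) + 2 * Cb := by
  have hsub := (abs_sub _ _).trans
    (add_le_add (hF.abs_smoothFlux_le hc hη t x) (hG.abs_smoothFlux_le hc hη t x))
  linarith

theorem abs_dissipation_le (hF : IsCdfSolution A B F) (hG : IsCdfSolution A B G)
    (hc : RegularCoefficients a A B Ca Cb) (hη : IsMollifier η δ) (hθ : IsSmoothEntropy θ L)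
    (t x : ℝ) : |dissipation θ η A B F G t x| ≤ L * (Ca * (∫ y, |deriv η y|) + 2 * Cb) *
      (smoothDensity η F t x + smoothDensity η G t x) := by
  have hθ2 : |deriv (deriv θ) (smoothGap η F G t x)| ≤ L :=
    (abs_of_nonneg (hθ.deriv_deriv_nonneg _)).trans_le (hθ.deriv_deriv_le _)
  have hp := hF.smoothDensity_nonneg hη t x
  have hq := hG.smoothDensity_nonneg hη t x
  have hpq : |smoothDensity η F t x - smoothDensity η G t x|
      ≤ smoothDensity η F t x + smoothDensity η G t x := by
    rw [abs_le]
    constructor <;> linarith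
  rw [dissipation, abs_neg, abs_mul, abs_mul, mul_right_comm L]
  exact mul_le_mul (mul_le_mul hθ2 hpq (abs_nonneg _) hθ.bound_nonneg)
    (hF.abs_smoothFlux_sub_le hG hc hη t x) (abs_nonneg _)
    (mul_nonneg hθ.bound_nonneg (add_nonneg hp hq))

theorem integrable_dissipation (hF : IsCdfSolution A B F) (hG : IsCdfSolution A B G)
    (hc : RegularCoefficients a A B Ca Cb) (hη : IsMollifier η δ) (hθ : IsSmoothEntropy θ L)
    (t : ℝ) : Integrable (dissipation θ η A B F G t) :=
  (((hF.integrable_smoothDensity hη t).add (hG.integrable_smoothDensity hη t)).const_mul _).mono'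
    (continuous_slice (hF.continuous_dissipation hG hc hη hθ) t).aestronglyMeasurable
    (Eventually.of_forall (hF.abs_dissipation_le hG hc hη hθ t))

theorem exists_abs_smoothFluxDeriv_sub_le (hF : IsCdfSolution A B F) (hG : IsCdfSolution A B G)
    (hc : RegularCoefficients a A B Ca Cb) (hη : IsMollifier η δ) :
    ∃ K, ∀ t x, |smoothFluxDeriv η A B F t x - smoothFluxDeriv η A B G t x| ≤ K :=
  ⟨_, fun t x => (abs_sub _ _).trans
    (add_le_add (hF.abs_smoothFluxDeriv_le hc hη t x) (hG.abs_smoothFluxDeriv_le hc hη t x))⟩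

theorem abs_deriv_smoothGap_mul_le (hθ : IsSmoothEntropy θ L) {t x v K : ℝ} (hv : |v| ≤ K) :
    |deriv θ (smoothGap η F G t x) * v| ≤ L * K * |smoothGap η F G t x| := by
  rw [abs_mul, mul_right_comm]
  exact mul_le_mul (hθ.abs_deriv_le _) hv (abs_nonneg _)
    (mul_nonneg hθ.bound_nonneg (abs_nonneg _))

theorem integrable_deriv_smoothGap_mul (hF : IsCdfSolution A B F) (hG : IsCdfSolution A B G)
    (hη : IsMollifier η δ) (hθ : IsSmoothEntropy θ L) (t : ℝ) {v : ℝ → ℝ} (hv : Continuous v)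
    {K : ℝ} (hK : ∀ x, |v x| ≤ K) : Integrable fun x => deriv θ (smoothGap η F G t x) * v x :=
  ((hF.integrable_smoothGap hG hη t).abs.const_mul (L * K)).mono'
    ((hθ.continuous_deriv.comp (continuous_slice (hF.continuous_smoothGap hG hη) t)).mul
      hv).aestronglyMeasurable
    (Eventually.of_forall fun x => abs_deriv_smoothGap_mul_le hθ (hK x))

theorem integral_deriv_smoothGap_mul_smoothFluxDeriv (hF : IsCdfSolution A B F)
    (hG : IsCdfSolution A B G) (hc : RegularCoefficients a A B Ca Cb) (hη : IsMollifier η δ)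
    (hθ : IsSmoothEntropy θ L) (t : ℝ) :
    ∫ x, deriv θ (smoothGap η F G t x) *
        (smoothFluxDeriv η A B F t x - smoothFluxDeriv η A B G t x)
      = ∫ x, dissipation θ η A B F G t x := by
  obtain ⟨K, hK⟩ := hF.exists_abs_smoothFluxDeriv_sub_le hG hc hη
  have hparts := integral_mul_deriv_eq_deriv_mul_of_integrable
    (u := fun x => deriv θ (smoothGap η F G t x))
    (v := fun x => smoothFlux η A B F t x - smoothFlux η A B G t x)
    (fun x _ => (hθ.hasDerivAt_deriv _).comp x (hF.hasDerivAt_smoothGap hG hη t x))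
    (fun x _ => (hF.hasDerivAt_smoothFlux hc hη t x).sub (hG.hasDerivAt_smoothFlux hc hη t x))
    (hF.integrable_deriv_smoothGap_mul hG hη hθ t
      ((continuous_slice (hF.continuous_smoothFluxDeriv hc hη) t).sub
        (continuous_slice (hG.continuous_smoothFluxDeriv hc hη) t)) (hK t))
    ((hF.integrable_dissipation hG hc hη hθ t).neg.congr
      (Eventually.of_forall fun x => neg_neg _))
    (hF.integrable_deriv_smoothGap_mul hG hη hθ t
      ((continuous_slice (hF.continuous_smoothFlux hc hη) t).sub
        (continuous_slice (hG.continuous_smoothFlux hc hη) t))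
      (hF.abs_smoothFlux_sub_le hG hc hη t))
  rw [hparts, ← integral_neg]
  rfl

theorem integral_comp_smoothGap_sub (hF : IsCdfSolution A B F) (hG : IsCdfSolution A B G)
    (hc : RegularCoefficients a A B Ca Cb) (hη : IsMollifier η δ) (hθ : IsSmoothEntropy θ L)
    {t₁ t₂ : ℝ} (h₁ : 0 ≤ t₁) (h₂ : t₁ ≤ t₂) :
    (∫ x, θ (smoothGap η F G t₂ x)) - ∫ x, θ (smoothGap η F G t₁ x)
      = ∫ s in t₁..t₂, ∫ x, dissipation θ η A B F G s x := by
  obtain ⟨K, hK⟩ := hF.exists_abs_smoothFluxDeriv_sub_le hG hc hη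
  have hgap := hF.continuous_smoothGap hG hη
  have hcont : Continuous fun q : ℝ × ℝ => deriv θ (smoothGap η F G q.1 q.2) *
      (smoothFluxDeriv η A B F q.1 q.2 - smoothFluxDeriv η A B G q.1 q.2) :=
    (hθ.continuous_deriv.comp hgap).mul
      ((hF.continuous_smoothFluxDeriv hc hη).sub (hG.continuous_smoothFluxDeriv hc hη))
  have hftc : ∀ x, θ (smoothGap η F G t₂ x) - θ (smoothGap η F G t₁ x) = ∫ s in t₁..t₂,
      deriv θ (smoothGap η F G s x) *
        (smoothFluxDeriv η A B F s x - smoothFluxDeriv η A B G s x) := fun x => by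
    have hline : Continuous fun s : ℝ => (s, x) := continuous_id.prodMk continuous_const
    exact (intervalIntegral.integral_eq_sub_of_hasDerivAt_of_le h₂
      (f := fun s => θ (smoothGap η F G s x))
      (hθ.continuous.comp (hgap.comp hline)).continuousOn
      (fun s hs => (hθ.hasDerivAt _).comp s
        (hF.hasDerivAt_smoothGap_time hG hc hη (h₁.trans_lt hs.1) x))
      ((hcont.comp hline).intervalIntegrable _ _)).symm
  have hint : Integrable (fun q : ℝ × ℝ => deriv θ (smoothGap η F G q.1 q.2) *
      (smoothFluxDeriv η A B F q.1 q.2 - smoothFluxDeriv η A B G q.1 q.2))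
      ((volume.restrict (Ioc t₁ t₂)).prod volume) :=
    ((hF.integrable_prod_smoothGap hG hη h₁).abs.const_mul (L * K)).mono'
      hcont.aestronglyMeasurable
      (Eventually.of_forall fun q => abs_deriv_smoothGap_mul_le hθ (hK q.1 q.2))
  rw [← integral_sub (hF.integrable_comp_smoothGap hG hη hθ t₂)
    (hF.integrable_comp_smoothGap hG hη hθ t₁)]
  simp only [hftc, intervalIntegral.integral_of_le h₂]
  rw [← integral_integral_swap hint]
  simp only [hF.integral_deriv_smoothGap_mul_smoothFluxDeriv hG hc hη hθ]

end IsCdfSolution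

/-! ### Averaging over space shifts -/

theorem integrable_comp_add_prod {f : ℝ → ℝ} (hf : Integrable f) (μ : Measure ℝ)
    [IsFiniteMeasure μ] : Integrable (fun q : ℝ × ℝ => f (q.2 + q.1)) (μ.prod volume) := by
  simp only [add_comm]
  exact (measurePreserving_prod_add μ volume).integrable_comp_of_integrable (hf.comp_snd μ)

theorem integral_comp_add_prod {f : ℝ → ℝ} (hf : Integrable f) (μ : Measure ℝ)
    [IsFiniteMeasure μ] :
    ∫ q : ℝ × ℝ, f (q.2 + q.1) ∂(μ.prod volume) = μ.real univ * ∫ x, f x := by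
  rw [integral_prod _ (integrable_comp_add_prod hf μ)]
  simp only [integral_add_right_eq_self, integral_const, smul_eq_mul]

/-- The dissipation of the entropy between `F` and the translate of `G` by `r`, at time `s`. -/
def totalDissipation (θ η A B : ℝ → ℝ) (F G : ℝ → ℝ → ℝ) (r s : ℝ) : ℝ :=
  ∫ x, dissipation θ η A B F (spaceTranslate G r) s x

/-- The product of the smooth densities of `F` and of the translate of `G` by `r`, weighted by `ϑ`
of the gap between them, as a function of the pair `(r, x)`. -/
def weightedOverlap (ϑ η : ℝ → ℝ) (F G : ℝ → ℝ → ℝ) (s : ℝ) (q : ℝ × ℝ) : ℝ :=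
  ϑ (smoothGap η F (spaceTranslate G q.1) s q.2) * smoothDensity η F s q.2 *
    smoothDensity η (spaceTranslate G q.1) s q.2

namespace IsCdfSolution

variable {a A B η θ : ℝ → ℝ} {Ca Cb δ L : ℝ} {F G : ℝ → ℝ → ℝ}

section Averaging

theorem continuous_dissipation_spaceTranslate (hF : IsCdfSolution A B F)
    (hG : IsCdfSolution A B G) (hc : RegularCoefficients a A B Ca Cb) (hη : IsMollifier η δ)
    (hθ : IsSmoothEntropy θ L) : Continuous fun q : (ℝ × ℝ) × ℝ =>
      dissipation θ η A B F (spaceTranslate G q.1.1) q.1.2 q.2 := by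
  simp only [dissipation, smoothGap, smoothCdf_spaceTranslate, smoothDensity_spaceTranslate,
    smoothFlux_spaceTranslate]
  have hx : Continuous fun q : (ℝ × ℝ) × ℝ => (q.1.2, q.2) := by fun_prop
  have hxr : Continuous fun q : (ℝ × ℝ) × ℝ => (q.1.2, q.2 + q.1.1) := by fun_prop
  exact (((hθ.continuous_deriv_deriv.comp
    (((hF.continuous_smoothCdf hη).comp hx).sub ((hG.continuous_smoothCdf hη).comp hxr))).mul
    (((hF.continuous_smoothDensity hη).comp hx).sub
      ((hG.continuous_smoothDensity hη).comp hxr))).mul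
    (((hF.continuous_smoothFlux hc hη).comp hx).sub
      ((hG.continuous_smoothFlux hc hη).comp hxr))).neg

theorem stronglyMeasurable_totalDissipation (hF : IsCdfSolution A B F) (hG : IsCdfSolution A B G)
    (hc : RegularCoefficients a A B Ca Cb) (hη : IsMollifier η δ) (hθ : IsSmoothEntropy θ L) :
    StronglyMeasurable (uncurry (totalDissipation θ η A B F G)) :=
  (hF.continuous_dissipation_spaceTranslate hG hc hη
    hθ).stronglyMeasurable.integral_prod_right'

theorem exists_abs_totalDissipation_le (hF : IsCdfSolution A B F) (hG : IsCdfSolution A B G)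
    (hc : RegularCoefficients a A B Ca Cb) (hη : IsMollifier η δ) (hθ : IsSmoothEntropy θ L) :
    ∃ K, ∀ r s, |totalDissipation θ η A B F G r s| ≤ K := by
  refine ⟨L * (Ca * (∫ y, |deriv η y|) + 2 * Cb) * (1 + 1), fun r s => ?_⟩
  have hGr := hG.spaceTranslate r
  have hle := norm_integral_le_of_norm_le
    (f := dissipation θ η A B F (spaceTranslate G r) s)
    (((hF.integrable_smoothDensity hη s).add (hGr.integrable_smoothDensity hη s)).const_mul _)
    (Eventually.of_forall (hF.abs_dissipation_le hGr hc hη hθ s))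
  rwa [integral_const_mul, integral_add' (hF.integrable_smoothDensity hη s)
    (hGr.integrable_smoothDensity hη s), hF.integral_smoothDensity hη,
    hGr.integral_smoothDensity hη] at hle

theorem integrable_totalDissipation (hF : IsCdfSolution A B F) (hG : IsCdfSolution A B G)
    (hc : RegularCoefficients a A B Ca Cb) (hη : IsMollifier η δ) (hθ : IsSmoothEntropy θ L)
    (μ ν : Measure ℝ) [IsFiniteMeasure μ] [IsFiniteMeasure ν] :
    Integrable (uncurry (totalDissipation θ η A B F G)) (μ.prod ν) := by
  obtain ⟨K, hK⟩ := hF.exists_abs_totalDissipation_le hG hc hη hθ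
  exact (integrable_const K).mono'
    (hF.stronglyMeasurable_totalDissipation hG hc hη hθ).aestronglyMeasurable
    (Eventually.of_forall fun q => hK q.1 q.2)

theorem integral_comp_smoothGap_spaceTranslate_sub (hF : IsCdfSolution A B F)
    (hG : IsCdfSolution A B G) (hc : RegularCoefficients a A B Ca Cb) (hη : IsMollifier η δ)
    (hθ : IsSmoothEntropy θ L) {t₁ t₂ : ℝ} (h₁ : 0 ≤ t₁) (h₂ : t₁ ≤ t₂) (r₀ r₁ : ℝ) :
    ∫ r in Ioc r₀ r₁, ((∫ x, θ (smoothGap η F (spaceTranslate G r) t₂ x))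
        - ∫ x, θ (smoothGap η F (spaceTranslate G r) t₁ x))
      = ∫ s in Ioc t₁ t₂, ∫ r in Ioc r₀ r₁, totalDissipation θ η A B F G r s := by
  rw [← integral_integral_swap (hF.integrable_totalDissipation hG hc hη hθ _ _)]
  refine integral_congr_ae (Eventually.of_forall fun r => ?_)
  simp only
  rw [hF.integral_comp_smoothGap_sub (hG.spaceTranslate r) hc hη hθ h₁ h₂,
    intervalIntegral.integral_of_le h₂]
  rfl

end Averaging

section Overlap

variable {Θ ϑ : ℝ → ℝ} {M : ℝ}

theorem integral_comp_sub_mul_smoothDensity (hG : IsCdfSolution A B G) (hη : IsMollifier η δ)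
    (hΘ : ∀ u, HasDerivAt Θ (ϑ u) u) (hϑ : Continuous ϑ) (s x c r₀ r₁ : ℝ) :
    ∫ r in r₀..r₁, ϑ (c - smoothCdf η G s (x + r)) * smoothDensity η G s (x + r)
      = Θ (c - smoothCdf η G s (x + r₀)) - Θ (c - smoothCdf η G s (x + r₁)) := by
  have hderiv : ∀ r, HasDerivAt (fun r => -Θ (c - smoothCdf η G s (x + r)))
      (ϑ (c - smoothCdf η G s (x + r)) * smoothDensity η G s (x + r)) r := fun r => by
    have hcdf := (hG.hasDerivAt_smoothCdf hη s (x + r)).comp_const_add x r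
    exact ((hΘ _).comp r (hcdf.const_sub c)).neg.congr_deriv (by rw [mul_neg, neg_neg])
  have hline : Continuous fun r : ℝ => (s, x + r) := by fun_prop
  rw [intervalIntegral.integral_eq_sub_of_hasDerivAt (fun r _ => hderiv r)
    (((hϑ.comp (continuous_const.sub ((hG.continuous_smoothCdf hη).comp hline))).mul
      ((hG.continuous_smoothDensity hη).comp hline)).intervalIntegrable _ _), neg_sub_neg]

theorem integrable_weightedOverlap (hF : IsCdfSolution A B F) (hG : IsCdfSolution A B G)
    (hη : IsMollifier η δ) (hϑ : Continuous ϑ) {K : ℝ} (hK : ∀ u, |ϑ u| ≤ K) (s : ℝ)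
    (μ : Measure ℝ) [IsFiniteMeasure μ] :
    Integrable (weightedOverlap ϑ η F G s) (μ.prod volume) := by
  have hK0 : 0 ≤ K := (abs_nonneg _).trans (hK 0)
  refine (((hF.integrable_smoothDensity hη s).comp_snd μ).const_mul
    (K * ∫ y, |deriv η y|)).mono' ?_ (Eventually.of_forall fun q => ?_)
  · unfold weightedOverlap
    simp only [smoothGap, smoothCdf_spaceTranslate, smoothDensity_spaceTranslate]
    have hx : Continuous fun q : ℝ × ℝ => (s, q.2) := by fun_prop
    have hxr : Continuous fun q : ℝ × ℝ => (s, q.2 + q.1) := by fun_prop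
    exact (((hϑ.comp (((hF.continuous_smoothCdf hη).comp hx).sub
      ((hG.continuous_smoothCdf hη).comp hxr))).mul ((hF.continuous_smoothDensity hη).comp hx)).mul
      ((hG.continuous_smoothDensity hη).comp hxr)).aestronglyMeasurable
  · have hp := hF.smoothDensity_nonneg hη s q.2
    have hq := (hG.spaceTranslate q.1).smoothDensity_nonneg hη s q.2
    rw [weightedOverlap, Real.norm_eq_abs, abs_mul, abs_mul, abs_of_nonneg hp, abs_of_nonneg hq,
      mul_right_comm K]
    exact mul_le_mul (mul_le_mul_of_nonneg_right (hK _) hp)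
      ((hG.spaceTranslate q.1).smoothDensity_le hη s q.2) hq (mul_nonneg hK0 hp)

/-- The `r`-integral telescopes because `∂ᵣ Θ(u - v(x + r)) = -ϑ(u - v(x + r)) v'(x + r)`. -/
theorem integral_weightedOverlap_le (hF : IsCdfSolution A B F) (hG : IsCdfSolution A B G)
    (hη : IsMollifier η δ) (hΘ : ∀ u, HasDerivAt Θ (ϑ u) u) (hϑ : Continuous ϑ) {K : ℝ}
    (hK : ∀ u, |ϑ u| ≤ K) (hM : ∀ u v, |u| ≤ 1 → |v| ≤ 1 → Θ u - Θ v ≤ M) (s : ℝ) {r₀ r₁ : ℝ}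
    (hr : r₀ ≤ r₁) :
    ∫ q, weightedOverlap ϑ η F G s q ∂((volume.restrict (Ioc r₀ r₁)).prod volume) ≤ M := by
  have hint := hF.integrable_weightedOverlap hG hη hϑ hK s (volume.restrict (Ioc r₀ r₁))
  have hslice : ∀ x, ∫ r in Ioc r₀ r₁, weightedOverlap ϑ η F G s (r, x)
      ≤ smoothDensity η F s x * M := fun x => by
    have heq : ∀ r, weightedOverlap ϑ η F G s (r, x) = smoothDensity η F s x *
        (ϑ (smoothCdf η F s x - smoothCdf η G s (x + r)) * smoothDensity η G s (x + r)) :=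
      fun r => by
        simp only [weightedOverlap, smoothGap, smoothCdf_spaceTranslate,
          smoothDensity_spaceTranslate]
        ring
    simp only [heq]
    rw [integral_const_mul, ← intervalIntegral.integral_of_le hr,
      hG.integral_comp_sub_mul_smoothDensity hη hΘ hϑ]
    have hgap : ∀ r, |smoothCdf η F s x - smoothCdf η G s (x + r)| ≤ 1 := fun r =>
      smoothCdf_spaceTranslate (η := η) (F := G) r ▸
        hF.abs_smoothGap_le_one (hG.spaceTranslate r) hη s x
    exact mul_le_mul_of_nonneg_left (hM _ _ (hgap r₀) (hgap r₁)) (hF.smoothDensity_nonneg hη s x)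
  calc ∫ q, weightedOverlap ϑ η F G s q ∂((volume.restrict (Ioc r₀ r₁)).prod volume)
      = ∫ x, ∫ r in Ioc r₀ r₁, weightedOverlap ϑ η F G s (r, x) := integral_prod_symm _ hint
    _ ≤ ∫ x, smoothDensity η F s x * M := integral_mono hint.integral_prod_right
        ((hF.integrable_smoothDensity hη s).mul_const M) hslice
    _ = M := by rw [integral_mul_const, hF.integral_smoothDensity hη, one_mul]

end Overlap

section AveragedBound

variable {s r₀ r₁ : ℝ}

theorem integral_prod_smoothDensity (hF : IsCdfSolution A B F) (hη : IsMollifier η δ)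
    (hr : r₀ ≤ r₁) (s : ℝ) : ∫ q : ℝ × ℝ, smoothDensity η F s q.2
      ∂((volume.restrict (Ioc r₀ r₁)).prod volume) = r₁ - r₀ := by
  rw [integral_fun_snd, hF.integral_smoothDensity hη, measureReal_restrict_apply_univ,
    Real.volume_real_Ioc_of_le hr, smul_eq_mul, mul_one]

theorem integrable_prod_smoothDensity_spaceTranslate (hG : IsCdfSolution A B G)
    (hη : IsMollifier η δ) (s : ℝ) (μ : Measure ℝ) [IsFiniteMeasure μ] : Integrable
      (fun q : ℝ × ℝ => smoothDensity η (spaceTranslate G q.1) s q.2) (μ.prod volume) := by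
  simp only [smoothDensity_spaceTranslate]
  exact integrable_comp_add_prod (hG.integrable_smoothDensity hη s) μ

theorem integral_prod_smoothDensity_spaceTranslate (hG : IsCdfSolution A B G)
    (hη : IsMollifier η δ) (hr : r₀ ≤ r₁) (s : ℝ) :
    ∫ q : ℝ × ℝ, smoothDensity η (spaceTranslate G q.1) s q.2
      ∂((volume.restrict (Ioc r₀ r₁)).prod volume) = r₁ - r₀ := by
  simp only [smoothDensity_spaceTranslate]
  rw [integral_comp_add_prod (hG.integrable_smoothDensity hη s), hG.integral_smoothDensity hη,
    measureReal_restrict_apply_univ, Real.volume_real_Ioc_of_le hr, mul_one]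

theorem integrable_prod_dissipation (hF : IsCdfSolution A B F) (hG : IsCdfSolution A B G)
    (hc : RegularCoefficients a A B Ca Cb) (hη : IsMollifier η δ) (hθ : IsSmoothEntropy θ L)
    (s : ℝ) (μ : Measure ℝ) [IsFiniteMeasure μ] : Integrable
      (fun q : ℝ × ℝ => dissipation θ η A B F (spaceTranslate G q.1) s q.2) (μ.prod volume) := by
  have hcont : Continuous fun q : ℝ × ℝ => ((q.1, s), q.2) := by fun_prop
  exact ((((hF.integrable_smoothDensity hη s).comp_snd μ).add
    (hG.integrable_prod_smoothDensity_spaceTranslate hη s μ)).const_mul _).mono'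
    ((hF.continuous_dissipation_spaceTranslate hG hc hη hθ).comp hcont).aestronglyMeasurable
    (Eventually.of_forall fun q =>
      hF.abs_dissipation_le (hG.spaceTranslate q.1) hc hη hθ s q.2)

theorem integral_totalDissipation_le (hF : IsCdfSolution A B F) (hG : IsCdfSolution A B G)
    (hc : RegularCoefficients a A B Ca Cb) (hη : IsMollifier η δ) (hθ : IsSmoothEntropy θ L)
    (hr : r₀ ≤ r₁) {M e₁ e₂ e₃ : ℝ} {E : ℝ → ℝ} (he₁ : 0 ≤ e₁) (he₂ : 0 ≤ e₂)
    (hE : Integrable E) (hM : ∀ u v, |u| ≤ 1 → |v| ≤ 1 → deriv θ u - deriv θ v ≤ M)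
    (hle : ∀ q : ℝ × ℝ, dissipation θ η A B F (spaceTranslate G q.1) s q.2 ≤
      e₁ * weightedOverlap (deriv (deriv θ)) η F G s q
        + e₂ * weightedOverlap (fun _ => 1) η F G s q
        + e₃ * (smoothDensity η F s q.2 + smoothDensity η (spaceTranslate G q.1) s q.2)
        - E q.2) :
    ∫ r in Ioc r₀ r₁, totalDissipation θ η A B F G r s ≤
      e₁ * M + e₂ * 2 + e₃ * (2 * (r₁ - r₀)) - (r₁ - r₀) * ∫ x, E x := by
  set μ : Measure ℝ := volume.restrict (Ioc r₀ r₁) with hμ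
  have hθ2 : ∀ u, |deriv (deriv θ) u| ≤ L := fun u =>
    (abs_of_nonneg (hθ.deriv_deriv_nonneg u)).trans_le (hθ.deriv_deriv_le u)
  have hone : ∀ _ : ℝ, |(1 : ℝ)| ≤ 1 := fun _ => abs_one.le
  have hI₁ := hF.integrable_weightedOverlap hG hη hθ.continuous_deriv_deriv hθ2 s μ
  have hI₂ := hF.integrable_weightedOverlap hG hη continuous_const hone s μ
  have hp := (hF.integrable_smoothDensity hη s).comp_snd μ
  have hq := hG.integrable_prod_smoothDensity_spaceTranslate hη s μ
  have hE' := hE.comp_snd μ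
  have hsum := ((hI₁.const_mul e₁).add (hI₂.const_mul e₂)).add ((hp.add hq).const_mul e₃)
  have hD := hF.integrable_prod_dissipation hG hc hη hθ s μ
  have hmono := integral_mono hD (hsum.sub hE') hle
  rw [integral_prod _ hD, integral_sub' hsum hE',
    integral_add' ((hI₁.const_mul e₁).add (hI₂.const_mul e₂)) ((hp.add hq).const_mul e₃),
    integral_add' (hI₁.const_mul e₁) (hI₂.const_mul e₂),
    integral_const_mul, integral_const_mul, integral_const_mul, integral_add' hp hq,
    hF.integral_prod_smoothDensity hη hr, hG.integral_prod_smoothDensity_spaceTranslate hη hr,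
    integral_fun_snd, measureReal_restrict_apply_univ, Real.volume_real_Ioc_of_le hr,
    smul_eq_mul] at hmono
  have hO₁ := mul_le_mul_of_nonneg_left (hF.integral_weightedOverlap_le hG hη
    hθ.hasDerivAt_deriv hθ.continuous_deriv_deriv hθ2 hM s hr) he₁
  have hO₂ := mul_le_mul_of_nonneg_left (hF.integral_weightedOverlap_le hG hη
    (ϑ := fun _ => 1) (M := 2) hasDerivAt_id continuous_const hone
    (fun u v hu hv => by simp only [id]; linarith [(abs_le.1 hu).2, (abs_le.1 hv).1]) s hr) he₂
  simp only [totalDissipation]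
  linarith

end AveragedBound

end IsCdfSolution

/-! ### Energy estimate and absence of jumps -/

theorem deriv_sq_fun : deriv (fun u : ℝ => u ^ 2) = fun u => 2 * u :=
  funext fun u => by simp only [deriv_pow_field, Nat.cast_ofNat, Nat.add_one_sub_one, pow_one]

theorem deriv_deriv_sq_fun : deriv (deriv fun u : ℝ => u ^ 2) = fun _ => 2 :=
  funext fun u => by rw [deriv_sq_fun, deriv_const_mul_field, deriv_id'', mul_one]

theorem isSmoothEntropy_sq : IsSmoothEntropy (fun u => u ^ 2) 2 where
  contDiff := contDiff_id.pow 2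
  zero := zero_pow two_ne_zero
  deriv_zero := deriv_sq_fun ▸ mul_zero 2
  deriv_deriv_nonneg _ := deriv_deriv_sq_fun ▸ zero_le_two
  deriv_deriv_le _ := deriv_deriv_sq_fun ▸ le_rfl

theorem IsCdf.uniformContinuous {f : ℝ → ℝ} (hf : IsCdf f) (hcont : Continuous f) :
    UniformContinuous f := by
  have hclamp : LipschitzWith 1 (fun x : ℝ => max 0 (min x 1)) :=
    (LipschitzWith.id.min_const 1).const_max 0
  have hdiff : UniformContinuous fun x => f x - max 0 (min x 1) := by
    refine (hcont.sub hclamp.continuous).uniformContinuous_of_tendsto_cocompact (x := 0) ?_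
    rw [cocompact_eq_atBot_atTop, tendsto_sup]
    constructor
    · refine hf.tendsto_atBot.congr' ?_
      filter_upwards [eventually_le_atBot 0] with x hx
      rw [max_eq_left (min_le_of_left_le hx), sub_zero]
    · refine (sub_self (1 : ℝ) ▸ hf.tendsto_atTop.sub_const 1).congr' ?_
      filter_upwards [eventually_ge_atTop 1] with x hx
      rw [min_eq_right hx, max_eq_right zero_le_one]
  simpa only [sub_add_cancel] using hdiff.add hclamp.uniformContinuous

/-- The amount `∫ ∂ₓ(η ∗ F) ∂ₓ(η ∗ A(F)) dx` of energy dissipated by the mollified diffusion. -/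
def dissipatedEnergy (η A : ℝ → ℝ) (F : ℝ → ℝ → ℝ) (s : ℝ) : ℝ :=
  ∫ x, smoothDensity η F s x * smoothDiffusion η A F s x

theorem sq_dissipation_le {p q w z b₁ b₂ Ca Cb : ℝ} (hp : 0 ≤ p) (hq : 0 ≤ q) (hz : 0 ≤ z)
    (hwp : w ≤ Ca * p) (hzq : z ≤ Ca * q) (hb₁ : |b₁| ≤ Cb) (hb₂ : |b₂| ≤ Cb) :
    -(2 * (p - q) * ((1 / 2 * w - b₁) - (1 / 2 * z - b₂)))
      ≤ 2 * Ca * (p * q) + 4 * Cb * (p + q) - p * w := by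
  rw [abs_le] at hb₁ hb₂
  have hpz : p * z ≤ p * (Ca * q) := mul_le_mul_of_nonneg_left hzq hp
  have hqw : q * w ≤ q * (Ca * p) := mul_le_mul_of_nonneg_left hwp hq
  have hqz : 0 ≤ q * z := mul_nonneg hq hz
  have hpb : p * (b₁ - b₂) ≤ p * (2 * Cb) := mul_le_mul_of_nonneg_left (by linarith) hp
  have hqb : q * (b₂ - b₁) ≤ q * (2 * Cb) := mul_le_mul_of_nonneg_left (by linarith) hq
  linarith

namespace IsCdfSolution

variable {a A B η : ℝ → ℝ} {Ca Cb δ : ℝ} {F : ℝ → ℝ → ℝ}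

theorem dissipatedEnergy_integrand_le (hF : IsCdfSolution A B F)
    (hc : RegularCoefficients a A B Ca Cb) (hη : IsMollifier η δ) (s x : ℝ) :
    ‖smoothDensity η F s x * smoothDiffusion η A F s x‖
      ≤ (∫ y, |deriv η y|) * Ca * smoothDensity η F s x := by
  have hp := hF.smoothDensity_nonneg hη s x
  have hw := hF.smoothDiffusion_nonneg hc hη s x
  rw [Real.norm_of_nonneg (mul_nonneg hp hw), mul_assoc]
  exact mul_le_mul (hF.smoothDensity_le hη s x) (hF.smoothDiffusion_le hc hη s x) hw
    (integral_nonneg fun y => abs_nonneg _)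

theorem integrable_smoothDensity_mul_smoothDiffusion (hF : IsCdfSolution A B F)
    (hc : RegularCoefficients a A B Ca Cb) (hη : IsMollifier η δ) (s : ℝ) :
    Integrable fun x => smoothDensity η F s x * smoothDiffusion η A F s x :=
  ((hF.integrable_smoothDensity hη s).const_mul _).mono'
    ((continuous_slice (hF.continuous_smoothDensity hη) s).mul
      (continuous_slice (hF.continuous_smoothDiffusion hc hη) s)).aestronglyMeasurable
    (Eventually.of_forall (hF.dissipatedEnergy_integrand_le hc hη s))

theorem dissipatedEnergy_nonneg (hF : IsCdfSolution A B F)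
    (hc : RegularCoefficients a A B Ca Cb) (hη : IsMollifier η δ) (s : ℝ) :
    0 ≤ dissipatedEnergy η A F s :=
  integral_nonneg fun x =>
    mul_nonneg (hF.smoothDensity_nonneg hη s x) (hF.smoothDiffusion_nonneg hc hη s x)

theorem stronglyMeasurable_dissipatedEnergy (hF : IsCdfSolution A B F)
    (hc : RegularCoefficients a A B Ca Cb) (hη : IsMollifier η δ) :
    StronglyMeasurable (dissipatedEnergy η A F) :=
  ((hF.continuous_smoothDensity hη).mul
    (hF.continuous_smoothDiffusion hc hη)).stronglyMeasurable.integral_prod_right'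

theorem integrable_dissipatedEnergy (hF : IsCdfSolution A B F)
    (hc : RegularCoefficients a A B Ca Cb) (hη : IsMollifier η δ) (μ : Measure ℝ)
    [IsFiniteMeasure μ] : Integrable (dissipatedEnergy η A F) μ := by
  refine (integrable_const ((∫ y, |deriv η y|) * Ca)).mono'
    (hF.stronglyMeasurable_dissipatedEnergy hc hη).aestronglyMeasurable
    (Eventually.of_forall fun s => ?_)
  have hle := norm_integral_le_of_norm_le
    ((hF.integrable_smoothDensity hη s).const_mul ((∫ y, |deriv η y|) * Ca))
    (Eventually.of_forall (hF.dissipatedEnergy_integrand_le hc hη s))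
  rwa [integral_const_mul, hF.integral_smoothDensity hη, mul_one] at hle

theorem integral_sq_smoothGap_spaceTranslate_le (hF : IsCdfSolution A B F)
    (hη : IsMollifier η δ) (t : ℝ) {r : ℝ} (hr : 0 ≤ r) :
    ∫ x, smoothGap η F (spaceTranslate F r) t x ^ 2 ≤ r + 2 * δ := by
  have hFr := hF.spaceTranslate r
  have hshift := integrable_add_sub (hF.integrable_sub_heaviside t) (r + 2 * δ)
  rw [← integral_add_sub (hF.integrable_sub_heaviside t) (r + 2 * δ),
    ← integral_sub_right_eq_self (fun x => F t (x + (r + 2 * δ)) - F t x) δ]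
  refine integral_mono (hF.integrable_comp_smoothGap hFr hη isSmoothEntropy_sq t)
    (hshift.comp_sub_right δ) fun x => ?_
  have hupper := hF.smoothCdf_le hη t (x + r)
  have hlower := hF.le_smoothCdf hη t x
  have hmono := hη.monotone_mollify (hF.isCdf t).mono (le_add_of_nonneg_right hr : x ≤ x + r)
  have hgap := (abs_le.1 (hF.abs_smoothGap_le_one hFr hη t x)).1
  rw [smoothGap, smoothCdf_spaceTranslate] at hgap
  simp only [smoothGap, smoothCdf_spaceTranslate]
  rw [show x - δ + (r + 2 * δ) = x + r + δ by ring]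
  change smoothCdf η F t x ≤ smoothCdf η F t (x + r) at hmono
  nlinarith

theorem integral_totalDissipation_sq_le (hF : IsCdfSolution A B F)
    (hc : RegularCoefficients a A B Ca Cb) (hη : IsMollifier η δ) (s : ℝ) :
    ∫ r in Ioc (0 : ℝ) 1, totalDissipation (fun u => u ^ 2) η A B F F r s
      ≤ 4 * Ca + 8 * Cb - dissipatedEnergy η A F s := by
  have hbound := hF.integral_totalDissipation_le hF hc hη isSmoothEntropy_sq (s := s)
    (zero_le_one' ℝ) (M := 4) (e₁ := 0) (e₂ := 2 * Ca) (e₃ := 4 * Cb) le_rfl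
    (mul_nonneg zero_le_two hc.Ca_nonneg) (hF.integrable_smoothDensity_mul_smoothDiffusion hc hη s)
    (fun u v hu hv => by
      rw [deriv_sq_fun]
      linarith [(abs_le.1 hu).2, (abs_le.1 hv).1])
    (fun ⟨r, x⟩ => by
      have hFr := hF.spaceTranslate r
      simp only [dissipation, weightedOverlap, smoothFlux, deriv_deriv_sq_fun, zero_mul,
        zero_add, one_mul]
      exact sq_dissipation_le (hF.smoothDensity_nonneg hη s x) (hFr.smoothDensity_nonneg hη s x)
        (hFr.smoothDiffusion_nonneg hc hη s x) (hF.smoothDiffusion_le hc hη s x)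
        (hFr.smoothDiffusion_le hc hη s x) (hF.abs_smoothDrift_le hc hη s x)
        (hFr.abs_smoothDrift_le hc hη s x))
  rw [dissipatedEnergy]
  linarith

theorem integral_dissipatedEnergy_le (hF : IsCdfSolution A B F)
    (hc : RegularCoefficients a A B Ca Cb) (hη : IsMollifier η δ) (hδ : δ ≤ 1) {t₁ t₂ : ℝ}
    (h₁ : 0 ≤ t₁) (h₂ : t₁ ≤ t₂) :
    ∫ s in Ioc t₁ t₂, dissipatedEnergy η A F s ≤ 3 + (4 * Ca + 8 * Cb) * (t₂ - t₁) := by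
  have hidentity := hF.integral_comp_smoothGap_spaceTranslate_sub hF hc hη isSmoothEntropy_sq
    h₁ h₂ 0 1
  have hsq : ∀ t, ∀ r ∈ Ioc (0 : ℝ) 1,
      0 ≤ ∫ x, smoothGap η F (spaceTranslate F r) t x ^ 2 ∧
        ∫ x, smoothGap η F (spaceTranslate F r) t x ^ 2 ≤ 3 := fun t r hr =>
    ⟨integral_nonneg fun x => sq_nonneg _,
      (hF.integral_sq_smoothGap_spaceTranslate_le hη t hr.1.le).trans (by linarith [hr.2])⟩
  have hlower := norm_setIntegral_le_of_norm_le_const (μ := volume) (C := 3)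
    (f := fun r => (∫ x, smoothGap η F (spaceTranslate F r) t₂ x ^ 2)
      - ∫ x, smoothGap η F (spaceTranslate F r) t₁ x ^ 2) (measure_Ioc_lt_top (a := 0) (b := 1))
    fun r hr => abs_sub_le_of_nonneg_of_le (hsq t₂ r hr).1 (hsq t₂ r hr).2
      (hsq t₁ r hr).1 (hsq t₁ r hr).2
  have hupper := integral_mono
    (hF.integrable_totalDissipation hF hc hη isSmoothEntropy_sq (volume.restrict (Ioc 0 1))
      (volume.restrict (Ioc t₁ t₂))).integral_prod_right
    ((integrable_const (4 * Ca + 8 * Cb)).sub (hF.integrable_dissipatedEnergy hc hη _))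
    (hF.integral_totalDissipation_sq_le hc hη)
  rw [integral_sub' (integrable_const _) (hF.integrable_dissipatedEnergy hc hη _),
    setIntegral_const, Real.volume_real_Ioc_of_le h₂, smul_eq_mul] at hupper
  rw [hidentity, Real.norm_eq_abs, Real.volume_real_Ioc_of_le zero_le_one, sub_zero, mul_one]
    at hlower
  simp only [uncurry_apply_pair] at hupper
  linarith [(abs_le.1 hlower).1]

end IsCdfSolution

theorem IsCdf.exists_jump_of_not_continuous {f : ℝ → ℝ} (hf : IsCdf f) (hcont : ¬Continuous f) :
    ∃ x₀ l, 0 ≤ l ∧ l < f x₀ ∧ ∀ z < x₀, f z ≤ l := by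
  obtain ⟨x₀, hx₀⟩ : ∃ x₀, ¬ContinuousAt f x₀ := by
    simpa only [continuous_iff_continuousAt, not_forall] using hcont
  have hle : ∀ z < x₀, f z ≤ leftLim f x₀ := fun z hz => hf.mono.le_leftLim hz
  refine ⟨x₀, leftLim f x₀, (hf.nonneg _).trans (hle (x₀ - 1) (sub_one_lt x₀)),
    (hf.mono.leftLim_le le_rfl).lt_of_ne fun heq => hx₀ ?_, hle⟩
  exact continuousAt_iff_continuous_left'_right'.2
    ⟨hf.mono.continuousWithinAt_Iio_iff_leftLim_eq.2 heq,
      (hf.rightCont x₀).mono Ioi_subset_Ici_self⟩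

namespace IsCdfSolution

variable {a A B η : ℝ → ℝ} {Ca Cb δ : ℝ} {F : ℝ → ℝ → ℝ}

theorem mul_inv_le_dissipatedEnergy_of_jump (hF : IsCdfSolution A B F)
    (hc : RegularCoefficients a A B Ca Cb) (hη : IsMollifier η δ) {s x₀ l : ℝ}
    (hlt : l < F s x₀) (hl : ∀ z < x₀, F s z ≤ l) :
    (F s x₀ - l) * (A (F s x₀) - A l) * (2 * δ)⁻¹ ≤ dissipatedEnergy η A F s := by
  have hj : 0 ≤ F s x₀ - l := sub_nonneg.2 hlt.le
  have hjA : 0 ≤ A (F s x₀) - A l := sub_nonneg.2 (hc.monotone hlt.le)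
  have hp := hη.mul_le_mollify_deriv_of_jump (hF.isCdf s).mono hj
    fun z hz => by linarith [hl z hz]
  have hw := hη.mul_le_mollify_deriv_of_jump (hc.monotone.comp (hF.isCdf s).mono) hjA
    fun z hz => by
      simp only [comp_apply]
      linarith [hc.monotone (hl z hz)]
  calc (F s x₀ - l) * (A (F s x₀) - A l) * (2 * δ)⁻¹
      ≤ (F s x₀ - l) * (A (F s x₀) - A l) * ∫ y, η y ^ 2 :=
        mul_le_mul_of_nonneg_left hη.inv_two_mul_le_integral_sq (mul_nonneg hj hjA)
    _ = ∫ x, (F s x₀ - l) * η (x - x₀) * ((A (F s x₀) - A l) * η (x - x₀)) := by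
        rw [← integral_sub_right_eq_self (fun y => η y ^ 2) x₀, ← integral_const_mul]
        exact integral_congr_ae (Eventually.of_forall fun x => by ring)
    _ ≤ dissipatedEnergy η A F s := by
        have hη0 := fun x => hη.nonneg (x - x₀)
        exact integral_mono_of_nonneg
          (Eventually.of_forall fun x => mul_nonneg (mul_nonneg hj (hη0 x))
            (mul_nonneg hjA (hη0 x)))
          (hF.integrable_smoothDensity_mul_smoothDiffusion hc hη s)
          (Eventually.of_forall fun x => mul_le_mul (hp x) (hw x) (mul_nonneg hjA (hη0 x))
            (hF.smoothDensity_nonneg hη s x))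

theorem continuous_of_liminf_dissipatedEnergy_lt_top (hF : IsCdfSolution A B F)
    (hc : RegularCoefficients a A B Ca Cb) {η : ℕ → ℝ → ℝ}
    (hη : ∀ n : ℕ, IsMollifier (η n) (1 / (n + 1))) {s : ℝ}
    (hlim : liminf (fun n => ENNReal.ofReal (dissipatedEnergy (η n) A F s)) atTop < ⊤) :
    Continuous (F s) := by
  by_contra hcont
  obtain ⟨x₀, l, hl0, hlt, hl⟩ := (hF.isCdf s).exists_jump_of_not_continuous hcont
  have hAlt : A l < A (F s x₀) := hc.strictMonoOn ⟨hl0, hlt.le.trans ((hF.isCdf s).le_one x₀)⟩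
    ((hF.isCdf s).mem_Icc x₀) hlt
  have hinv : Tendsto (fun n : ℕ => (2 * (1 / ((n : ℝ) + 1)))⁻¹) atTop atTop := by
    simp only [mul_one_div, inv_div]
    exact (tendsto_atTop_add_const_right _ _ tendsto_natCast_atTop_atTop).atTop_div_const two_pos
  have htop : Tendsto (fun n => dissipatedEnergy (η n) A F s) atTop atTop :=
    tendsto_atTop_mono (fun n => hF.mul_inv_le_dissipatedEnergy_of_jump hc (hη n) hlt hl)
      (hinv.const_mul_atTop (mul_pos (sub_pos.2 hlt) (sub_pos.2 hAlt)))
  rw [(ENNReal.tendsto_ofReal_nhds_top.2 htop).liminf_eq] at hlim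
  exact lt_irrefl _ hlim

/-- A jump of `F s` would make the energies dissipated at scale `δ` blow up like `δ⁻¹`, by strict
monotonicity of `A`, whereas their time integrals stay bounded. -/
theorem ae_continuous (hF : IsCdfSolution A B F) (hc : RegularCoefficients a A B Ca Cb)
    {t₁ t₂ : ℝ} (h₁ : 0 ≤ t₁) (h₂ : t₁ ≤ t₂) :
    ∀ᵐ s ∂(volume.restrict (Ioc t₁ t₂)), Continuous (F s) := by
  choose η hη using fun n : ℕ => exists_isMollifier (δ := 1 / ((n : ℝ) + 1)) (by positivity)
  have hmeas : ∀ n, Measurable fun s => ENNReal.ofReal (dissipatedEnergy (η n) A F s) := fun n =>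
    (hF.stronglyMeasurable_dissipatedEnergy hc (hη n)).measurable.ennreal_ofReal
  have hbound : ∀ n, ∫⁻ s in Ioc t₁ t₂, ENNReal.ofReal (dissipatedEnergy (η n) A F s)
      ≤ ENNReal.ofReal (3 + (4 * Ca + 8 * Cb) * (t₂ - t₁)) := fun n => by
    rw [← ofReal_integral_eq_lintegral_ofReal (hF.integrable_dissipatedEnergy hc (hη n) _)
      (Eventually.of_forall (hF.dissipatedEnergy_nonneg hc (hη n)))]
    exact ENNReal.ofReal_le_ofReal (hF.integral_dissipatedEnergy_le hc (hη n)
      (div_le_one_of_le₀ (le_add_of_nonneg_left n.cast_nonneg) (by positivity)) h₁ h₂)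
  have hfatou : ∫⁻ s in Ioc t₁ t₂,
      liminf (fun n => ENNReal.ofReal (dissipatedEnergy (η n) A F s)) atTop
        ≤ ENNReal.ofReal (3 + (4 * Ca + 8 * Cb) * (t₂ - t₁)) :=
    (lintegral_liminf_le hmeas).trans
      ((liminf_le_liminf (Eventually.of_forall hbound)).trans_eq (liminf_const _))
  filter_upwards [ae_lt_top (Measurable.liminf hmeas)
    (ne_top_of_le_ne_top ENNReal.ofReal_ne_top hfatou)] with s hs
  exact hF.continuous_of_liminf_dissipatedEnergy_lt_top hc hη hs

end IsCdfSolution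

/-! ### Smooth approximations of the positive part -/

theorem IsSmoothEntropy.of_hasDerivAt {θ θ' θ'' : ℝ → ℝ} {L : ℝ}
    (hθ : ∀ u, HasDerivAt θ (θ' u) u) (hθ' : ∀ u, HasDerivAt θ' (θ'' u) u)
    (hcont : Continuous θ'') (hzero : θ 0 = 0) (hzero' : θ' 0 = 0) (hnonneg : ∀ u, 0 ≤ θ'' u)
    (hle : ∀ u, θ'' u ≤ L) : IsSmoothEntropy θ L := by
  have hderiv : deriv θ = θ' := funext fun u => (hθ u).deriv
  have hderiv2 : deriv θ' = θ'' := funext fun u => (hθ' u).deriv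
  have hθ'C1 : ContDiff ℝ 1 θ' :=
    contDiff_one_iff_deriv.2 ⟨fun u => (hθ' u).differentiableAt, hderiv2 ▸ hcont⟩
  refine ⟨?_, hzero, by rwa [hderiv], by rwa [hderiv, hderiv2], by rwa [hderiv, hderiv2]⟩
  rw [← one_add_one_eq_two, contDiff_succ_iff_deriv]
  exact ⟨fun u => (hθ u).differentiableAt, fun h => absurd h (by decide), hderiv ▸ hθ'C1⟩

/-- A smooth entropy approximating the positive part up to `c` on `[-1, 1]`, whose second
derivative concentrates at `0` so slowly that `|u| θ'' u ≤ c`. -/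
structure IsPosPartEntropy (θ : ℝ → ℝ) (L c : ℝ) : Prop extends IsSmoothEntropy θ L where
  abs_mul_deriv_deriv_le : ∀ u, |u| * deriv (deriv θ) u ≤ c
  deriv_nonneg : ∀ u, 0 ≤ deriv θ u
  deriv_le_one : ∀ u ≤ 1, deriv θ u ≤ 1
  abs_sub_posPart_le : ∀ u, |u| ≤ 1 → |θ u - max u 0| ≤ c

namespace IsPosPartEntropy

variable {θ : ℝ → ℝ} {L c : ℝ}

theorem monotone (hθ : IsPosPartEntropy θ L c) : Monotone θ :=
  monotone_of_hasDerivAt_nonneg hθ.hasDerivAt hθ.deriv_nonneg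

theorem abs_sub_le (hθ : IsPosPartEntropy θ L c) {u v : ℝ} (hu : |u| ≤ 1) (hv : |v| ≤ 1) :
    |θ u - θ v| ≤ |u - v| := by
  have hlip := (convex_Iic (1 : ℝ)).norm_image_sub_le_of_norm_hasDerivWithin_le (C := 1)
    (fun w _ => (hθ.hasDerivAt w).hasDerivWithinAt)
    (fun w hw => (Real.norm_of_nonneg (hθ.deriv_nonneg w)).trans_le (hθ.deriv_le_one w hw))
    (mem_Iic.2 (le_of_abs_le hv)) (mem_Iic.2 (le_of_abs_le hu))
  rwa [one_mul] at hlip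

theorem deriv_sub_deriv_le_one (hθ : IsPosPartEntropy θ L c) {u : ℝ} (hu : |u| ≤ 1) (v : ℝ) :
    deriv θ u - deriv θ v ≤ 1 :=
  (sub_le_self _ (hθ.deriv_nonneg v)).trans (hθ.deriv_le_one u (le_of_abs_le hu))

end IsPosPartEntropy

theorem hasDerivAt_max_zero_sq (s : ℝ) :
    HasDerivAt (fun s : ℝ => max s 0 ^ 2) (2 * max s 0) s := by
  have hne : ∀ y : ℝ, y ≠ 0 → HasDerivAt (fun s : ℝ => max s 0 ^ 2) (2 * max y 0) y := by
    intro y hy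
    rcases hy.lt_or_gt with hy | hy
    · refine ((hasDerivAt_const y (0 : ℝ)).congr_deriv ?_).congr_of_eventuallyEq ?_
      · rw [max_eq_right hy.le, mul_zero]
      · filter_upwards [Iio_mem_nhds hy] with z hz
        rw [max_eq_right (le_of_lt hz), zero_pow two_ne_zero]
    · refine ((hasDerivAt_pow 2 y).congr_deriv ?_).congr_of_eventuallyEq ?_
      · rw [max_eq_left hy.le, pow_one, Nat.cast_ofNat]
      · filter_upwards [Ioi_mem_nhds hy] with z hz
        rw [max_eq_left (le_of_lt hz)]
  rcases eq_or_ne s 0 with rfl | hs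
  · exact hasDerivAt_of_hasDerivAt_of_ne hne (by fun_prop) (by fun_prop)
  · exact hne s hs

/-- A ramp increasing from `0` at `0` to `1` at `1`, logarithmic on the scale `exp (-l / 2)`, so
that its slope at `s` is at most `2 / (l * s)`. -/
def logRamp (l s : ℝ) : ℝ := Real.log (1 + (Real.exp l - 1) * max s 0 ^ 2) / l

/-- The derivative of `logRamp l`. -/
def logRampSlope (l s : ℝ) : ℝ :=
  (Real.exp l - 1) * (2 * max s 0) / (1 + (Real.exp l - 1) * max s 0 ^ 2) / l

section LogRamp

variable {l : ℝ}

theorem one_add_exp_sub_one_mul_sq_pos (hl : 0 < l) (m : ℝ) :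
    0 < 1 + (Real.exp l - 1) * m ^ 2 :=
  add_pos_of_pos_of_nonneg one_pos
    (mul_nonneg (sub_nonneg.2 (Real.one_le_exp hl.le)) (sq_nonneg m))

theorem hasDerivAt_logRamp (hl : 0 < l) (s : ℝ) :
    HasDerivAt (logRamp l) (logRampSlope l s) s :=
  ((((hasDerivAt_max_zero_sq s).const_mul _).const_add 1).log
    (one_add_exp_sub_one_mul_sq_pos hl _).ne').div_const l

theorem continuous_logRamp (hl : 0 < l) : Continuous (logRamp l) :=
  continuous_iff_continuousAt.2 fun s => (hasDerivAt_logRamp hl s).continuousAt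

theorem continuous_logRampSlope (hl : 0 < l) : Continuous (logRampSlope l) :=
  ((by fun_prop : Continuous fun s : ℝ => (Real.exp l - 1) * (2 * max s 0)).div₀ (by fun_prop)
    fun s => (one_add_exp_sub_one_mul_sq_pos hl _).ne').div_const l

theorem logRamp_of_nonpos {s : ℝ} (hs : s ≤ 0) : logRamp l s = 0 := by
  rw [logRamp, max_eq_right hs, zero_pow two_ne_zero, mul_zero, add_zero, Real.log_one, zero_div]

theorem logRamp_nonneg (hl : 0 < l) (s : ℝ) : 0 ≤ logRamp l s :=
  div_nonneg (Real.log_nonneg (le_add_of_nonneg_right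
    (mul_nonneg (sub_nonneg.2 (Real.one_le_exp hl.le)) (sq_nonneg _)))) hl.le

theorem logRamp_le_one (hl : 0 < l) {s : ℝ} (hs : s ≤ 1) : logRamp l s ≤ 1 := by
  have hsq : max s 0 ^ 2 ≤ 1 :=
    (sq_le_one_iff₀ (le_max_right _ _)).2 (max_le hs zero_le_one)
  rw [logRamp, div_le_one hl, Real.log_le_iff_le_exp (one_add_exp_sub_one_mul_sq_pos hl _)]
  linarith [mul_le_mul_of_nonneg_left hsq (sub_nonneg.2 (Real.one_le_exp hl.le))]

theorem logRampSlope_nonneg (hl : 0 < l) (s : ℝ) : 0 ≤ logRampSlope l s :=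
  div_nonneg (div_nonneg (mul_nonneg (sub_nonneg.2 (Real.one_le_exp hl.le))
    (mul_nonneg zero_le_two (le_max_right _ _))) (one_add_exp_sub_one_mul_sq_pos hl _).le) hl.le

theorem logRampSlope_le (hl : 0 < l) (s : ℝ) : logRampSlope l s ≤ 2 * Real.exp l / l := by
  have hN : 0 ≤ Real.exp l - 1 := sub_nonneg.2 (Real.one_le_exp hl.le)
  refine div_le_div_of_nonneg_right ?_ hl.le
  rw [div_le_iff₀ (one_add_exp_sub_one_mul_sq_pos hl _)]
  nlinarith [mul_nonneg hN (sq_nonneg (max s 0 - 1)),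
    mul_nonneg (mul_nonneg hN hN) (sq_nonneg (max s 0)), mul_nonneg hN (sq_nonneg (max s 0))]

theorem abs_mul_logRampSlope_le (hl : 0 < l) (s : ℝ) : |s| * logRampSlope l s ≤ 2 / l := by
  have hmul : |s| * logRampSlope l s
      = 2 * ((Real.exp l - 1) * max s 0 ^ 2) / (1 + (Real.exp l - 1) * max s 0 ^ 2) / l := by
    rcases le_total s 0 with hs | hs
    · simp only [logRampSlope, max_eq_right hs, mul_zero, zero_div, zero_pow two_ne_zero]
    · simp only [logRampSlope, max_eq_left hs, abs_of_nonneg hs]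
      ring
  rw [hmul]
  refine div_le_div_of_nonneg_right ?_ hl.le
  rw [div_le_iff₀ (one_add_exp_sub_one_mul_sq_pos hl _)]
  linarith

theorem one_add_mul_log_le_logRamp (hl : 0 < l) {s : ℝ} (hs : 0 < s) (hs1 : s ≤ 1) :
    1 + 2 / l * Real.log s ≤ logRamp l s := by
  have hsq : s ^ 2 ≤ 1 := (sq_le_one_iff₀ hs.le).2 hs1
  rw [logRamp, max_eq_left hs.le, le_div_iff₀ hl]
  calc (1 + 2 / l * Real.log s) * l = Real.log (Real.exp l * s ^ 2) := by
        rw [Real.log_mul (Real.exp_pos l).ne' (pow_pos hs 2).ne', Real.log_exp, Real.log_pow,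
          Nat.cast_ofNat]
        field_simp
    _ ≤ Real.log (1 + (Real.exp l - 1) * s ^ 2) :=
        Real.log_le_log (mul_pos (Real.exp_pos l) (pow_pos hs 2)) (by linarith)

theorem sub_le_integral_logRamp (hl : 0 < l) {u : ℝ} (hu : 0 < u) (hu1 : u ≤ 1) :
    u - 2 / l ≤ ∫ v in (0 : ℝ)..u, logRamp l v := by
  have hint := intervalIntegral.intervalIntegrable_log'.const_mul (2 / l) (a := 0) (b := u)
  have hlog : u - 1 ≤ u * Real.log u := by
    have hmul := mul_le_mul_of_nonneg_left (Real.one_sub_inv_le_log_of_pos hu) hu.le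
    rwa [mul_sub, mul_inv_cancel₀ hu.ne', mul_one] at hmul
  calc u - 2 / l ≤ u + 2 / l * (u * Real.log u - u) := by
        linarith [mul_le_mul_of_nonneg_left (sub_le_sub_right hlog u)
          (div_pos two_pos hl).le]
    _ = ∫ v in (0 : ℝ)..u, (1 + 2 / l * Real.log v) := by
        rw [intervalIntegral.integral_add intervalIntegrable_const hint,
          intervalIntegral.integral_const_mul, integral_log, intervalIntegral.integral_const]
        simp only [smul_eq_mul, zero_mul, sub_zero, add_zero, mul_one]
    _ ≤ ∫ v in (0 : ℝ)..u, logRamp l v :=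
        intervalIntegral.integral_mono_on_of_le_Ioo hu.le (intervalIntegrable_const.add hint)
          ((continuous_logRamp hl).intervalIntegrable _ _) fun v hv =>
            one_add_mul_log_le_logRamp hl hv.1 (hv.2.le.trans hu1)

theorem integral_logRamp_of_nonpos {u : ℝ} (hu : u ≤ 0) :
    ∫ v in (0 : ℝ)..u, logRamp l v = 0 :=
  intervalIntegral.integral_zero_ae (Eventually.of_forall fun _ hv => logRamp_of_nonpos
    (uIoc_of_ge hu ▸ hv).2)

theorem abs_integral_logRamp_sub_le (hl : 0 < l) {u : ℝ} (hu : u ≤ 1) :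
    |(∫ v in (0 : ℝ)..u, logRamp l v) - max u 0| ≤ 2 / l := by
  rcases le_or_gt u 0 with hu0 | hu0
  · rw [integral_logRamp_of_nonpos hu0, max_eq_right hu0, sub_zero, abs_zero]
    exact (div_pos two_pos hl).le
  · have hupper := intervalIntegral.integral_mono_on hu0.le
      ((continuous_logRamp hl).intervalIntegrable 0 u)
      (intervalIntegrable_const (μ := volume) (c := 1))
      fun v hv => logRamp_le_one hl (hv.2.trans hu)
    rw [intervalIntegral.integral_const, sub_zero, smul_eq_mul, mul_one] at hupper
    rw [max_eq_left hu0.le, abs_le]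
    constructor <;> linarith [sub_le_integral_logRamp hl hu0 hu, div_pos two_pos hl]

theorem isPosPartEntropy_integral_logRamp (hl : 0 < l) :
    IsPosPartEntropy (fun u => ∫ v in (0 : ℝ)..u, logRamp l v) (2 * Real.exp l / l) (2 / l) := by
  have hderiv : ∀ u, HasDerivAt (fun u => ∫ v in (0 : ℝ)..u, logRamp l v) (logRamp l u) u :=
    fun u => ((continuous_logRamp hl).integral_hasStrictDerivAt 0 u).hasDerivAt
  have hderiv_eq := funext fun u => (hderiv u).deriv
  have hderiv2_eq := funext fun u => (hasDerivAt_logRamp hl u).deriv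
  refine ⟨IsSmoothEntropy.of_hasDerivAt hderiv (hasDerivAt_logRamp hl)
    (continuous_logRampSlope hl) intervalIntegral.integral_same (logRamp_of_nonpos le_rfl)
    (logRampSlope_nonneg hl) (logRampSlope_le hl), ?_, ?_, ?_, ?_⟩
  · rw [hderiv_eq, hderiv2_eq]
    exact abs_mul_logRampSlope_le hl
  · rw [hderiv_eq]
    exact logRamp_nonneg hl
  · rw [hderiv_eq]
    exact fun u hu => logRamp_le_one hl hu
  · exact fun u hu => abs_integral_logRamp_sub_le hl (le_of_abs_le hu)

end LogRamp

theorem exists_isPosPartEntropy {c : ℝ} (hc : 0 < c) : ∃ θ L, IsPosPartEntropy θ L c := by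
  have hcl : 2 / (2 / c) = c := div_div_cancel₀ two_ne_zero
  exact ⟨_, _, hcl ▸ isPosPartEntropy_integral_logRamp (div_pos two_pos hc)⟩

/-! ### Vanishing of the averaged dissipation -/

/-- The oscillation of `f` at scale `ρ` is at most `o`. -/
def OscillationLE (f : ℝ → ℝ) (ρ o : ℝ) : Prop :=
  ∀ x y, |x - y| ≤ ρ → |f x - f y| ≤ o

theorem OscillationLE.nonneg {f : ℝ → ℝ} {ρ o : ℝ} (h : OscillationLE f ρ o) (hρ : 0 ≤ ρ) :
    0 ≤ o :=
  (abs_nonneg _).trans (h 0 0 (by rwa [sub_self, abs_zero]))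

theorem exists_mem_Icc_eq_mul {w p lo hi : ℝ} (hp : 0 ≤ p) (h : lo ≤ hi) (hlo : lo * p ≤ w)
    (hhi : w ≤ hi * p) : ∃ α ∈ Icc lo hi, w = α * p := by
  rcases hp.eq_or_lt with rfl | hp
  · rw [mul_zero] at hlo hhi
    exact ⟨lo, left_mem_Icc.2 h, by rw [mul_zero, le_antisymm hhi hlo]⟩
  · exact ⟨w / p, ⟨(le_div_iff₀ hp).2 hlo, (div_le_iff₀ hp).2 hhi⟩, (div_mul_cancel₀ w hp.ne').symm⟩

theorem neg_abs_sub_mul_le_sub_mul_sub {p q α β : ℝ} (hp : 0 ≤ p) (hq : 0 ≤ q) (hα : 0 ≤ α)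
    (hβ : 0 ≤ β) : -(|α - β| * (p * q)) ≤ (p - q) * (α * p - β * q) := by
  wlog h : α ≤ β generalizing p q α β
  · have hsymm := this hq hp hβ hα (le_of_not_ge h)
    rw [abs_sub_comm, mul_comm q p] at hsymm
    linarith
  · rw [abs_of_nonpos (sub_nonpos.2 h)]
    nlinarith [mul_nonneg hα (sq_nonneg (p - q)), mul_nonneg (sub_nonneg.2 h) (mul_nonneg hq hq)]

theorem dissipation_le_of_ratio {t p q α β b₁ b₂ R D : ℝ} (ht : 0 ≤ t) (hp : 0 ≤ p) (hq : 0 ≤ q)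
    (hα : 0 ≤ α) (hβ : 0 ≤ β) (hR : t * |α - β| ≤ R) (hD : t * |b₁ - b₂| ≤ D) :
    -(t * (p - q) * ((1 / 2 * (α * p) - b₁) - (1 / 2 * (β * q) - b₂)))
      ≤ 1 / 2 * (R * (p * q)) + D * (p + q) := by
  have hdiffusion : -(t * ((p - q) * (α * p - β * q))) ≤ R * (p * q) := by
    have h₁ := mul_le_mul_of_nonneg_left (neg_abs_sub_mul_le_sub_mul_sub hp hq hα hβ) ht
    have h₂ := mul_le_mul_of_nonneg_right hR (mul_nonneg hp hq)
    linarith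
  have hdrift : t * ((p - q) * (b₁ - b₂)) ≤ D * (p + q) := by
    have hpq : |p - q| ≤ p + q := abs_sub_le_iff.2 ⟨by linarith, by linarith⟩
    calc t * ((p - q) * (b₁ - b₂)) ≤ t * (|p - q| * |b₁ - b₂|) :=
          mul_le_mul_of_nonneg_left ((le_abs_self _).trans (abs_mul _ _).le) ht
      _ = t * |b₁ - b₂| * |p - q| := by ring
      _ ≤ D * (p + q) := mul_le_mul hD hpq (abs_nonneg _)
          ((mul_nonneg ht (abs_nonneg _)).trans hD)
  linarith

theorem mul_le_add_of_near_or_far {t x d κ e C c : ℝ} (ht : 0 ≤ t) (hκ : 0 < κ) (he : 0 ≤ e)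
    (hx : 0 ≤ x) (hC : x ≤ C) (hc : |d| * t ≤ c) (hnear : |d| ≤ κ → x ≤ e) :
    t * x ≤ e * t + C * (c / κ) := by
  have hc0 : 0 ≤ c / κ := div_nonneg ((mul_nonneg (abs_nonneg d) ht).trans hc) hκ.le
  rcases le_or_gt |d| κ with h | h
  · have := mul_le_mul_of_nonneg_left (hnear h) ht
    have := mul_nonneg (hx.trans hC) hc0
    linarith
  · have htc : t ≤ c / κ := by
      rw [le_div_iff₀ hκ, mul_comm]
      exact (mul_le_mul_of_nonneg_right h.le ht).trans hc
    have := mul_le_mul htc hC hx hc0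
    have := mul_nonneg he ht
    linarith

namespace RegularCoefficients

variable {a A B : ℝ → ℝ} {Ca Cb : ℝ}

theorem sub_mem_Icc_of_abs_sub_le (hc : RegularCoefficients a A B Ca Cb) {m u v κ ε : ℝ}
    (hκ : ∀ w, |w - m| ≤ κ → |a w - a m| ≤ ε) (huv : u ≤ v) (hu : |u - m| ≤ κ)
    (hv : |v - m| ≤ κ) :
    A v - A u ∈ Icc ((a m - ε) * (v - u)) ((a m + ε) * (v - u)) := by
  rcases huv.eq_or_lt with rfl | h
  · simp only [sub_self, mul_zero, Icc_self, mem_singleton_iff]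
  obtain ⟨w, hw, hslope⟩ :=
    exists_hasDerivAt_eq_slope A a h hc.continuous.continuousOn fun x _ => hc.hasDerivAt x
  have hwκ : |w - m| ≤ κ :=
    _root_.abs_le.2 ⟨by linarith [hw.1, (_root_.abs_le.1 hu).1],
      by linarith [hw.2, (_root_.abs_le.1 hv).2]⟩
  have haw := _root_.abs_le.1 (hκ w hwκ)
  rw [eq_div_iff (sub_pos.2 h).ne'] at hslope
  rw [← hslope]
  constructor <;> refine mul_le_mul_of_nonneg_right ?_ (sub_nonneg.2 huv) <;>
    linarith [haw.1, haw.2]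

end RegularCoefficients

namespace IsCdfSolution

variable {a A B η θ : ℝ → ℝ} {Ca Cb δ L c κ ε o s r₀ r₁ : ℝ} {F G : ℝ → ℝ → ℝ}

theorem abs_sub_smoothCdf_le (hF : IsCdfSolution A B F) (hη : IsMollifier η δ)
    (ho : OscillationLE (F s) (2 * δ) o) {x z : ℝ} (hz : z ∈ Icc (x - δ) (x + δ)) :
    |F s z - smoothCdf η F s x| ≤ o := by
  have hupper := hF.smoothCdf_le hη s x
  have hlower := hF.le_smoothCdf hη s x
  have hright := ho (x + δ) z (abs_le.2 ⟨by linarith [hz.2, hη.pos], by linarith [hz.1]⟩)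
  have hleft := ho z (x - δ) (abs_le.2 ⟨by linarith [hz.1, hη.pos], by linarith [hz.2]⟩)
  rw [abs_le] at *
  constructor <;> linarith [hright.2, hleft.2]

theorem abs_smoothDrift_sub_le (hF : IsCdfSolution A B F) (hc : RegularCoefficients a A B Ca Cb)
    (hη : IsMollifier η δ) (ho : OscillationLE (F s) (2 * δ) o) (x : ℝ) :
    |smoothDrift η B F s x - B (smoothCdf η F s x)| ≤ Cb * o := by
  have hnear : ∀ z ∈ Icc (x - δ) (x + δ), |B (F s z) - B (smoothCdf η F s x)| ≤ Cb * o :=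
    fun z hz => (hc.abs_drift_sub_le _ _).trans
      (mul_le_mul_of_nonneg_left (hF.abs_sub_smoothCdf_le hη ho hz) hc.Cb_nonneg)
  have hint := hF.locallyIntegrable_drift hc s
  rw [abs_le, neg_le_sub_iff_le_add, sub_le_iff_le_add]
  constructor
  · rw [← sub_le_iff_le_add]
    exact hη.le_mollify hint fun z hz => by linarith [(abs_le.1 (hnear z hz)).1]
  · exact hη.mollify_le hint fun z hz => by linarith [(abs_le.1 (hnear z hz)).2]

theorem smoothDiffusion_mem_Icc (hF : IsCdfSolution A B F)
    (hc : RegularCoefficients a A B Ca Cb) (hη : IsMollifier η δ)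
    (hκ : ∀ u v, |u - v| ≤ κ → |a u - a v| ≤ ε) (ho : OscillationLE (F s) (2 * δ) κ) (x : ℝ) :
    smoothDiffusion η A F s x ∈ Icc ((a (smoothCdf η F s x) - ε) * smoothDensity η F s x)
      ((a (smoothCdf η F s x) + ε) * smoothDensity η F s x) := by
  have hincr : ∀ y ∈ Icc (x - δ) (x + δ), ∀ z ∈ Icc (x - δ) (x + δ), y ≤ z → _ :=
    fun y hy z hz hyz => hc.sub_mem_Icc_of_abs_sub_le (fun w => hκ w (smoothCdf η F s x))
      ((hF.isCdf s).mono hyz) (hF.abs_sub_smoothCdf_le hη ho hy) (hF.abs_sub_smoothCdf_le hη ho hz)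
  have hupper := hη.mollify_deriv_nonneg (x := x)
    (h := fun z => (a (smoothCdf η F s x) + ε) * F s z - A (F s z))
    fun y hy z hz hyz => by linarith [(hincr y hy z hz hyz).2]
  have hlower := hη.mollify_deriv_nonneg (x := x)
    (h := fun z => -1 * ((a (smoothCdf η F s x) - ε) * F s z - A (F s z)))
    fun y hy z hz hyz => by linarith [(hincr y hy z hz hyz).1]
  rw [hF.mollify_deriv_mul_sub hc hη] at hupper
  rw [mollify_const_mul, hF.mollify_deriv_mul_sub hc hη] at hlower
  constructor <;> linarith

theorem exists_smoothDiffusion_eq_mul (hF : IsCdfSolution A B F)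
    (hc : RegularCoefficients a A B Ca Cb) (hη : IsMollifier η δ) (s x : ℝ) :
    ∃ α ∈ Icc 0 Ca, smoothDiffusion η A F s x = α * smoothDensity η F s x :=
  exists_mem_Icc_eq_mul (hF.smoothDensity_nonneg hη s x) hc.Ca_nonneg
    ((zero_mul _).trans_le (hF.smoothDiffusion_nonneg hc hη s x)) (hF.smoothDiffusion_le hc hη s x)

theorem exists_smoothDiffusion_eq_mul_of_oscillationLE (hF : IsCdfSolution A B F)
    (hc : RegularCoefficients a A B Ca Cb) (hη : IsMollifier η δ) (hε : 0 ≤ ε)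
    (hκ : ∀ u v, |u - v| ≤ κ → |a u - a v| ≤ ε) (ho : OscillationLE (F s) (2 * δ) κ) (x : ℝ) :
    ∃ α ∈ Icc 0 Ca, smoothDiffusion η A F s x = α * smoothDensity η F s x ∧
      |α - a (smoothCdf η F s x)| ≤ ε := by
  have hp := hF.smoothDensity_nonneg hη s x
  have hnear := hF.smoothDiffusion_mem_Icc hc hη hκ ho x
  have ha := hc.nonneg (smoothCdf η F s x)
  have haC := hc.le (smoothCdf η F s x)
  obtain ⟨α, hα, heq⟩ := exists_mem_Icc_eq_mul (w := smoothDiffusion η A F s x)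
    (lo := max 0 (a (smoothCdf η F s x) - ε)) (hi := min Ca (a (smoothCdf η F s x) + ε)) hp
    (max_le (le_min hc.Ca_nonneg (by linarith)) (le_min (by linarith) (by linarith)))
    (by rw [max_mul_of_nonneg _ _ hp, zero_mul]
        exact max_le (hF.smoothDiffusion_nonneg hc hη s x) hnear.1)
    (by rw [min_mul_of_nonneg _ _ hp]
        exact le_min (hF.smoothDiffusion_le hc hη s x) hnear.2)
  rw [mem_Icc, max_le_iff, le_min_iff] at hα
  exact ⟨α, ⟨hα.1.1, hα.2.1⟩, heq,
    abs_le.2 ⟨by linarith [hα.1.2], by linarith [hα.2.2]⟩⟩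

theorem integral_totalDissipation_le_of_isPosPartEntropy (hF : IsCdfSolution A B F)
    (hG : IsCdfSolution A B G) (hc : RegularCoefficients a A B Ca Cb)
    (hη : IsMollifier η δ) (hθ : IsPosPartEntropy θ L c)
    (s : ℝ) (hr : r₀ ≤ r₁) :
    ∫ r in Ioc r₀ r₁, totalDissipation θ η A B F G r s
      ≤ 1 / 2 * Ca + L * (2 * Cb) * (2 * (r₁ - r₀)) := by
  have hbound := hF.integral_totalDissipation_le hG hc hη hθ.toIsSmoothEntropy (s := s) hr (M := 1)
    (e₁ := 1 / 2 * Ca) (e₂ := 0) (e₃ := L * (2 * Cb))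
    (mul_nonneg one_half_pos.le hc.Ca_nonneg) le_rfl (integrable_zero ℝ ℝ volume)
    (fun u v hu _ => hθ.deriv_sub_deriv_le_one hu v)
    (fun ⟨r, x⟩ => by
      have hGr := hG.spaceTranslate r
      obtain ⟨α, hα, hαw⟩ := hF.exists_smoothDiffusion_eq_mul hc hη s x
      obtain ⟨β, hβ, hβw⟩ := hGr.exists_smoothDiffusion_eq_mul hc hη s x
      have ht := hθ.deriv_deriv_nonneg (smoothGap η F (spaceTranslate G r) s x)
      have hdrift : |smoothDrift η B F s x - smoothDrift η B (spaceTranslate G r) s x| ≤ 2 * Cb :=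
        (abs_sub _ _).trans (by
          linarith [hF.abs_smoothDrift_le hc hη s x, hGr.abs_smoothDrift_le hc hη s x])
      have hle := dissipation_le_of_ratio ht (hF.smoothDensity_nonneg hη s x)
        (hGr.smoothDensity_nonneg hη s x) hα.1 hβ.1
        (mul_le_mul_of_nonneg_left (abs_sub_le_of_nonneg_of_le hα.1 hα.2 hβ.1 hβ.2) ht)
        (mul_le_mul (hθ.deriv_deriv_le _) hdrift (abs_nonneg _) hθ.bound_nonneg)
      simp only [dissipation, weightedOverlap, smoothFlux, hαw, hβw,
        Pi.zero_apply]
      linarith)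
  simp only [Pi.zero_apply, integral_zero] at hbound
  linarith

theorem dissipation_le_of_oscillationLE (hF : IsCdfSolution A B F) (hG : IsCdfSolution A B G)
    (hc : RegularCoefficients a A B Ca Cb) (hη : IsMollifier η δ) (hθ : IsPosPartEntropy θ L c)
    (hκ0 : 0 < κ) (hε : 0 ≤ ε) (hκ : ∀ u v, |u - v| ≤ κ → |a u - a v| ≤ ε) (hoκ : o ≤ κ)
    (hoF : OscillationLE (F s) (2 * δ) o) (hoG : OscillationLE (G s) (2 * δ) o) (x : ℝ) :
    dissipation θ η A B F G s x
      ≤ 1 / 2 * ((3 * ε * deriv (deriv θ) (smoothGap η F G s x) + Ca * (c / κ)) *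
          (smoothDensity η F s x * smoothDensity η G s x))
        + Cb * (c + 2 * o * L) * (smoothDensity η F s x + smoothDensity η G s x) := by
  have ht := hθ.deriv_deriv_nonneg (smoothGap η F G s x)
  have ho : 0 ≤ o := hoF.nonneg (mul_nonneg zero_le_two hη.pos.le)
  obtain ⟨α, hα, hαw, hαa⟩ := hF.exists_smoothDiffusion_eq_mul_of_oscillationLE hc hη hε hκ
    (fun y z hyz => (hoF y z hyz).trans hoκ) x
  obtain ⟨β, hβ, hβw, hβa⟩ := hG.exists_smoothDiffusion_eq_mul_of_oscillationLE hc hη hε hκ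
    (fun y z hyz => (hoG y z hyz).trans hoκ) x
  have hratio := mul_le_add_of_near_or_far ht hκ0 (mul_nonneg zero_le_three hε)
    (abs_nonneg (α - β)) (abs_sub_le_of_nonneg_of_le hα.1 hα.2 hβ.1 hβ.2)
    (hθ.abs_mul_deriv_deriv_le _) fun hnear => by
      have hgap := hκ _ _ hnear
      rw [abs_le] at *
      constructor <;> linarith [hgap.1, hgap.2, hαa.1, hαa.2, hβa.1, hβa.2]
  have hdrift : |smoothDrift η B F s x - smoothDrift η B G s x|
      ≤ Cb * (|smoothGap η F G s x| + 2 * o) := by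
    have hFB := hF.abs_smoothDrift_sub_le hc hη hoF x
    have hGB := hG.abs_smoothDrift_sub_le hc hη hoG x
    have hB := hc.abs_drift_sub_le (smoothCdf η F s x) (smoothCdf η G s x)
    rw [smoothGap]
    rw [abs_le] at *
    constructor <;> linarith [hFB.1, hFB.2, hGB.1, hGB.2, hB.1, hB.2]
  have htdrift : deriv (deriv θ) (smoothGap η F G s x) *
      |smoothDrift η B F s x - smoothDrift η B G s x| ≤ Cb * (c + 2 * o * L) := by
    have hgap := hθ.abs_mul_deriv_deriv_le (smoothGap η F G s x)
    have hL := mul_le_mul_of_nonneg_left (hθ.deriv_deriv_le (smoothGap η F G s x))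
      (mul_nonneg zero_le_two ho)
    refine (mul_le_mul_of_nonneg_left hdrift ht).trans ?_
    rw [mul_left_comm]
    exact mul_le_mul_of_nonneg_left (by linarith) hc.Cb_nonneg
  rw [dissipation, smoothFlux, smoothFlux, hαw, hβw]
  exact dissipation_le_of_ratio ht (hF.smoothDensity_nonneg hη s x)
    (hG.smoothDensity_nonneg hη s x) hα.1 hβ.1 hratio htdrift

theorem integral_totalDissipation_le_of_oscillationLE (hF : IsCdfSolution A B F)
    (hG : IsCdfSolution A B G) (hc : RegularCoefficients a A B Ca Cb)
    (hη : IsMollifier η δ) (hθ : IsPosPartEntropy θ L c)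
    (hκ0 : 0 < κ) (hε : 0 ≤ ε) (hκ : ∀ u v, |u - v| ≤ κ → |a u - a v| ≤ ε) (hoκ : o ≤ κ)
    (hoF : OscillationLE (F s) (2 * δ) o) (hoG : OscillationLE (G s) (2 * δ) o) (hr : r₀ ≤ r₁) :
    ∫ r in Ioc r₀ r₁, totalDissipation θ η A B F G r s
      ≤ 3 / 2 * ε + Ca * (c / κ) + Cb * (c + 2 * o * L) * (2 * (r₁ - r₀)) := by
  have hc0 : 0 ≤ c := (abs_nonneg _).trans (hθ.abs_sub_posPart_le 0 (by simp))
  have hbound := hF.integral_totalDissipation_le hG hc hη hθ.toIsSmoothEntropy (s := s) hr (M := 1)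
    (e₁ := 3 / 2 * ε) (e₂ := 1 / 2 * (Ca * (c / κ))) (e₃ := Cb * (c + 2 * o * L))
    (by positivity) (mul_nonneg one_half_pos.le (mul_nonneg hc.Ca_nonneg (div_nonneg hc0 hκ0.le)))
    (integrable_zero ℝ ℝ volume)
    (fun u v hu _ => hθ.deriv_sub_deriv_le_one hu v)
    (fun ⟨r, x⟩ => by
      have hle := hF.dissipation_le_of_oscillationLE (hG.spaceTranslate r) hc hη hθ hκ0 hε hκ
        hoκ hoF (fun y z hyz => hoG (y + r) (z + r) (by rwa [add_sub_add_right_eq_sub])) x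
      simp only [weightedOverlap, Pi.zero_apply]
      linarith)
  simp only [Pi.zero_apply, integral_zero] at hbound
  linarith

end IsCdfSolution

theorem eventually_oscillationLE {f : ℝ → ℝ} (hf : UniformContinuous f) {ρ : ℕ → ℝ}
    (hρ : Tendsto ρ atTop (𝓝 0)) {o : ℝ} (ho : 0 < o) : ∀ᶠ n in atTop, OscillationLE f (ρ n) o := by
  obtain ⟨d, hd, hfd⟩ := Metric.uniformContinuous_iff.1 hf o ho
  filter_upwards [hρ.eventually_lt_const hd] with n hn x y hxy
  exact (hfd (hxy.trans_lt hn)).le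

namespace IsCdfSolution

variable {a A B η θ : ℝ → ℝ} {Ca Cb δ L c κ ε : ℝ} {F G : ℝ → ℝ → ℝ}

theorem integrable_sub (hF : IsCdfSolution A B F) (hG : IsCdfSolution A B G) (t : ℝ) :
    Integrable fun x => F t x - G t x := by
  simpa only [Pi.sub_def, sub_sub_sub_cancel_right] using
    (hF.integrable_sub_heaviside t).sub (hG.integrable_sub_heaviside t)

theorem abs_sub_le_one (hF : IsCdfSolution A B F) (hG : IsCdfSolution A B G) (t x : ℝ) :
    |F t x - G t x| ≤ 1 :=
  abs_sub_le_of_nonneg_of_le ((hF.isCdf t).nonneg x) ((hF.isCdf t).le_one x)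
    ((hG.isCdf t).nonneg x) ((hG.isCdf t).le_one x)

theorem integrable_posPart_sub (hF : IsCdfSolution A B F) (hG : IsCdfSolution A B G) (t : ℝ) :
    Integrable fun x => max (F t x - G t x) 0 :=
  (hF.integrable_sub hG t).pos_part

theorem integrable_comp_sub (hF : IsCdfSolution A B F) (hG : IsCdfSolution A B G)
    (hθ : IsSmoothEntropy θ L) (t : ℝ) : Integrable fun x => θ (F t x - G t x) :=
  ((hF.integrable_sub hG t).abs.const_mul L).mono'
    (hθ.continuous.measurable.comp
      ((hF.measurable_slice t).sub (hG.measurable_slice t))).aestronglyMeasurable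
    (Eventually.of_forall fun x => hθ.abs_le (hF.abs_sub_le_one hG t x))

section VanishingMollification

theorem integrable_add_sub_sub (hF : IsCdfSolution A B F) (t δ : ℝ) :
    Integrable fun x => F t (x + δ) - F t (x - δ) := by
  simpa only [Pi.sub_def, sub_sub_sub_cancel_right, ← sub_eq_add_neg] using
    (integrable_add_sub (hF.integrable_sub_heaviside t) δ).sub
      (integrable_add_sub (hF.integrable_sub_heaviside t) (-δ))

theorem integral_add_sub_sub (hF : IsCdfSolution A B F) (t δ : ℝ) :
    ∫ x, (F t (x + δ) - F t (x - δ)) = 2 * δ := by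
  have hsub := integral_sub (integrable_add_sub (hF.integrable_sub_heaviside t) δ)
    (integrable_add_sub (hF.integrable_sub_heaviside t) (-δ))
  rw [integral_add_sub (hF.integrable_sub_heaviside t),
    integral_add_sub (hF.integrable_sub_heaviside t)] at hsub
  simp only [sub_sub_sub_cancel_right, ← sub_eq_add_neg] at hsub
  rw [hsub]
  ring

theorem abs_smoothCdf_sub_le (hF : IsCdfSolution A B F) (hη : IsMollifier η δ) (t x : ℝ) :
    |smoothCdf η F t x - F t x| ≤ F t (x + δ) - F t (x - δ) :=
  abs_sub_le_of_le_of_le (hF.le_smoothCdf hη t x) (hF.smoothCdf_le hη t x)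
    ((hF.isCdf t).mono (sub_le_self x hη.pos.le))
    ((hF.isCdf t).mono (le_add_of_nonneg_right hη.pos.le))

theorem abs_integral_comp_smoothGap_sub_le (hF : IsCdfSolution A B F) (hG : IsCdfSolution A B G)
    (hη : IsMollifier η δ) (hθ : IsPosPartEntropy θ L c) (t : ℝ) :
    |(∫ x, θ (smoothGap η F G t x)) - ∫ x, θ (F t x - G t x)| ≤ 4 * δ := by
  rw [← integral_sub (hF.integrable_comp_smoothGap hG hη hθ.toIsSmoothEntropy t)
    (hF.integrable_comp_sub hG hθ.toIsSmoothEntropy t), ← Real.norm_eq_abs]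
  have hle := norm_integral_le_of_norm_le
    (f := fun x => θ (smoothGap η F G t x) - θ (F t x - G t x))
    ((hF.integrable_add_sub_sub t δ).add (hG.integrable_add_sub_sub t δ))
    (Eventually.of_forall fun x => by
      refine (hθ.abs_sub_le (hF.abs_smoothGap_le_one hG hη t x) (hF.abs_sub_le_one hG t x)).trans ?_
      rw [smoothGap, sub_sub_sub_comm]
      exact (abs_sub _ _).trans
        (add_le_add (hF.abs_smoothCdf_sub_le hη t x) (hG.abs_smoothCdf_sub_le hη t x)))
  rw [integral_add' (hF.integrable_add_sub_sub t δ) (hG.integrable_add_sub_sub t δ),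
    hF.integral_add_sub_sub, hG.integral_add_sub_sub] at hle
  linarith

end VanishingMollification

section EntropyBound

variable {η : ℕ → ℝ → ℝ} {δ : ℕ → ℝ} {s t₁ t₂ r₀ r₁ : ℝ}

theorem tendsto_integral_comp_smoothGap (hF : IsCdfSolution A B F) (hG : IsCdfSolution A B G)
    (hη : ∀ n, IsMollifier (η n) (δ n)) (hδ : Tendsto δ atTop (𝓝 0))
    (hθ : IsPosPartEntropy θ L c) (t : ℝ) :
    Tendsto (fun n => ∫ x, θ (smoothGap (η n) F G t x)) atTop
      (𝓝 (∫ x, θ (F t x - G t x))) := by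
  rw [tendsto_iff_dist_tendsto_zero]
  exact squeeze_zero (fun _ => dist_nonneg)
    (fun n => hF.abs_integral_comp_smoothGap_sub_le hG (hη n) hθ t)
    (mul_zero (4 : ℝ) ▸ hδ.const_mul 4)

theorem eventually_integral_totalDissipation_le (hF : IsCdfSolution A B F)
    (hG : IsCdfSolution A B G) (hc : RegularCoefficients a A B Ca Cb)
    (hη : ∀ n, IsMollifier (η n) (δ n)) (hδ : Tendsto δ atTop (𝓝 0))
    (hθ : IsPosPartEntropy θ L c) (hc0 : 0 < c) (hκ0 : 0 < κ) (hε : 0 ≤ ε)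
    (hκ : ∀ u v, |u - v| ≤ κ → |a u - a v| ≤ ε) (hr : r₀ ≤ r₁) (hFs : Continuous (F s))
    (hGs : Continuous (G s)) :
    ∀ᶠ n in atTop, ∫ r in Ioc r₀ r₁, totalDissipation θ (η n) A B F G r s
      ≤ 3 / 2 * ε + Ca * (c / κ) + Cb * (2 * c) * (2 * (r₁ - r₀)) := by
  have hL : 0 < 2 * (L + 1) := by linarith [hθ.bound_nonneg]
  have ho : 0 < min κ (c / (2 * (L + 1))) := lt_min hκ0 (div_pos hc0 hL)
  have hoL : 2 * min κ (c / (2 * (L + 1))) * L ≤ c := by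
    have := (le_div_iff₀ hL).1 (min_le_right κ (c / (2 * (L + 1))))
    linarith
  have h2δ : Tendsto (fun n => 2 * δ n) atTop (𝓝 0) := mul_zero (2 : ℝ) ▸ hδ.const_mul 2
  filter_upwards [eventually_oscillationLE ((hF.isCdf s).uniformContinuous hFs) h2δ ho,
    eventually_oscillationLE ((hG.isCdf s).uniformContinuous hGs) h2δ ho] with n hoF hoG
  refine (hF.integral_totalDissipation_le_of_oscillationLE hG hc (hη n) hθ hκ0 hε hκ
    (min_le_left _ _) hoF hoG hr).trans ?_
  gcongr
  · exact hc.Cb_nonneg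
  · linarith

theorem integrable_integral_totalDissipation {η : ℝ → ℝ} {δ : ℝ} (hF : IsCdfSolution A B F)
    (hG : IsCdfSolution A B G) (hc : RegularCoefficients a A B Ca Cb) (hη : IsMollifier η δ)
    (hθ : IsSmoothEntropy θ L) (t₁ t₂ r₀ r₁ : ℝ) :
    IntegrableOn (fun s => ∫ r in Ioc r₀ r₁, totalDissipation θ η A B F G r s) (Ioc t₁ t₂) :=
  (hF.integrable_totalDissipation hG hc hη hθ _ _).integral_prod_right

theorem tendsto_integral_posPart_totalDissipation_sub (hF : IsCdfSolution A B F)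
    (hG : IsCdfSolution A B G) (hc : RegularCoefficients a A B Ca Cb)
    (hη : ∀ n, IsMollifier (η n) (δ n)) (hδ : Tendsto δ atTop (𝓝 0))
    (hθ : IsPosPartEntropy θ L c) (hc0 : 0 < c) (hκ0 : 0 < κ) (hε : 0 ≤ ε)
    (hκ : ∀ u v, |u - v| ≤ κ → |a u - a v| ≤ ε) (h₁ : 0 ≤ t₁) (h₂ : t₁ ≤ t₂) (hr : r₀ ≤ r₁) :
    Tendsto (fun n => ∫ s in Ioc t₁ t₂,
        max ((∫ r in Ioc r₀ r₁, totalDissipation θ (η n) A B F G r s)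
          - (3 / 2 * ε + Ca * (c / κ) + Cb * (2 * c) * (2 * (r₁ - r₀)))) 0) atTop (𝓝 0) := by
  have hCa := hc.Ca_nonneg
  have hCb := hc.Cb_nonneg
  have hL := hθ.bound_nonneg
  have hr' : 0 ≤ r₁ - r₀ := sub_nonneg.2 hr
  rw [show 𝓝 (0 : ℝ) = 𝓝 (∫ _ in Ioc t₁ t₂, (0 : ℝ)) by rw [integral_zero]]
  refine tendsto_integral_of_dominated_convergence
    (fun _ => 1 / 2 * Ca + L * (2 * Cb) * (2 * (r₁ - r₀))) (fun n => ?_) (integrable_const _)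
    (fun n => Eventually.of_forall fun s => ?_) ?_
  · exact ((hF.integrable_integral_totalDissipation hG hc (hη n) hθ.toIsSmoothEntropy t₁ t₂ r₀
      r₁).sub (integrable_const _)).pos_part.aestronglyMeasurable
  · rw [Real.norm_of_nonneg (le_max_right _ _)]
    refine max_le ((sub_le_self _ (by positivity)).trans ?_) (by positivity)
    exact hF.integral_totalDissipation_le_of_isPosPartEntropy hG hc (hη n) hθ s hr
  · filter_upwards [hF.ae_continuous hc h₁ h₂, hG.ae_continuous hc h₁ h₂] with s hFs hGs
    refine tendsto_const_nhds.congr' ?_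
    filter_upwards [hF.eventually_integral_totalDissipation_le hG hc hη hδ hθ hc0 hκ0 hε hκ hr hFs
      hGs] with n hn
    exact (max_eq_right (sub_nonpos.2 hn)).symm

theorem antitone_integral_comp_smoothGap_spaceTranslate {η : ℝ → ℝ} {δ : ℝ}
    (hF : IsCdfSolution A B F) (hG : IsCdfSolution A B G) (hη : IsMollifier η δ)
    (hθ : IsPosPartEntropy θ L c) (t : ℝ) :
    Antitone fun r => ∫ x, θ (smoothGap η F (spaceTranslate G r) t x) := by
  intro r r' hr
  refine integral_mono
    (hF.integrable_comp_smoothGap (hG.spaceTranslate r') hη hθ.toIsSmoothEntropy t)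
    (hF.integrable_comp_smoothGap (hG.spaceTranslate r) hη hθ.toIsSmoothEntropy t)
    fun x => hθ.monotone ?_
  rw [smoothGap, smoothGap, smoothCdf_spaceTranslate, smoothCdf_spaceTranslate]
  exact sub_le_sub_left (hη.monotone_mollify (hG.isCdf t).mono (by linarith)) _

theorem mul_integral_comp_smoothGap_sub_le {η : ℝ → ℝ} {δ : ℝ} (hF : IsCdfSolution A B F)
    (hG : IsCdfSolution A B G) (hc : RegularCoefficients a A B Ca Cb) (hη : IsMollifier η δ)
    (hθ : IsPosPartEntropy θ L c) (h₁ : 0 ≤ t₁) (h₂ : t₁ ≤ t₂) (hr : r₀ ≤ r₁) :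
    (r₁ - r₀) * ((∫ x, θ (smoothGap η F (spaceTranslate G r₁) t₂ x))
        - ∫ x, θ (smoothGap η F (spaceTranslate G r₀) t₁ x))
      ≤ ∫ s in Ioc t₁ t₂, ∫ r in Ioc r₀ r₁, totalDissipation θ η A B F G r s := by
  rw [← hF.integral_comp_smoothGap_spaceTranslate_sub hG hc hη hθ.toIsSmoothEntropy h₁ h₂]
  have hanti := hF.antitone_integral_comp_smoothGap_spaceTranslate hG hη hθ
  have hint : ∀ t, IntegrableOn (fun r => ∫ x, θ (smoothGap η F (spaceTranslate G r) t x))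
      (Ioc r₀ r₁) := fun t =>
    (((hanti t).antitoneOn _).integrableOn_isCompact isCompact_Icc).mono_set Ioc_subset_Icc_self
  refine Eq.trans_le ?_ (setIntegral_mono_on (integrable_const
    ((∫ x, θ (smoothGap η F (spaceTranslate G r₁) t₂ x))
      - ∫ x, θ (smoothGap η F (spaceTranslate G r₀) t₁ x))) ((hint t₂).sub (hint t₁))
    measurableSet_Ioc fun r hr => sub_le_sub (hanti t₂ hr.2) (hanti t₁ hr.1.le))
  rw [setIntegral_const, Real.volume_real_Ioc_of_le hr, smul_eq_mul]

theorem mul_integral_comp_sub_le (hF : IsCdfSolution A B F) (hG : IsCdfSolution A B G)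
    (hc : RegularCoefficients a A B Ca Cb) (hθ : IsPosPartEntropy θ L c) (hc0 : 0 < c)
    (hκ0 : 0 < κ) (hε : 0 ≤ ε) (hκ : ∀ u v, |u - v| ≤ κ → |a u - a v| ≤ ε) (h₁ : 0 ≤ t₁)
    (h₂ : t₁ ≤ t₂) (hr : r₀ ≤ r₁) :
    (r₁ - r₀) * ((∫ x, θ (F t₂ x - spaceTranslate G r₁ t₂ x))
        - ∫ x, θ (F t₁ x - spaceTranslate G r₀ t₁ x))
      ≤ (3 / 2 * ε + Ca * (c / κ) + Cb * (2 * c) * (2 * (r₁ - r₀))) * (t₂ - t₁) := by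
  choose η hη using fun n : ℕ => exists_isMollifier (Nat.one_div_pos_of_nat (α := ℝ) (n := n))
  have hδ := tendsto_one_div_add_atTop_nhds_zero_nat (𝕜 := ℝ)
  generalize hE : 3 / 2 * ε + Ca * (c / κ) + Cb * (2 * c) * (2 * (r₁ - r₀)) = E
  have hexcess := hF.tendsto_integral_posPart_totalDissipation_sub hG hc hη hδ hθ hc0 hκ0 hε hκ
    h₁ h₂ hr
  have hentropy := fun t r =>
    hF.tendsto_integral_comp_smoothGap (hG.spaceTranslate r) hη hδ hθ t
  rw [hE] at hexcess
  rw [← add_zero (E * _)]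
  refine le_of_tendsto_of_tendsto' (((hentropy t₂ r₁).sub (hentropy t₁ r₀)).const_mul (r₁ - r₀))
    (hexcess.const_add (E * (t₂ - t₁))) fun n => ?_
  have hint := hF.integrable_integral_totalDissipation hG hc (hη n) hθ.toIsSmoothEntropy t₁ t₂ r₀ r₁
  have hexcess_int : IntegrableOn (fun s =>
      max ((∫ r in Ioc r₀ r₁, totalDissipation θ (η n) A B F G r s) - E) 0) (Ioc t₁ t₂) :=
    (hint.sub (integrable_const E)).pos_part
  calc _ ≤ ∫ s in Ioc t₁ t₂, ∫ r in Ioc r₀ r₁, totalDissipation θ (η n) A B F G r s :=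
        hF.mul_integral_comp_smoothGap_sub_le hG hc (hη n) hθ h₁ h₂ hr
    _ ≤ ∫ s in Ioc t₁ t₂,
          (E + max ((∫ r in Ioc r₀ r₁, totalDissipation θ (η n) A B F G r s) - E) 0) :=
        integral_mono hint ((integrable_const E).add hexcess_int) fun s => by
          rw [← sub_le_iff_le_add']
          exact le_max_left _ _
    _ = _ := by
        rw [integral_add (integrable_const E) hexcess_int, setIntegral_const,
          Real.volume_real_Ioc_of_le h₂, smul_eq_mul, mul_comm]

end EntropyBound

end IsCdfSolution

/-! ### Contraction of the positive part -/

namespace IsCdfSolution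

section Contraction

variable {a A B : ℝ → ℝ} {Ca Cb t₁ t₂ r r₀ r₁ ε : ℝ} {F G : ℝ → ℝ → ℝ}

theorem tendsto_integral_comp_sub (hF : IsCdfSolution A B F) (hG : IsCdfSolution A B G)
    {θ : ℕ → ℝ → ℝ} {L c : ℕ → ℝ} (hθ : ∀ n, IsPosPartEntropy (θ n) (L n) (c n))
    (hc : Tendsto c atTop (𝓝 0)) (t : ℝ) :
    Tendsto (fun n => ∫ x, θ n (F t x - G t x)) atTop (𝓝 (∫ x, max (F t x - G t x) 0)) := by
  refine tendsto_integral_of_dominated_convergence (fun x => |F t x - G t x|)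
    (fun n => (hF.integrable_comp_sub hG (hθ n).toIsSmoothEntropy t).aestronglyMeasurable)
    (hF.integrable_sub hG t).abs
    (fun n => Eventually.of_forall fun x => ?_) (Eventually.of_forall fun x => ?_)
  · simpa only [Real.norm_eq_abs, (hθ n).zero, sub_zero] using
      (hθ n).abs_sub_le (hF.abs_sub_le_one hG t x) (abs_zero.trans_le zero_le_one)
  · rw [tendsto_iff_dist_tendsto_zero]
    exact squeeze_zero (fun _ => dist_nonneg)
      (fun n => (hθ n).abs_sub_posPart_le _ (hF.abs_sub_le_one hG t x)) hc

theorem mul_integral_posPart_sub_le (hF : IsCdfSolution A B F) (hG : IsCdfSolution A B G)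
    (hc : RegularCoefficients a A B Ca Cb) (hε : 0 < ε) (h₁ : 0 ≤ t₁) (h₂ : t₁ ≤ t₂)
    (hr : r₀ ≤ r₁) :
    (r₁ - r₀) * ((∫ x, max (F t₂ x - spaceTranslate G r₁ t₂ x) 0)
        - ∫ x, max (F t₁ x - spaceTranslate G r₀ t₁ x) 0) ≤ 3 / 2 * ε * (t₂ - t₁) := by
  obtain ⟨d, hd, had⟩ := Metric.uniformContinuous_iff.1 hc.uniformContinuous ε hε
  have hκ : ∀ u v, |u - v| ≤ d / 2 → |a u - a v| ≤ ε := fun u v huv =>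
    (had (huv.trans_lt (half_lt_self hd))).le
  have hpos : ∀ n : ℕ, 0 < 1 / ((n : ℝ) + 1) := fun n => Nat.one_div_pos_of_nat
  choose θ L hθ using fun n => exists_isPosPartEntropy (hpos n)
  have hlim : Tendsto (fun n : ℕ => 1 / ((n : ℝ) + 1)) atTop (𝓝 0) :=
    tendsto_one_div_add_atTop_nhds_zero_nat
  have hentropy := fun t r => hF.tendsto_integral_comp_sub (hG.spaceTranslate r) hθ hlim t
  have herror : Tendsto (fun c : ℝ => (3 / 2 * ε + Ca * (c / (d / 2))
      + Cb * (2 * c) * (2 * (r₁ - r₀))) * (t₂ - t₁)) (𝓝 0) (𝓝 (3 / 2 * ε * (t₂ - t₁))) :=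
    Continuous.tendsto' (by fun_prop) 0 _ (by ring)
  exact le_of_tendsto_of_tendsto' (((hentropy t₂ r₁).sub (hentropy t₁ r₀)).const_mul (r₁ - r₀))
    (herror.comp hlim) fun n =>
      hF.mul_integral_comp_sub_le hG hc (hθ n) (hpos n) (half_pos hd) hε.le hκ h₁ h₂ hr

theorem integral_posPart_sub_spaceTranslate_le_of_lt (hF : IsCdfSolution A B F)
    (hG : IsCdfSolution A B G) (hc : RegularCoefficients a A B Ca Cb) (h₁ : 0 ≤ t₁)
    (h₂ : t₁ ≤ t₂) (hr : r₀ < r₁) :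
    ∫ x, max (F t₂ x - spaceTranslate G r₁ t₂ x) 0
      ≤ ∫ x, max (F t₁ x - spaceTranslate G r₀ t₁ x) 0 := by
  have herror : Tendsto (fun ε : ℝ => 3 / 2 * ε * (t₂ - t₁)) (𝓝[>] 0) (𝓝 0) :=
    (Continuous.tendsto' (by fun_prop) 0 _ (by ring)).mono_left nhdsWithin_le_nhds
  refine sub_nonpos.1 (nonpos_of_mul_nonpos_right (ge_of_tendsto herror ?_) (sub_pos.2 hr))
  filter_upwards [self_mem_nhdsWithin] with ε hε
  exact hF.mul_integral_posPart_sub_le hG hc hε h₁ h₂ hr.le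

theorem integral_posPart_sub_le_add (hF : IsCdfSolution A B F) (hG : IsCdfSolution A B G) (t : ℝ)
    (hε : 0 ≤ ε) :
    ∫ x, max (F t x - G t x) 0 ≤ (∫ x, max (F t x - spaceTranslate G ε t x) 0) + ε := by
  have hpos := hF.integrable_posPart_sub (hG.spaceTranslate ε) t
  have hshift := integrable_add_sub (hG.integrable_sub_heaviside t) ε
  calc ∫ x, max (F t x - G t x) 0
      ≤ ∫ x, (max (F t x - spaceTranslate G ε t x) 0 + (G t (x + ε) - G t x)) :=
        integral_mono (hF.integrable_posPart_sub hG t) (hpos.add hshift) fun x => by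
          have hmono : G t x ≤ G t (x + ε) := (hG.isCdf t).mono (le_add_of_nonneg_right hε)
          refine max_le ?_ (add_nonneg (le_max_right _ _) (sub_nonneg.2 hmono))
          rw [← sub_le_iff_le_add, sub_sub_sub_cancel_right]
          exact le_max_left _ _
    _ = (∫ x, max (F t x - spaceTranslate G ε t x) 0) + ε := by
        rw [integral_add hpos hshift, integral_add_sub (hG.integrable_sub_heaviside t)]

theorem integral_posPart_sub_le (hF : IsCdfSolution A B F) (hG : IsCdfSolution A B G)
    (hc : RegularCoefficients a A B Ca Cb) (h₁ : 0 ≤ t₁) (h₂ : t₁ ≤ t₂) :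
    ∫ x, max (F t₂ x - G t₂ x) 0 ≤ ∫ x, max (F t₁ x - G t₁ x) 0 := by
  refine le_of_forall_pos_le_add fun ε hε => (hF.integral_posPart_sub_le_add hG t₂ hε.le).trans ?_
  have hlt := hF.integral_posPart_sub_spaceTranslate_le_of_lt hG hc h₁ h₂ hε
  simp only [spaceTranslate, add_zero] at hlt ⊢
  exact add_le_add_left hlt ε

theorem lintegral_posPart_sub_le (hF : IsCdfSolution A B F) (hG : IsCdfSolution A B G)
    (hc : RegularCoefficients a A B Ca Cb) (h₁ : 0 ≤ t₁) (h₂ : t₁ ≤ t₂) :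
    ∫⁻ x, ENNReal.ofReal (F t₂ x - G t₂ x) ≤ ∫⁻ x, ENNReal.ofReal (F t₁ x - G t₁ x) := by
  have hlint : ∀ t, ∫⁻ x, ENNReal.ofReal (F t x - G t x)
      = ENNReal.ofReal (∫ x, max (F t x - G t x) 0) := fun t => by
    rw [ofReal_integral_eq_lintegral_ofReal (hF.integrable_posPart_sub hG t)
      (Eventually.of_forall fun _ => le_max_right _ _)]
    simp only [ENNReal.ofReal_max, ENNReal.ofReal_zero, max_zero]
  rw [hlint, hlint]
  exact ENNReal.ofReal_le_ofReal (hF.integral_posPart_sub_le hG hc h₁ h₂)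

end Contraction

end IsCdfSolution

/-! ### Cumulative distribution functions of flows of measures -/

theorem isCdf_cdfOf (μ : Measure ℝ) [IsProbabilityMeasure μ] : IsCdf (cdfOf μ) := by
  have hcdf : cdfOf μ = ProbabilityTheory.cdf μ :=
    funext fun x => (ProbabilityTheory.cdf_eq_real μ x).symm
  rw [hcdf]
  exact ⟨ProbabilityTheory.monotone_cdf μ, (ProbabilityTheory.cdf μ).right_continuous,
    ProbabilityTheory.tendsto_cdf_atBot μ, ProbabilityTheory.tendsto_cdf_atTop μ⟩

theorem cdfOf_eq_integral_heaviside (μ : Measure ℝ) (x : ℝ) :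
    cdfOf μ x = ∫ y, heaviside (x - y) ∂μ := by
  have hind : (fun y => heaviside (x - y)) = (Iic x).indicator 1 := by
    ext y
    simp only [heaviside_apply, sub_nonneg, indicator_apply, mem_Iic, Pi.one_apply]
  rw [hind, integral_indicator_one measurableSet_Iic]
  rfl

theorem lintegral_enorm_heaviside_add_sub (r : ℝ) :
    ∫⁻ x, ‖heaviside (x + r) - heaviside x‖ₑ = ‖r‖ₑ := by
  rw [← ofReal_integral_norm_eq_lintegral_enorm (integrable_heaviside_add_sub r),
    Real.enorm_eq_ofReal_abs]
  congr 1
  rcases le_total 0 r with hr | hr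
  · rw [abs_of_nonneg hr]
    refine Eq.trans (integral_congr_ae <| Eventually.of_forall fun x => abs_of_nonneg ?_)
      (integral_heaviside_add_sub r)
    exact sub_nonneg.2 (monotone_heaviside (by linarith))
  · rw [abs_of_nonpos hr, ← congrArg Neg.neg (integral_heaviside_add_sub r), ← integral_neg]
    refine integral_congr_ae <| Eventually.of_forall fun x => abs_of_nonpos ?_
    exact sub_nonpos.2 (monotone_heaviside (by linarith))

theorem lintegral_enorm_cdfOf_sub_heaviside_le (μ : Measure ℝ) [IsProbabilityMeasure μ] :
    ∫⁻ x, ‖cdfOf μ x - heaviside x‖ₑ ≤ ∫⁻ y, ‖y‖ₑ ∂μ := by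
  have hmeas : Measurable fun q : ℝ × ℝ => heaviside (q.1 - q.2) - heaviside q.1 :=
    (measurable_heaviside.comp (measurable_fst.sub measurable_snd)).sub
      (measurable_heaviside.comp measurable_fst)
  have hsub : ∀ x, cdfOf μ x - heaviside x = ∫ y, (heaviside (x - y) - heaviside x) ∂μ := by
    intro x
    have hint : Integrable (fun y => heaviside (x - y)) μ :=
      Integrable.of_mem_Icc 0 1
        (measurable_heaviside.comp (measurable_const.sub measurable_id)).aemeasurable
        (Eventually.of_forall fun y => by rw [heaviside_apply]; split_ifs <;> simp)
    rw [integral_sub hint (integrable_const _), cdfOf_eq_integral_heaviside, integral_const,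
      probReal_univ, one_smul]
  calc ∫⁻ x, ‖cdfOf μ x - heaviside x‖ₑ
      ≤ ∫⁻ x, ∫⁻ y, ‖heaviside (x - y) - heaviside x‖ₑ ∂μ := lintegral_mono fun x => by
        rw [hsub]
        exact enorm_integral_le_lintegral_enorm _
    _ = ∫⁻ y, (∫⁻ x, ‖heaviside (x - y) - heaviside x‖ₑ) ∂μ :=
        lintegral_lintegral_swap hmeas.enorm.aemeasurable
    _ = ∫⁻ y, ‖y‖ₑ ∂μ := lintegral_congr fun y => by
        simp only [sub_eq_add_neg _ y, lintegral_enorm_heaviside_add_sub, enorm_neg]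

theorem integrable_cdfOf_sub_heaviside {μ : Measure ℝ} [IsProbabilityMeasure μ]
    (hμ : Integrable (fun x => |x|) μ) : Integrable fun x => cdfOf μ x - heaviside x := by
  refine ⟨((isCdf_cdfOf μ).mono.measurable.sub measurable_heaviside).aestronglyMeasurable,
    (lintegral_enorm_cdfOf_sub_heaviside_le μ).trans_lt
      ((hasFiniteIntegral_norm_iff fun x : ℝ => x).1 hμ.hasFiniteIntegral)⟩

section CdfFlow

variable {T : Type*} [TopologicalSpace T] {P : T → ProbabilityMeasure ℝ}

theorem upperSemicontinuous_cdfOf (hP : Continuous P) :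
    UpperSemicontinuous (uncurry fun t => cdfOf (P t : Measure ℝ)) := by
  rintro ⟨t, x⟩ c hc
  have hright : ∀ᶠ y in 𝓝[>] x, cdfOf (P t : Measure ℝ) y < c :=
    ((isCdf_cdfOf (P t : Measure ℝ)).rightCont x).mono Ioi_subset_Ici_self |>.eventually_lt_const hc
  obtain ⟨y, hy, hxy⟩ := (hright.and self_mem_nhdsWithin).exists
  have htime : ∀ᶠ s in 𝓝 t, (P s : Measure ℝ) (Iic y) < ENNReal.ofReal c :=
    eventually_lt_of_limsup_lt <|
      (ProbabilityMeasure.limsup_measure_closed_le_of_tendsto (hP.tendsto t) isClosed_Iic).trans_lt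
        ((ENNReal.lt_ofReal_iff_toReal_lt (measure_ne_top _ _)).2 hy)
  have hspace : ∀ᶠ z in 𝓝 x, z < y := Iio_mem_nhds hxy
  rw [nhds_prod_eq]
  filter_upwards [htime.prod_mk hspace] with q hq
  exact ((isCdf_cdfOf (P q.1 : Measure ℝ)).mono hq.2.le).trans_lt
    ((ENNReal.lt_ofReal_iff_toReal_lt (measure_ne_top _ _)).1 hq.1)

theorem ae_continuousAt_cdfOf (hP : Continuous P) (t : T) :
    ∀ᵐ x, ContinuousAt (fun s => cdfOf (P s : Measure ℝ) x) t := by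
  filter_upwards [(Measure.countable_meas_level_set_pos (μ := (P t : Measure ℝ))
    measurable_id).ae_notMem volume] with x hx
  have hfrontier : (P t : Measure ℝ) (frontier (Iic x)) = 0 := by
    rw [frontier_Iic]
    exact nonpos_iff_eq_zero.1 (not_lt.1 hx)
  exact (ENNReal.tendsto_toReal (measure_ne_top _ _)).comp
    (ProbabilityMeasure.tendsto_measure_of_null_frontier_of_tendsto' (hP.tendsto t) hfrontier)

variable [MeasurableSpace T] [OpensMeasurableSpace (T × ℝ)]

theorem integrable_prod_cdfOf_sub_heaviside {τ : Measure T} (hP : Continuous P)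
    (hP₁ : ∀ t, Integrable (fun x => |x|) (P t : Measure ℝ))
    (hτ : Integrable (fun t => ∫ x, |x| ∂(P t : Measure ℝ)) τ) :
    Integrable (fun q : T × ℝ => cdfOf (P q.1 : Measure ℝ) q.2 - heaviside q.2)
      (τ.prod volume) := by
  have hmeas : Measurable fun q : T × ℝ => cdfOf (P q.1 : Measure ℝ) q.2 - heaviside q.2 :=
    (upperSemicontinuous_cdfOf hP).measurable.sub (measurable_heaviside.comp measurable_snd)
  refine ⟨hmeas.aestronglyMeasurable, ?_⟩
  rw [HasFiniteIntegral, lintegral_prod _ hmeas.enorm.aemeasurable]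
  refine lt_of_le_of_lt (lintegral_mono fun t => ?_) hτ.hasFiniteIntegral
  rw [Real.enorm_of_nonneg (integral_nonneg fun _ => abs_nonneg _),
    ofReal_integral_eq_lintegral_ofReal (hP₁ t) (Eventually.of_forall fun _ => abs_nonneg _)]
  simpa only [Real.enorm_eq_ofReal_abs] using
    lintegral_enorm_cdfOf_sub_heaviside_le (P t : Measure ℝ)

end CdfFlow

/-! ### Reduction of the Cauchy problem -/

section Coefficients

/-- The extension of the restriction of `f` to `[0,1]` by the constants `f 0` and `f 1`. It turns
coefficients that are only continuous on `[0,1]` into bounded uniformly continuous ones. -/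
def unitExtend (f : ℝ → ℝ) (u : ℝ) : ℝ := f (projIcc (0 : ℝ) 1 zero_le_one u)

variable {a b f : ℝ → ℝ} {u : ℝ}

theorem unitExtend_of_mem (hu : u ∈ Icc (0 : ℝ) 1) : unitExtend f u = f u := by
  rw [unitExtend, projIcc_of_mem zero_le_one hu]

theorem uniformContinuous_unitExtend (hf : ContinuousOn f (Icc 0 1)) :
    UniformContinuous (unitExtend f) :=
  (CompactSpace.uniformContinuous_of_continuous (continuousOn_iff_continuous_domRestrict.1 hf)).comp
    (LipschitzWith.projIcc zero_le_one).uniformContinuous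

theorem exists_forall_abs_unitExtend_le (hf : ContinuousOn f (Icc 0 1)) :
    ∃ C, ∀ u, |unitExtend f u| ≤ C := by
  obtain ⟨C, hC⟩ := isCompact_Icc.exists_bound_of_continuousOn hf
  exact ⟨C, fun u => hC _ (projIcc (0 : ℝ) 1 zero_le_one u).2⟩

theorem primitive_zero (f : ℝ → ℝ) : primitive f 0 = 0 := intervalIntegral.integral_same

theorem hasDerivAt_primitive (hf : Continuous f) (u : ℝ) : HasDerivAt (primitive f) (f u) u :=
  (hf.integral_hasStrictDerivAt 0 u).hasDerivAt

theorem abs_primitive_sub_le (hf : Continuous f) {C : ℝ} (hC : ∀ w, |f w| ≤ C) (u v : ℝ) :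
    |primitive f u - primitive f v| ≤ C * |u - v| := by
  rw [primitive, primitive, intervalIntegral.integral_interval_sub_left
    (hf.intervalIntegrable _ _) (hf.intervalIntegrable _ _)]
  exact intervalIntegral.norm_integral_le_of_norm_le_const (f := f) (C := C) fun w _ => hC w

theorem primitive_unitExtend (hu : u ∈ Icc (0 : ℝ) 1) :
    primitive (unitExtend f) u = primitive f u := by
  refine intervalIntegral.integral_congr fun v hv => ?_
  rw [uIcc_of_le hu.1] at hv
  exact unitExtend_of_mem ⟨hv.1, hv.2.trans hu.2⟩

theorem exists_regularCoefficients_unitExtend (ha : ContinuousOn a (Icc 0 1))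
    (hb : ContinuousOn b (Icc 0 1)) (ha₀ : ∀ u ∈ Icc (0 : ℝ) 1, 0 ≤ a u)
    (hA : StrictMonoOn (primitive a) (Icc 0 1)) :
    ∃ Ca Cb, RegularCoefficients (unitExtend a) (primitive (unitExtend a))
      (primitive (unitExtend b)) Ca Cb := by
  obtain ⟨Ca, hCa⟩ := exists_forall_abs_unitExtend_le ha
  obtain ⟨Cb, hCb⟩ := exists_forall_abs_unitExtend_le hb
  exact ⟨Ca, Cb,
    { hasDerivAt := hasDerivAt_primitive (uniformContinuous_unitExtend ha).continuous
      nonneg := fun u => ha₀ _ (projIcc (0 : ℝ) 1 zero_le_one u).2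
      le := fun u => le_of_abs_le (hCa u)
      uniformContinuous := uniformContinuous_unitExtend ha
      strictMonoOn := hA.congr fun u hu => (primitive_unitExtend hu).symm
      diffusion_zero := primitive_zero _
      drift_zero := primitive_zero _
      abs_drift_sub_le := abs_primitive_sub_le (uniformContinuous_unitExtend hb).continuous hCb }⟩

end Coefficients

section WeakFormulation

variable {A B A' B' F₀ ψ : ℝ → ℝ} {F F' : ℝ → ℝ → ℝ} {t : ℝ}

theorem IsWeakSolution.congr (hF : IsWeakSolution A B F₀ F) (hF' : ∀ t, 0 ≤ t → F' t = F t)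
    (hA : ∀ t, 0 ≤ t → ∀ x, A' (F t x) = A (F t x))
    (hB : ∀ t, 0 ≤ t → ∀ x, B' (F t x) = B (F t x)) : IsWeakSolution A' B' F₀ F' := by
  intro g hg hgc t ht
  rw [hF' t ht, hF g hg hgc t ht]
  refine integral_congr_ae <| Eventually.of_forall fun x =>
    intervalIntegral.integral_congr fun s hs => ?_
  rw [uIcc_of_le ht] at hs
  simp only [hF' s hs.1, hA s hs.1, hB s hs.1]

/-- The space-time integrand of the weak formulation tested against a function `ψ` of `x` alone. -/
def weakIntegrand (A B : ℝ → ℝ) (F : ℝ → ℝ → ℝ) (ψ : ℝ → ℝ) (s x : ℝ) : ℝ :=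
  (1 / 2) * A (F s x) * deriv (deriv ψ) x + B (F s x) * deriv ψ x

theorem continuous_deriv_deriv (hψ : ContDiff ℝ (⊤ : ℕ∞) ψ) : Continuous (deriv (deriv ψ)) :=
  ((contDiff_infty_iff_deriv.1 hψ).2).continuous_deriv (by simp)

theorem integrable_weakIntegrand (hA : Continuous A) (hB : Continuous B)
    (hF : Measurable (uncurry F)) (hF01 : ∀ t x, F t x ∈ Icc (0 : ℝ) 1)
    (hψ : ContDiff ℝ (⊤ : ℕ∞) ψ) (hψc : HasCompactSupport ψ) (τ : Measure ℝ) [IsFiniteMeasure τ] :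
    Integrable (uncurry (weakIntegrand A B F ψ)) (τ.prod volume) := by
  have hcomp : ∀ {Φ φ : ℝ → ℝ}, Continuous Φ → Continuous φ → HasCompactSupport φ →
      Integrable (fun q : ℝ × ℝ => Φ (F q.1 q.2) * φ q.2) (τ.prod volume) := by
    intro Φ φ hΦ hφ hφc
    obtain ⟨C, hC⟩ := isCompact_Icc.exists_bound_of_continuousOn (hΦ.continuousOn (s := Icc 0 1))
    exact ((hφ.integrable_of_hasCompactSupport hφc).comp_snd τ).bdd_mul
      (hΦ.measurable.comp hF).aestronglyMeasurable
      (Eventually.of_forall fun q => hC _ (hF01 q.1 q.2))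
  have hsum := ((hcomp hA (continuous_deriv_deriv hψ) hψc.deriv.deriv).const_mul (1 / 2)).add
    (hcomp hB (hψ.continuous_deriv (by simp)) hψc.deriv)
  simp only [← mul_assoc] at hsum
  exact hsum

theorem exists_timeCutoff (t : ℝ) : ∃ χ : ℝ → ℝ, ContDiff ℝ (⊤ : ℕ∞) χ ∧ HasCompactSupport χ ∧
    ∀ s ∈ Icc 0 t, χ s = 1 ∧ deriv χ s = 0 := by
  let χ : ContDiffBump (0 : ℝ) :=
    ⟨|t| + 1, |t| + 2, by positivity, by linarith⟩
  refine ⟨χ, χ.contDiff, χ.hasCompactSupport, fun s hs => ?_⟩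
  have hball : s ∈ Metric.ball 0 χ.rIn := by
    rw [mem_ball_zero_iff, Real.norm_of_nonneg hs.1]
    exact (hs.2.trans (le_abs_self t)).trans_lt (lt_add_one _)
  have hone := χ.eventuallyEq_one_of_mem_ball hball
  exact ⟨hone.eq_of_nhds, by rw [hone.deriv_eq, deriv_one, Pi.zero_apply]⟩

theorem hasCompactSupport_mul_prod {χ : ℝ → ℝ} (hχ : HasCompactSupport χ)
    (hψ : HasCompactSupport ψ) : HasCompactSupport (uncurry fun s x => χ s * ψ x) := by
  refine HasCompactSupport.intro (hχ.isCompact.prod hψ.isCompact) fun q hq => ?_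
  by_contra hne
  have hmul := mul_ne_zero_iff.1 hne
  exact hq ⟨subset_tsupport _ hmul.1, subset_tsupport _ hmul.2⟩

theorem IsWeakSolution.integral_mul_sub (hF : IsWeakSolution A B F₀ F)
    (hψ : ContDiff ℝ (⊤ : ℕ∞) ψ) (hψc : HasCompactSupport ψ) (ht : 0 ≤ t)
    (hint : Integrable (uncurry (weakIntegrand A B F ψ))
      ((volume.restrict (Ioc 0 t)).prod volume)) :
    (∫ x, ψ x * F t x) - ∫ x, ψ x * F₀ x = ∫ s in 0..t, ∫ x, weakIntegrand A B F ψ s x := by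
  obtain ⟨χ, hχ, hχc, hχ₁⟩ := exists_timeCutoff t
  have hweak := hF (fun s x => χ s * ψ x)
    ((hχ.comp contDiff_fst).mul (hψ.comp contDiff_snd)) (hasCompactSupport_mul_prod hχc hψc) t ht
  simp only [(hχ₁ t ⟨ht, le_rfl⟩).1, (hχ₁ 0 ⟨le_rfl, ht⟩).1, one_mul] at hweak
  rw [hweak, intervalIntegral.integral_of_le ht, integral_integral_swap hint]
  refine integral_congr_ae <| Eventually.of_forall fun x => ?_
  simp only [← intervalIntegral.integral_of_le ht]
  refine intervalIntegral.integral_congr fun s hs => ?_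
  rw [uIcc_of_le ht] at hs
  have htime : deriv (fun r => χ r * ψ x) s = 0 := by
    rw [deriv_mul_const (hχ.differentiable (by simp) s), (hχ₁ s hs).2, zero_mul]
  simp only [(hχ₁ s hs).1, one_mul, htime, mul_zero, add_zero, weakIntegrand]

theorem IsWeakSolution.isCdfSolution {P : ℝ → ProbabilityMeasure ℝ} (hA : Continuous A)
    (hB : Continuous B) (hP : Continuous P)
    (hP₁ : ∀ t, Integrable (fun x => |x|) (P t : Measure ℝ))
    (hP₂ : ∀ t₁ t₂, 0 ≤ t₁ → IntegrableOn (fun t => ∫ x, |x| ∂(P t : Measure ℝ)) (Ioc t₁ t₂))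
    (hF : IsWeakSolution A B F₀ fun t => cdfOf (P t : Measure ℝ)) :
    IsCdfSolution A B fun t => cdfOf (P t : Measure ℝ) where
  isCdf t := isCdf_cdfOf _
  measurable := (upperSemicontinuous_cdfOf hP).measurable
  ae_continuousAt := ae_continuousAt_cdfOf hP
  integrable_sub_heaviside t := integrable_cdfOf_sub_heaviside (hP₁ t)
  integrable_prod_sub_heaviside t₁ t₂ h₁ :=
    integrable_prod_cdfOf_sub_heaviside hP hP₁ (hP₂ t₁ t₂ h₁)
  weak ψ hψ hψc t₁ t₂ h₁ h₂ := by
    have hint := fun t => integrable_weakIntegrand hA hB (upperSemicontinuous_cdfOf hP).measurable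
      (fun t => (isCdf_cdfOf (P t : Measure ℝ)).mem_Icc) hψ hψc (volume.restrict (Ioc 0 t))
    have hinterval : ∀ t, 0 ≤ t → IntervalIntegrable
        (fun s => ∫ x, weakIntegrand A B (fun t => cdfOf (P t : Measure ℝ)) ψ s x) volume 0 t :=
      fun t ht => (intervalIntegrable_iff_integrableOn_Ioc_of_le ht).2 (hint t).integral_prod_left
    have ht₂ := h₁.trans h₂
    rw [← sub_sub_sub_cancel_right _ _ (∫ x, ψ x * F₀ x), hF.integral_mul_sub hψ hψc ht₂ (hint t₂),
      hF.integral_mul_sub hψ hψc h₁ (hint t₁)]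
    exact intervalIntegral.integral_interval_sub_left (hinterval t₂ ht₂) (hinterval t₁ h₁)

theorem MemF.exists_continuous_cdfOf (hF : MemF F) : ∃ P : ℝ → ProbabilityMeasure ℝ,
    Continuous P ∧ (∀ t, Integrable (fun x => |x|) (P t : Measure ℝ)) ∧
    (∀ t₁ t₂, 0 ≤ t₁ → IntegrableOn (fun t => ∫ x, |x| ∂(P t : Measure ℝ)) (Ioc t₁ t₂)) ∧
    ∀ t, 0 ≤ t → F t = cdfOf (P t : Measure ℝ) := by
  obtain ⟨P, hP, hP₁, hP₂, hPF⟩ := hF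
  refine ⟨fun t => P (max t 0),
    hP.comp_continuous (continuous_id.max continuous_const) fun t => le_max_right t 0,
    fun t => hP₁ _ (le_max_right t 0), fun t₁ t₂ h₁ => ?_, fun t ht => ?_⟩
  · have hsub : Ioc t₁ t₂ ⊆ Icc 0 (|t₂| + 1) := fun s hs =>
      ⟨h₁.trans hs.1.le, by linarith [hs.2, le_abs_self t₂]⟩
    refine ((hP₂ (|t₂| + 1) (by positivity)).mono_set hsub).congr_fun (fun s hs => ?_)
      measurableSet_Ioc
    simp only [max_eq_left (h₁.trans hs.1.le)]
  · simp only [max_eq_left ht]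
    exact funext (hPF t ht)

theorem exists_isCdfSolution_unitExtend {a b : ℝ → ℝ} (ha : ContinuousOn a (Icc 0 1))
    (hb : ContinuousOn b (Icc 0 1)) (hF : IsWeakSolution (primitive a) (primitive b) F₀ F)
    (hFmem : MemF F) :
    ∃ F', IsCdfSolution (primitive (unitExtend a)) (primitive (unitExtend b)) F' ∧
      ∀ t, 0 ≤ t → F' t = F t := by
  obtain ⟨P, hP, hP₁, hP₂, hPF⟩ := hFmem.exists_continuous_cdfOf
  have hcont : ∀ {f : ℝ → ℝ}, ContinuousOn f (Icc 0 1) → Continuous (primitive (unitExtend f)) :=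
    fun hf => continuous_iff_continuousAt.2 fun u =>
      (hasDerivAt_primitive (uniformContinuous_unitExtend hf).continuous u).continuousAt
  have hprim : ∀ (f : ℝ → ℝ) (t : ℝ), 0 ≤ t → ∀ x,
      primitive (unitExtend f) (F t x) = primitive f (F t x) := fun f t ht x =>
    primitive_unitExtend (hPF t ht ▸ (isCdf_cdfOf _).mem_Icc x)
  exact ⟨_, (hF.congr (fun t ht => (hPF t ht).symm) (hprim a) (hprim b)).isCdfSolution (hcont ha)
    (hcont hb) hP hP₁ hP₂, fun t ht => (hPF t ht).symm⟩

end WeakFormulation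

/-! ### Wasserstein distances -/

section PseudoInverse

variable {F G : ℝ → ℝ} {u x : ℝ}

theorem IsCdf.bddBelow_setOf_lt (hF : IsCdf F) (hu : 0 < u) : BddBelow {x | u < F x} := by
  obtain ⟨y, hy⟩ := (hF.tendsto_atBot.eventually_lt_const hu).exists
  exact ⟨y, fun x hx => (hF.mono.reflect_lt (hy.trans hx)).le⟩

theorem IsCdf.nonempty_setOf_lt (hF : IsCdf F) (hu : u < 1) : {x | u < F x}.Nonempty :=
  (hF.tendsto_atTop.eventually_const_lt hu).exists

theorem IsCdf.pinv_le (hF : IsCdf F) (hu : 0 < u) (hx : u < F x) : pinv F u ≤ x :=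
  csInf_le (hF.bddBelow_setOf_lt hu) hx

theorem IsCdf.lt_of_pinv_lt (hF : IsCdf F) (hu : u < 1) (hx : pinv F u < x) : u < F x := by
  obtain ⟨y, hy, hyx⟩ := exists_lt_of_csInf_lt (hF.nonempty_setOf_lt hu) hx
  exact lt_of_lt_of_le hy (hF.mono hyx.le)

theorem IsCdf.monotoneOn_pinv (hF : IsCdf F) : MonotoneOn (pinv F) (Ioo 0 1) := fun _ hu _ hv huv =>
  csInf_le_csInf (hF.bddBelow_setOf_lt hu.1) (hF.nonempty_setOf_lt hv.2) fun _ hx => huv.trans_lt hx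

theorem IsCdf.aemeasurable_pinv (hF : IsCdf F) :
    AEMeasurable (pinv F) (volume.restrict (Ioo 0 1)) :=
  aemeasurable_restrict_of_monotoneOn measurableSet_Ioo hF.monotoneOn_pinv

theorem IsCdf.volume_setOf_le_and_lt (hF : IsCdf F) (hG : IsCdf G) (r : ℝ)
    (hu : u ∈ Ioo (0 : ℝ) 1) :
    volume {x | G (x + r) ≤ u ∧ u < F x} = ENNReal.ofReal (pinv G u - pinv F u - r) := by
  rw [sub_right_comm]
  refine le_antisymm ?_ ?_
  · rw [← Real.volume_Icc]
    exact measure_mono fun x hx => ⟨hF.pinv_le hu.1 hx.2, le_sub_iff_add_le.2 <|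
      le_of_not_gt fun hlt => (hG.lt_of_pinv_lt hu.2 hlt).not_ge hx.1⟩
  · rw [← Real.volume_Ioo]
    exact measure_mono fun x hx => ⟨le_of_not_gt fun hlt =>
      (hG.pinv_le hu.1 hlt).not_gt (lt_sub_iff_add_lt.1 hx.2), hF.lt_of_pinv_lt hu.2 hx.1⟩

theorem volume_restrict_Ioo_Ico {c d v w : ℝ} (hv : c ≤ v) (hw : w ≤ d) :
    volume.restrict (Ioo c d) (Ico v w) = ENNReal.ofReal (w - v) := by
  rw [← measure_congr (ae_restrict_of_ae Ioo_ae_eq_Ico), Measure.restrict_apply measurableSet_Ioo,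
    inter_eq_left.2 (Ioo_subset_Ioo hv hw), Real.volume_Ioo]

theorem IsCdf.lintegral_pinv_sub_sub (hF : IsCdf F) (hG : IsCdf G) (r : ℝ) :
    ∫⁻ u in Ioo 0 1, ENNReal.ofReal (pinv G u - pinv F u - r) =
      ∫⁻ x, ENNReal.ofReal (F x - G (x + r)) := by
  have hS : MeasurableSet {q : ℝ × ℝ | G (q.1 + r) ≤ q.2 ∧ q.2 < F q.1} :=
    (measurableSet_le (hG.mono.measurable.comp (measurable_fst.add_const r)) measurable_snd).inter
      (measurableSet_lt measurable_snd (hF.mono.measurable.comp measurable_fst))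
  calc
    _ = ∫⁻ u in Ioo (0 : ℝ) 1, volume {x | G (x + r) ≤ u ∧ u < F x} :=
      setLIntegral_congr_fun measurableSet_Ioo fun u hu =>
        (hF.volume_setOf_le_and_lt hG r hu).symm
    _ = (volume.prod (volume.restrict (Ioo (0 : ℝ) 1)))
          {q : ℝ × ℝ | G (q.1 + r) ≤ q.2 ∧ q.2 < F q.1} := (Measure.prod_apply_symm hS).symm
    _ = ∫⁻ x, volume.restrict (Ioo 0 1) (Ico (G (x + r)) (F x)) := Measure.prod_apply hS
    _ = _ := lintegral_congr fun x => volume_restrict_Ioo_Ico (hG.nonneg _) (hF.le_one _)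

end PseudoInverse

section PowerMixture

variable {p : ℝ}

theorem rpow_sub_two_mul_self {r : ℝ} (hr : r ≠ 0) (p : ℝ) : r ^ (p - 2) * r = r ^ (p - 1) := by
  rw [← Real.rpow_add_one hr]
  ring_nf

theorem integral_rpow_sub_two_mul_sub (hp : 1 < p) {z : ℝ} (hz : 0 < z) :
    ∫ r in 0..z, (p * (p - 1) * z * r ^ (p - 2) - p * (p - 1) * r ^ (p - 1)) = z ^ p := by
  rw [intervalIntegral.integral_sub, intervalIntegral.integral_const_mul,
    intervalIntegral.integral_const_mul, integral_rpow (Or.inl (by linarith)),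
    integral_rpow (Or.inl (by linarith)), show p - 2 + 1 = p - 1 by ring, sub_add_cancel,
    Real.zero_rpow (by linarith), Real.zero_rpow (by linarith), Real.rpow_sub_one hz.ne']
  · field_simp [(by linarith : p - 1 ≠ 0)]
    ring
  · exact (intervalIntegral.intervalIntegrable_rpow' (by linarith)).const_mul _
  · exact (intervalIntegral.intervalIntegrable_rpow' (by linarith)).const_mul _

theorem setLIntegral_Ioi_mul_ofReal_sub (k : ℝ → ℝ≥0∞) {y z : ℝ} (hz : z ≤ y) :
    ∫⁻ r in Ioi y, k r * ENNReal.ofReal (z - r) = 0 := by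
  refine (setLIntegral_congr_fun measurableSet_Ioi fun r hr => ?_).trans lintegral_zero
  exact mul_eq_zero_of_right _ <|
    ENNReal.ofReal_of_nonpos (sub_nonpos.2 (hz.trans (mem_Ioi.1 hr).le))

/-- The weight `p (p - 1) r ^ (p - 2)` for which `z₊ ^ p` is the mixture over `r > 0` of the
functions `(z - r)₊`; it is the second derivative of `r ^ p`. -/
def powerWeight (p r : ℝ) : ℝ≥0∞ := ENNReal.ofReal (p * (p - 1) * r ^ (p - 2))

theorem measurable_powerWeight (p : ℝ) : Measurable (powerWeight p) := by
  unfold powerWeight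
  fun_prop

theorem setLIntegral_powerWeight_mul_ofReal_sub (hp : 1 < p) (z : ℝ) :
    ∫⁻ r in Ioi 0, powerWeight p r * ENNReal.ofReal (z - r) = ENNReal.ofReal (max z 0 ^ p) := by
  rcases le_or_gt z 0 with hz | hz
  · rw [setLIntegral_Ioi_mul_ofReal_sub _ hz, max_eq_right hz, Real.zero_rpow (by linarith),
      ENNReal.ofReal_zero]
  have hfactor : ∀ r ∈ Ioc 0 z, p * (p - 1) * z * r ^ (p - 2) - p * (p - 1) * r ^ (p - 1) =
      p * (p - 1) * r ^ (p - 2) * (z - r) := fun r hr => by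
    rw [← rpow_sub_two_mul_self hr.1.ne']
    ring
  have hweight : ∀ r ∈ Ioc 0 z, 0 ≤ p * (p - 1) * r ^ (p - 2) := fun r hr =>
    mul_nonneg (mul_nonneg (by linarith) (by linarith)) (Real.rpow_nonneg hr.1.le _)
  have hint : IntegrableOn
      (fun r => p * (p - 1) * z * r ^ (p - 2) - p * (p - 1) * r ^ (p - 1)) (Ioc 0 z) :=
    (intervalIntegrable_iff_integrableOn_Ioc_of_le hz.le).1 <|
      ((intervalIntegral.intervalIntegrable_rpow' (by linarith)).const_mul _).sub
        ((intervalIntegral.intervalIntegrable_rpow' (by linarith)).const_mul _)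
  rw [max_eq_left hz.le, ← Ioc_union_Ioi_eq_Ioi hz.le,
    lintegral_union measurableSet_Ioi (Ioc_disjoint_Ioi le_rfl),
    setLIntegral_Ioi_mul_ofReal_sub _ le_rfl, add_zero, ← integral_rpow_sub_two_mul_sub hp hz,
    intervalIntegral.integral_of_le hz.le, ofReal_integral_eq_lintegral_ofReal hint]
  · refine setLIntegral_congr_fun measurableSet_Ioc fun r hr => ?_
    rw [hfactor r hr, ENNReal.ofReal_mul (hweight r hr), powerWeight]
  · filter_upwards [ae_restrict_mem measurableSet_Ioc] with r hr
    rw [hfactor r hr]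
    exact mul_nonneg (hweight r hr) (sub_nonneg.2 hr.2)

variable {Ω : Type*} [MeasurableSpace Ω] {μ : Measure Ω} {z z₁ z₂ : Ω → ℝ}

theorem lintegral_posPart_rpow_eq (hp : 1 < p) [SFinite μ] (hz : AEMeasurable z μ) :
    ∫⁻ ω, ENNReal.ofReal (max (z ω) 0 ^ p) ∂μ =
      ∫⁻ r in Ioi 0, powerWeight p r * ∫⁻ ω, ENNReal.ofReal (z ω - r) ∂μ := by
  simp only [← setLIntegral_powerWeight_mul_ofReal_sub hp]
  rw [lintegral_lintegral_swap]
  · exact lintegral_congr fun r => lintegral_const_mul' _ _ ENNReal.ofReal_ne_top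
  · exact ((measurable_powerWeight p).comp measurable_snd).aemeasurable.mul
      (hz.comp_fst.sub measurable_snd.aemeasurable).ennreal_ofReal

theorem lintegral_posPart_rpow_mono (hp : 1 ≤ p) [SFinite μ] (hz₁ : AEMeasurable z₁ μ)
    (hz₂ : AEMeasurable z₂ μ)
    (h : ∀ r, ∫⁻ ω, ENNReal.ofReal (z₁ ω - r) ∂μ ≤ ∫⁻ ω, ENNReal.ofReal (z₂ ω - r) ∂μ) :
    ∫⁻ ω, ENNReal.ofReal (max (z₁ ω) 0 ^ p) ∂μ ≤ ∫⁻ ω, ENNReal.ofReal (max (z₂ ω) 0 ^ p) ∂μ := by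
  rcases hp.eq_or_lt with rfl | hp
  · simpa only [Real.rpow_one, ENNReal.ofReal_max, ENNReal.ofReal_zero, max_zero, sub_zero]
      using h 0
  · rw [lintegral_posPart_rpow_eq hp hz₁, lintegral_posPart_rpow_eq hp hz₂]
    exact lintegral_mono fun r => mul_le_mul_right (h r) _

theorem ofReal_abs_rpow (hp : p ≠ 0) (z : ℝ) : ENNReal.ofReal (|z| ^ p) =
    ENNReal.ofReal (max z 0 ^ p) + ENNReal.ofReal (max (-z) 0 ^ p) := by
  rcases le_total z 0 with hz | hz
  · rw [abs_of_nonpos hz, max_eq_right hz, max_eq_left (neg_nonneg.2 hz), Real.zero_rpow hp,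
      ENNReal.ofReal_zero, zero_add]
  · rw [abs_of_nonneg hz, max_eq_left hz, max_eq_right (neg_nonpos.2 hz), Real.zero_rpow hp,
      ENNReal.ofReal_zero, add_zero]

theorem lintegral_abs_rpow_eq_add (hp : p ≠ 0) (hz : AEMeasurable z μ) :
    ∫⁻ ω, ENNReal.ofReal (|z ω| ^ p) ∂μ = (∫⁻ ω, ENNReal.ofReal (max (z ω) 0 ^ p) ∂μ) +
      ∫⁻ ω, ENNReal.ofReal (max (-z ω) 0 ^ p) ∂μ := by
  simp only [ofReal_abs_rpow hp]
  exact lintegral_add_left' ((hz.max aemeasurable_const).pow_const p).ennreal_ofReal _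

theorem lintegral_abs_rpow_mono (hp : 1 ≤ p) [SFinite μ] (hz₁ : AEMeasurable z₁ μ)
    (hz₂ : AEMeasurable z₂ μ)
    (hpos : ∀ r, ∫⁻ ω, ENNReal.ofReal (z₁ ω - r) ∂μ ≤ ∫⁻ ω, ENNReal.ofReal (z₂ ω - r) ∂μ)
    (hneg : ∀ r, ∫⁻ ω, ENNReal.ofReal (-z₁ ω - r) ∂μ ≤ ∫⁻ ω, ENNReal.ofReal (-z₂ ω - r) ∂μ) :
    ∫⁻ ω, ENNReal.ofReal (|z₁ ω| ^ p) ∂μ ≤ ∫⁻ ω, ENNReal.ofReal (|z₂ ω| ^ p) ∂μ := by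
  have hp₀ : p ≠ 0 := by linarith
  rw [lintegral_abs_rpow_eq_add hp₀ hz₁, lintegral_abs_rpow_eq_add hp₀ hz₂]
  exact add_le_add (lintegral_posPart_rpow_mono hp hz₁ hz₂ hpos)
    (lintegral_posPart_rpow_mono hp hz₁.neg hz₂.neg hneg)

end PowerMixture

theorem Wdist_le_of_lintegral_posPart_le {F₁ G₁ F₂ G₂ : ℝ → ℝ} (hF₁ : IsCdf F₁) (hG₁ : IsCdf G₁)
    (hF₂ : IsCdf F₂) (hG₂ : IsCdf G₂) {p : ℝ} (hp : 1 ≤ p)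
    (hFG : ∀ r, ∫⁻ x, ENNReal.ofReal (F₂ x - G₂ (x + r)) ≤
      ∫⁻ x, ENNReal.ofReal (F₁ x - G₁ (x + r)))
    (hGF : ∀ r, ∫⁻ x, ENNReal.ofReal (G₂ x - F₂ (x + r)) ≤
      ∫⁻ x, ENNReal.ofReal (G₁ x - F₁ (x + r))) :
    Wdist p F₂ G₂ ≤ Wdist p F₁ G₁ := by
  refine ENNReal.rpow_le_rpow ?_ (by positivity)
  refine lintegral_abs_rpow_mono hp (hF₂.aemeasurable_pinv.sub hG₂.aemeasurable_pinv)
    (hF₁.aemeasurable_pinv.sub hG₁.aemeasurable_pinv) (fun r => ?_) fun r => ?_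
  · simp only [hG₂.lintegral_pinv_sub_sub hF₂, hG₁.lintegral_pinv_sub_sub hF₁]
    exact hGF r
  · simp only [neg_sub, hF₂.lintegral_pinv_sub_sub hG₂,
      hF₁.lintegral_pinv_sub_sub hG₁]
    exact hFG r

theorem wasserstein_flow_nonincreasing_general
    (a b : ℝ → ℝ)
    (ha : ContinuousOn a (Icc 0 1)) (hb : ContinuousOn b (Icc 0 1))
    (ha0 : ∀ u ∈ Icc (0 : ℝ) 1, 0 ≤ a u)
    (hD1 : StrictMonoOn (primitive a) (Icc 0 1))
    (F₀ G₀ : ℝ → ℝ) (F G : ℝ → ℝ → ℝ)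
    (hF : IsWeakSolution (primitive a) (primitive b) F₀ F) (hFmem : MemF F)
    (hG : IsWeakSolution (primitive a) (primitive b) G₀ G) (hGmem : MemF G)
    (p : ℝ) (hp : 1 ≤ p) :
    AntitoneOn (fun t => Wdist p (F t) (G t)) (Ici 0) := by
  obtain ⟨Ca, Cb, hc⟩ := exists_regularCoefficients_unitExtend ha hb ha0 hD1
  obtain ⟨F', hF', hFF'⟩ := exists_isCdfSolution_unitExtend ha hb hF hFmem
  obtain ⟨G', hG', hGG'⟩ := exists_isCdfSolution_unitExtend ha hb hG hGmem
  intro t₁ h₁ t₂ h₂ h₁₂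
  simp only [← hFF' _ h₁, ← hGG' _ h₁, ← hFF' _ h₂, ← hGG' _ h₂]
  exact Wdist_le_of_lintegral_posPart_le (hF'.isCdf t₁) (hG'.isCdf t₁) (hF'.isCdf t₂)
    (hG'.isCdf t₂) hp
    (fun r => hF'.lintegral_posPart_sub_le (hG'.spaceTranslate r) hc h₁ h₁₂)
    (fun r => hG'.lintegral_posPart_sub_le (hF'.spaceTranslate r) hc h₁ h₁₂)

/-- Under (D1), for initial conditions with finite first moments and finite
`W_p` distance, the flow `t ↦ W_p(F_t, G_t)` is nonincreasing on `[0,∞)`. -/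
theorem wasserstein_flow_nonincreasing
    (a b : ℝ → ℝ)
    (ha : ContinuousOn a (Set.Icc 0 1)) (hb : ContinuousOn b (Set.Icc 0 1))
    (ha0 : ∀ u ∈ Set.Icc (0:ℝ) 1, 0 ≤ a u)
    (hD1 : StrictMonoOn (primitive a) (Set.Icc 0 1))
    (μ ν : Measure ℝ) [IsProbabilityMeasure μ] [IsProbabilityMeasure ν]
    (hμ : Integrable (fun x => |x|) μ) (hν : Integrable (fun x => |x|) ν)
    (F G : ℝ → ℝ → ℝ)
    (hF : IsWeakSolution (primitive a) (primitive b) (cdfOf μ) F) (hFmem : MemF F)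
    (hG : IsWeakSolution (primitive a) (primitive b) (cdfOf ν) G) (hGmem : MemF G)
    (p : ℝ) (hp : 1 ≤ p)
    (hW : Wdist p (cdfOf μ) (cdfOf ν) < ⊤) :
    AntitoneOn (fun t => Wdist p (F t) (G t)) (Set.Ici 0) :=
  wasserstein_flow_nonincreasing_general a b ha hb ha0 hD1 (cdfOf μ) (cdfOf ν) F G hF hFmem hG hGmem
    p hp
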